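/- (Corollary 2: ID capacity region of the BC with one-sided feedback and conditionally independent outputs.) If the BC satisfies W(y,z|x) = W_𝒴(y|x)·W_𝒵(z|x) for all (x,y,z), then the ID capacity region 𝒞_{1-fb} of the BC with one-sided feedback from Terminal 𝒴 equals the set of all rate pairs (R_𝒴, R_𝒵) ∈ [0,∞)² for which some PMF P on 𝒳 satisfies R_𝒴 ≤ H(PW_𝒴)·𝟙{max_{P'} I(P', W_𝒴) > 0} and R_𝒵 ≤ I(P, W_𝒵). -/

import Mathlib

open scoped Classical
open Finset

noncomputable section

/-- `P` is a probability mass function on the finite type `X`. -/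
def IsPMF {X : Type*} [Fintype X] (P : X → ℝ) : Prop :=
  (∀ x, 0 ≤ P x) ∧ ∑ x, P x = 1

/-- `W` is a (discrete memoryless) channel from `X` to `Y`. -/
def IsChannel {X Y : Type*} [Fintype Y] (W : X → Y → ℝ) : Prop :=
  (∀ x y, 0 ≤ W x y) ∧ ∀ x, ∑ y, W x y = 1

/-- The `n`-fold memoryless extension `W^n(𝐲|𝐱) = ∏ᵢ W(yᵢ|xᵢ)`. -/
def Wn {X Y : Type*} (W : X → Y → ℝ) (n : ℕ) (x : Fin n → X) (y : Fin n → Y) : ℝ :=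
  ∏ i, W (x i) (y i)

/-- Mutual information `I(P,W)` (natural logarithm), with the convention that
terms with `P x * W x y = 0` contribute `0`. -/
def mutInf {X Y : Type*} [Fintype X] [Fintype Y] (P : X → ℝ) (W : X → Y → ℝ) : ℝ :=
  ∑ x, ∑ y, if P x * W x y = 0 then 0
    else P x * W x y * Real.log (W x y / ∑ x', P x' * W x' y)

/-- The error requirements of an `(n, M, l1, l2)` ID code for the DMC `W`:
maximum probability of missed identification at most `l1`, maximum probability
of wrong identification at most `l2`. -/
def IDCodeErr {X Y M : Type*} [Fintype X] [Fintype Y]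
    (n : ℕ) (W : X → Y → ℝ) (Q : M → (Fin n → X) → ℝ)
    (D : M → Finset (Fin n → Y)) (l1 l2 : ℝ) : Prop :=
  (∀ m, ∑ x, Q m x * ∑ y ∈ (D m)ᶜ, Wn W n x y ≤ l1) ∧
  (∀ m m', m ≠ m' → ∑ x, Q m x * ∑ y ∈ D m', Wn W n x y ≤ l2)

/-- `(n, M, l1, l2)` ID code for the DMC `W`. -/
def IsIDCode {X Y M : Type*} [Fintype X] [Fintype Y]
    (n : ℕ) (W : X → Y → ℝ) (Q : M → (Fin n → X) → ℝ)
    (D : M → Finset (Fin n → Y)) (l1 l2 : ℝ) : Prop :=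
  (∀ m, IsPMF (Q m)) ∧ IDCodeErr n W Q D l1 l2

/-- `W` is a two-receiver broadcast channel from `X` to `Y × Z`. -/
def IsBC {X Y Z : Type*} [Fintype Y] [Fintype Z] (W : X → Y → Z → ℝ) : Prop :=
  (∀ x y z, 0 ≤ W x y z) ∧ ∀ x, ∑ y, ∑ z, W x y z = 1

/-- Marginal channel to terminal `Y`. -/
def margY {X Y Z : Type*} [Fintype Z] (W : X → Y → Z → ℝ) : X → Y → ℝ :=
  fun x y => ∑ z, W x y z

/-- Marginal channel to terminal `Z`. -/
def margZ {X Y Z : Type*} [Fintype Y] (W : X → Y → Z → ℝ) : X → Z → ℝ :=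
  fun x z => ∑ y, W x y z

/-- Entropy `H(p)` of a PMF (natural logarithm), with `0 log 0 = 0`. -/
def entH {Y : Type*} [Fintype Y] (p : Y → ℝ) : ℝ :=
  ∑ y, if p y = 0 then 0 else -(p y * Real.log (p y))

/-- Output distribution `PW` of the channel `W` under input PMF `P`. -/
def outDist {X Y : Type*} [Fintype X] (P : X → ℝ) (W : X → Y → ℝ) : Y → ℝ :=
  fun y => ∑ x, P x * W x y

/-- The joint law on `(𝐱, 𝐲, 𝐳)` induced by a feedback encoder
`Q^{(i)}(x | x^{i-1}, y^{i-1})` and the BC `W`. -/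
def fbLaw {X Y Z : Type*} (n : ℕ) (W : X → Y → Z → ℝ)
    (Q : (i : ℕ) → (Fin i → X) → (Fin i → Y) → X → ℝ)
    (x : Fin n → X) (y : Fin n → Y) (z : Fin n → Z) : ℝ :=
  ∏ i : Fin n,
    (Q i.1 (fun j : Fin i.1 => x ⟨j.1, lt_trans j.isLt i.isLt⟩)
           (fun j : Fin i.1 => y ⟨j.1, lt_trans j.isLt i.isLt⟩) (x i)
      * W (x i) (y i) (z i))

/-- `Q` is a feedback encoder for blocklength `n`: at each time `i < n` and for
all histories, it is a PMF on `X`. -/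
def IsFBEncoder {X Y : Type*} [Fintype X] (n : ℕ)
    (Q : (i : ℕ) → (Fin i → X) → (Fin i → Y) → X → ℝ) : Prop :=
  ∀ i < n, ∀ (xs : Fin i → X) (ys : Fin i → Y), IsPMF (Q i xs ys)

/-- Average-error ID code for the BC with one-sided feedback from Terminal Y. -/
def IsFBIDCode {X Y Z : Type*} [Fintype X] [Fintype Y] [Fintype Z]
    (n kY kZ : ℕ) (W : X → Y → Z → ℝ)
    (Q : Fin kY → Fin kZ → (i : ℕ) → (Fin i → X) → (Fin i → Y) → X → ℝ)
    (DY : Fin kY → Finset (Fin n → Y)) (DZ : Fin kZ → Finset (Fin n → Z))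
    (l1Y l2Y l1Z l2Z : ℝ) : Prop :=
  (∀ my mz, IsFBEncoder n (Q my mz)) ∧
  (∀ my, (kZ : ℝ)⁻¹ * ∑ mz, ∑ x : Fin n → X, ∑ y ∈ (DY my)ᶜ, ∑ z : Fin n → Z,
      fbLaw n W (Q my mz) x y z ≤ l1Y) ∧
  (∀ my my', my ≠ my' → (kZ : ℝ)⁻¹ * ∑ mz, ∑ x : Fin n → X, ∑ y ∈ DY my',
      ∑ z : Fin n → Z, fbLaw n W (Q my mz) x y z ≤ l2Y) ∧
  (∀ mz, (kY : ℝ)⁻¹ * ∑ my, ∑ x : Fin n → X, ∑ y : Fin n → Y, ∑ z ∈ (DZ mz)ᶜ,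
      fbLaw n W (Q my mz) x y z ≤ l1Z) ∧
  (∀ mz mz', mz ≠ mz' → (kY : ℝ)⁻¹ * ∑ my, ∑ x : Fin n → X, ∑ y : Fin n → Y,
      ∑ z ∈ DZ mz', fbLaw n W (Q my mz) x y z ≤ l2Z)

/-- A rate pair is achievable for the BC with one-sided feedback from
Terminal Y under the average-error criterion. -/
def FBAchievable {X Y Z : Type*} [Fintype X] [Fintype Y] [Fintype Z]
    (W : X → Y → Z → ℝ) (Rp : ℝ × ℝ) : Prop :=
  0 ≤ Rp.1 ∧ 0 ≤ Rp.2 ∧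
  ∀ l1Y l2Y l1Z l2Z : ℝ, 0 < l1Y → 0 < l2Y → 0 < l1Z → 0 < l2Z →
    ∃ n₀ : ℕ, ∀ n : ℕ, n₀ ≤ n →
      ∃ (kY kZ : ℕ)
        (Q : Fin kY → Fin kZ → (i : ℕ) → (Fin i → X) → (Fin i → Y) → X → ℝ)
        (DY : Fin kY → Finset (Fin n → Y)) (DZ : Fin kZ → Finset (Fin n → Z)),
        IsFBIDCode n kY kZ W Q DY DZ l1Y l2Y l1Z l2Z ∧
        ((0 < Rp.1 → Rp.1 ≤ (1 / n) * Real.log (Real.log kY)) ∧ (Rp.1 = 0 → kY = 1)) ∧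
        ((0 < Rp.2 → Rp.2 ≤ (1 / n) * Real.log (Real.log kZ)) ∧ (Rp.2 = 0 → kZ = 1))

/-!
Converse: let `P` be the type of the transmitted sequence. Terminal `𝒴` can only tell apart
messages whose output laws sit on different sets of likely outputs. Compared with the uniform
mixture of the output laws of all types, an output sequence following inputs of type `P` has
probability about `exp (-n H(P W_𝒴))` even with feedback, so few messages of `𝒴` can produce
types with `H(P W_𝒴) < R_𝒴 - δ`. For Terminal `𝒵`, feedback from `𝒴` is useless, and by soft
covering a message whose types satisfy `I(P, W_𝒵) < R_𝒵 - δ` can be replaced by a uniform law on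
`exp (n (R_𝒵 - δ))` codewords, of which there are fewer than `exp (exp (n R_𝒵))`. Hence with
positive probability the same type `P` satisfies both bounds.

Direct part: a random ID code for `𝒵` with codewords drawn from `Pⁿ` has an averaged `𝒴`-output
of smooth min-entropy about `n H(P W_𝒴)`. By feedback that output is common randomness of the
encoder and Terminal `𝒴`; the `𝒴`-message selects a hash function with constantly many values,
and the hash of the output is transmitted in constantly many further channel uses.
-/

section FiniteProbability

variable {A B ι : Type*} [Fintype A] [Fintype B]

/-- The weight `w{p} = ∑_{a : p a} w a` of an event `p`; a probability when `w` is a PMF. -/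
def mass (w : A → ℝ) (p : A → Prop) : ℝ := ∑ a with p a, w a

theorem mass_eq_sum_ite (w : A → ℝ) (p : A → Prop) : mass w p = ∑ a, if p a then w a else 0 :=
  sum_filter _ _

theorem mass_eq_sum_mul_ite (w : A → ℝ) (p : A → Prop) :
    mass w p = ∑ a, w a * if p a then 1 else 0 := by
  simp only [mass_eq_sum_ite, mul_ite, mul_one, mul_zero]

theorem mass_mem (w : A → ℝ) (D : Finset A) : mass w (· ∈ D) = ∑ a ∈ D, w a :=
  sum_congr (by ext; simp) fun _ _ => rfl

theorem mass_nonneg {w : A → ℝ} (hw : ∀ a, 0 ≤ w a) (p : A → Prop) : 0 ≤ mass w p :=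
  sum_nonneg fun a _ => hw a

theorem mass_eq_zero (w : A → ℝ) {p : A → Prop} (h : ∀ a, ¬ p a) : mass w p = 0 := by
  simp [mass, h]

theorem mass_mono_of_ne_zero {w : A → ℝ} (hw : ∀ a, 0 ≤ w a) {p q : A → Prop}
    (hpq : ∀ a, w a ≠ 0 → p a → q a) : mass w p ≤ mass w q := by
  rw [mass, mass, ← sum_filter_ne_zero, ← sum_filter_ne_zero (s := {a | q a}), filter_filter,
    filter_filter]
  exact sum_le_sum_of_subset_of_nonneg
    (monotone_filter_right _ fun a _ ha => ⟨hpq a ha.2 ha.1, ha.2⟩) fun a _ _ => hw a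

theorem mass_mono {w : A → ℝ} (hw : ∀ a, 0 ≤ w a) {p q : A → Prop} (hpq : ∀ a, p a → q a) :
    mass w p ≤ mass w q :=
  sum_le_sum_of_subset_of_nonneg (monotone_filter_right _ fun a _ => hpq a) fun a _ _ => hw a

theorem mass_or_le {w : A → ℝ} (hw : ∀ a, 0 ≤ w a) (p q : A → Prop) :
    mass w (fun a => p a ∨ q a) ≤ mass w p + mass w q := by
  simp only [mass_eq_sum_ite, ← sum_add_distrib]
  refine sum_le_sum fun a _ => ?_
  have := hw a
  by_cases hp : p a <;> by_cases hq : q a <;> simp [hp, hq, this]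

theorem mass_exists_le [Fintype ι] {w : A → ℝ} (hw : ∀ a, 0 ≤ w a) (p : ι → A → Prop) :
    mass w (fun a => ∃ i, p i a) ≤ ∑ i, mass w (p i) := by
  simp only [mass_eq_sum_ite]
  rw [sum_comm]
  refine sum_le_sum fun a _ => ?_
  have h0 : ∀ i, 0 ≤ if p i a then w a else 0 := fun i => by split_ifs <;> simp [hw a]
  by_cases h : ∃ i, p i a
  · obtain ⟨i, hi⟩ := h
    rw [if_pos ⟨i, hi⟩]
    exact (if_pos hi).ge.trans (single_le_sum (fun j _ => h0 j) (mem_univ i))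
  · rw [if_neg h]
    exact sum_nonneg fun i _ => h0 i

theorem mass_exists_le_card_mul [Fintype ι] {w : A → ℝ} (hw : ∀ a, 0 ≤ w a) {p : ι → A → Prop}
    {c : ℝ} (h : ∀ i, mass w (p i) ≤ c) : mass w (fun a => ∃ i, p i a) ≤ Fintype.card ι * c :=
  (mass_exists_le hw p).trans ((sum_le_card_nsmul univ _ c fun i _ => h i).trans_eq (by simp))

theorem mass_add_mass_not (w : A → ℝ) (p : A → Prop) :
    mass w p + mass w (fun a => ¬ p a) = ∑ a, w a := by
  simp only [mass_eq_sum_ite, ← sum_add_distrib]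
  exact sum_congr rfl fun a _ => by by_cases h : p a <;> simp [h]

theorem mass_le_of_sum_mul_le {w g : A → ℝ} (hw : ∀ a, 0 ≤ w a) (hg : ∀ a, 0 ≤ g a) {c V : ℝ}
    (hc : 0 < c) (hV : ∑ a, w a * g a ≤ V) : mass w (fun a => c ≤ g a) ≤ V / c := by
  rw [le_div_iff₀ hc, mass_eq_sum_mul_ite, sum_mul]
  refine (sum_le_sum fun a _ => ?_).trans hV
  rw [mul_assoc]
  refine mul_le_mul_of_nonneg_left ?_ (hw a)
  split_ifs with h
  · rwa [one_mul]
  · rw [zero_mul]; exact hg a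

theorem mass_le_of_sum_mul_sq_le {w g : A → ℝ} (hw : ∀ a, 0 ≤ w a) {c V : ℝ} (hc : 0 < c)
    (hV : ∑ a, w a * g a ^ 2 ≤ V) : mass w (fun a => c ≤ |g a|) ≤ V / c ^ 2 :=
  (mass_mono hw fun a h => by rw [← sq_abs (g a)]; exact pow_le_pow_left₀ hc.le h 2).trans
    (mass_le_of_sum_mul_le hw (fun a => sq_nonneg (g a)) (by positivity) hV)

theorem IsPMF.le_one {w : A → ℝ} (hw : IsPMF w) (a : A) : w a ≤ 1 :=
  hw.2 ▸ single_le_sum (fun b _ => hw.1 b) (mem_univ a)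

theorem IsPMF.mass_le_one {w : A → ℝ} (hw : IsPMF w) (p : A → Prop) : mass w p ≤ 1 := by
  rw [← hw.2]
  exact sum_le_univ_sum_of_nonneg hw.1

theorem IsPMF.mass_not {w : A → ℝ} (hw : IsPMF w) (p : A → Prop) :
    mass w (fun a => ¬ p a) = 1 - mass w p := by
  rw [← hw.2, ← mass_add_mass_not w p, add_sub_cancel_left]

theorem IsPMF.exists_of_mass_not_lt_one {w : A → ℝ} (hw : IsPMF w) {p : A → Prop}
    (h : mass w (fun a => ¬ p a) < 1) : ∃ a, p a := by
  by_contra! hp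
  refine h.ne ?_
  simp only [mass_eq_sum_ite, hp, not_false_eq_true, if_true, hw.2]

theorem IsPMF.exists_le {w g : A → ℝ} (hw : IsPMF w) {c : ℝ} (h : ∑ a, w a * g a ≤ c) :
    ∃ a, g a ≤ c := by
  have hsum : ∑ a, w a * g a ≤ ∑ a, w a * c := by rwa [← sum_mul, hw.2, one_mul]
  by_contra! hc
  have heq := (sum_eq_sum_iff_of_le fun a _ =>
    mul_le_mul_of_nonneg_left (hc a).le (hw.1 a)).1
      (le_antisymm (sum_le_sum fun a _ => mul_le_mul_of_nonneg_left (hc a).le (hw.1 a)) hsum)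
  have hzero : ∀ a, w a = 0 := fun a => by
    by_contra ha
    exact (hc a).ne (mul_left_cancel₀ ha (heq a (mem_univ a)))
  simpa [hzero] using hw.2

theorem IsPMF.sum_mul_sub_mean_sq_le {w : A → ℝ} (hw : IsPMF w) (g : A → ℝ) :
    ∑ a, w a * (g a - ∑ b, w b * g b) ^ 2 ≤ ∑ a, w a * g a ^ 2 := by
  set m := ∑ b, w b * g b with hm
  have hexpand : ∑ a, w a * (g a - m) ^ 2 = ∑ a, w a * g a ^ 2 - m ^ 2 := by
    calc ∑ a, w a * (g a - m) ^ 2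
        = ∑ a, w a * g a ^ 2 - 2 * m * ∑ a, w a * g a + m ^ 2 * ∑ a, w a := by
          simp only [mul_sum, ← sum_sub_distrib, ← sum_add_distrib]
          exact sum_congr rfl fun a _ => by ring
      _ = ∑ a, w a * g a ^ 2 - m ^ 2 := by rw [hw.2, ← hm]; ring
  rw [hexpand]
  linarith [sq_nonneg m]

theorem IsPMF.sum_mul_sub_mean {w : A → ℝ} (hw : IsPMF w) (g : A → ℝ) :
    ∑ a, w a * (g a - ∑ b, w b * g b) = 0 := by
  simp only [mul_sub, sum_sub_distrib, ← sum_mul, hw.2, one_mul, sub_self]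

theorem exp_le_one_add_two_mul {x : ℝ} (hx0 : 0 ≤ x) (hx1 : x ≤ 1) :
    Real.exp x ≤ 1 + 2 * x := by
  have hconv := convexOn_exp.2 (Set.mem_univ (0 : ℝ)) (Set.mem_univ (1 : ℝ))
    (by linarith : 0 ≤ 1 - x) hx0 (by ring)
  simp only [smul_eq_mul, mul_zero, mul_one, zero_add, Real.exp_zero] at hconv
  nlinarith [Real.exp_one_lt_d9]

theorem IsPMF.sum_mul_exp_le {w u : A → ℝ} (hw : IsPMF w) (h0 : ∀ a, 0 ≤ u a)
    (h1 : ∀ a, u a ≤ 1) : ∑ a, w a * Real.exp (u a) ≤ Real.exp (2 * ∑ a, w a * u a) := by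
  calc ∑ a, w a * Real.exp (u a) ≤ ∑ a, w a * (1 + 2 * u a) :=
        sum_le_sum fun a _ =>
          mul_le_mul_of_nonneg_left (exp_le_one_add_two_mul (h0 a) (h1 a)) (hw.1 a)
    _ = 2 * ∑ a, w a * u a + 1 := by
        simp only [mul_add, mul_one, sum_add_distrib, hw.2, mul_left_comm _ (2 : ℝ), ← mul_sum,
          add_comm]
    _ ≤ _ := Real.add_one_le_exp _

theorem isPMF_const_inv_card [Nonempty A] : IsPMF fun _ : A => (Fintype.card A : ℝ)⁻¹ :=
  ⟨fun _ => by positivity, by simp⟩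

theorem isPMF_outDist {P : A → ℝ} {W : A → B → ℝ} (hP : IsPMF P) (hW : IsChannel W) :
    IsPMF (outDist P W) := by
  refine ⟨fun b => sum_nonneg fun a _ => mul_nonneg (hP.1 a) (hW.1 a b), ?_⟩
  simp only [outDist]
  rw [sum_comm]
  simp only [← mul_sum, hW.2, mul_one, hP.2]

theorem sum_outDist_mul (P : A → ℝ) (W : A → B → ℝ) (g : B → ℝ) :
    ∑ b, outDist P W b * g b = ∑ a, P a * ∑ b, W a b * g b := by
  simp only [outDist, sum_mul, mul_sum, mul_assoc]
  exact sum_comm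

theorem mass_outDist (P : A → ℝ) (W : A → B → ℝ) (p : B → Prop) :
    mass (outDist P W) p = ∑ a, P a * mass (W a) p := by
  simp only [mass_eq_sum_mul_ite, sum_outDist_mul]

/-- The law of `f a` when `a` has law `w`. -/
def mapLaw (f : A → B) (w : A → ℝ) (b : B) : ℝ := mass w fun a => f a = b

theorem sum_mapLaw_mul (f : A → B) (w : A → ℝ) (g : B → ℝ) :
    ∑ b, mapLaw f w b * g b = ∑ a, w a * g (f a) := by
  simp only [mapLaw, mass_eq_sum_mul_ite, sum_mul]
  rw [sum_comm]
  simp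

theorem isPMF_mapLaw (f : A → B) {w : A → ℝ} (hw : IsPMF w) : IsPMF (mapLaw f w) :=
  ⟨fun _ => mass_nonneg hw.1 _, by simpa [hw.2] using sum_mapLaw_mul f w 1⟩

theorem mass_mapLaw (f : A → B) (w : A → ℝ) (p : B → Prop) :
    mass (mapLaw f w) p = mass w fun a => p (f a) := by
  simp only [mass_eq_sum_mul_ite, sum_mapLaw_mul]

/-- The uniform mixture of a family of laws. -/
def mixture {M : Type*} [Fintype M] (J : M → A → ℝ) : A → ℝ :=
  outDist (fun _ => (Fintype.card M : ℝ)⁻¹) J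

variable {M : Type*} [Fintype M] {J : M → A → ℝ}

theorem isPMF_mixture [Nonempty M] (hJ : ∀ m, IsPMF (J m)) : IsPMF (mixture J) :=
  isPMF_outDist isPMF_const_inv_card ⟨fun m => (hJ m).1, fun m => (hJ m).2⟩

theorem sum_mixture_mul (J : M → A → ℝ) (g : A → ℝ) :
    ∑ a, mixture J a * g a = (Fintype.card M : ℝ)⁻¹ * ∑ m, ∑ a, J m a * g a := by
  rw [mixture, sum_outDist_mul, mul_sum]

theorem mass_mixture (J : M → A → ℝ) (p : A → Prop) :
    mass (mixture J) p = (Fintype.card M : ℝ)⁻¹ * ∑ m, mass (J m) p := by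
  rw [mixture, mass_outDist, mul_sum]

theorem mass_mixture_le [Nonempty M] {p : A → Prop} {c : ℝ} (h : ∀ m, mass (J m) p ≤ c) :
    mass (mixture J) p ≤ c := by
  rw [mass_mixture, inv_mul_le_iff₀ (by positivity)]
  exact (sum_le_sum fun m _ => h m).trans_eq (by simp)

theorem mass_mixture_le_add_card [Nonempty M] (hJ : ∀ m, IsPMF (J m)) {p : A → Prop} {β c : ℝ}
    (hβ : 0 ≤ β) (hcard : (#{m | β < mass (J m) p} : ℝ) ≤ c * Fintype.card M) :
    mass (mixture J) p ≤ β + c := by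
  rw [mass_mixture, inv_mul_le_iff₀ (by positivity)]
  calc ∑ m, mass (J m) p ≤ ∑ m, (β + if β < mass (J m) p then 1 else 0) :=
        sum_le_sum fun m _ => by
          split_ifs with h
          · linarith [(hJ m).mass_le_one p]
          · linarith
    _ ≤ Fintype.card M * (β + c) := by
        rw [sum_add_distrib, sum_boole, sum_const, card_univ, nsmul_eq_mul]
        linarith

theorem mass_mixture_comm {N : Type*} [Fintype N] (J : M → N → A → ℝ)
    (p : A → Prop) : mass (mixture fun m => mixture fun j => J m j) p
      = mass (mixture fun j => mixture fun m => J m j) p := by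
  simp only [mass_mixture, ← mul_sum]
  rw [sum_comm, mul_left_comm]

end FiniteProbability

section ProductWeights

/-- The product weight `f ↦ ∏ i, w i (f i)`: the law of independent draws `f i ~ w i`. -/
def piW {ι A : Type*} [Fintype ι] (w : ι → A → ℝ) (f : ι → A) : ℝ := ∏ i, w i (f i)

variable {ι A : Type*} [Fintype ι] [DecidableEq ι] [Fintype A]

theorem sum_piW (w : ι → A → ℝ) : ∑ f, piW w f = ∏ i, ∑ a, w i a := by
  rw [prod_univ_sum, Fintype.piFinset_univ]; rfl

theorem isPMF_piW {w : ι → A → ℝ} (hw : ∀ i, IsPMF (w i)) : IsPMF (piW w) :=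
  ⟨fun f => prod_nonneg fun i _ => (hw i).1 _, by
    rw [sum_piW]; exact prod_eq_one fun i _ => (hw i).2⟩

theorem sum_piW_mul_prod (w u : ι → A → ℝ) :
    ∑ f, piW w f * ∏ i, u i (f i) = ∏ i, ∑ a, w i a * u i a := by
  rw [← sum_piW]
  simp only [piW, prod_mul_distrib]

theorem sum_piW_mul_apply_mul_apply {w : ι → A → ℝ} (hw : ∀ i, IsPMF (w i)) {j k : ι}
    (hjk : j ≠ k) (u v : A → ℝ) :
    ∑ f, piW w f * (u (f j) * v (f k)) = (∑ a, w j a * u a) * ∑ a, w k a * v a := by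
  have hfactor : ∀ i, ∑ a, w i a * ((if i = j then u a else 1) * (if i = k then v a else 1))
      = (if i = j then ∑ a, w j a * u a else 1) * (if i = k then ∑ a, w k a * v a else 1) := by
    intro i
    rcases eq_or_ne i j with rfl | hij
    · simp [hjk]
    rcases eq_or_ne i k with rfl | hik
    · simp [hij]
    · simpa [hij, hik] using (hw i).2
  simpa only [hfactor, prod_mul_distrib, prod_ite_eq', mem_univ, if_true] using
    sum_piW_mul_prod w fun i a => (if i = j then u a else 1) * (if i = k then v a else 1)

theorem sum_piW_mul_apply {w : ι → A → ℝ} (hw : ∀ i, IsPMF (w i)) (j : ι) (u : A → ℝ) :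
    ∑ f, piW w f * u (f j) = ∑ a, w j a * u a := by
  have hfactor : ∀ i, ∑ a, w i a * (if i = j then u a else 1)
      = if i = j then ∑ a, w j a * u a else 1 := by
    intro i
    rcases eq_or_ne i j with rfl | hij
    · simp
    · simpa [hij] using (hw i).2
  simpa only [hfactor, prod_ite_eq', mem_univ, if_true] using
    sum_piW_mul_prod w fun i a => if i = j then u a else 1

theorem sum_piW_mul_apply₂ {w : ι → A → ℝ} (hw : ∀ i, IsPMF (w i)) {j k : ι} (hjk : j ≠ k)
    (g : A → A → ℝ) :
    ∑ f, piW w f * g (f j) (f k) = ∑ a, w j a * ∑ b, w k b * g a b := by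
  have hsplit : ∀ f : ι → A, piW w f * g (f j) (f k)
      = ∑ a, piW w f * ((if f j = a then 1 else 0) * g a (f k)) := fun f => by simp
  simp only [hsplit]
  rw [sum_comm]
  refine sum_congr rfl fun a _ => ?_
  rw [sum_piW_mul_apply_mul_apply hw hjk (fun c => if c = a then 1 else 0) (g a)]
  simp

theorem sum_piW_mul_sq_sum {w : ι → A → ℝ} (hw : ∀ i, IsPMF (w i)) (h : ι → A → ℝ)
    (h0 : ∀ i, ∑ a, w i a * h i a = 0) :
    ∑ f, piW w f * (∑ i, h i (f i)) ^ 2 = ∑ i, ∑ a, w i a * h i a ^ 2 := by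
  have hexpand : ∀ f : ι → A, piW w f * (∑ i, h i (f i)) ^ 2
      = ∑ i, ∑ j, piW w f * (h i (f i) * h j (f j)) := fun f => by
    rw [sq, sum_mul_sum, mul_sum]
    exact sum_congr rfl fun i _ => mul_sum _ _ _
  simp only [hexpand]
  rw [sum_comm]
  refine sum_congr rfl fun i _ => ?_
  rw [sum_comm, sum_eq_single i]
  · simp only [← sq]
    exact sum_piW_mul_apply hw i (fun a => h i a ^ 2)
  · intro j _ hj
    rw [sum_piW_mul_apply_mul_apply hw hj.symm, h0, zero_mul]
  · simp

theorem mass_piW_chernoff_le {w : ι → A → ℝ} (hw : ∀ i, IsPMF (w i)) {u : ι → A → ℝ}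
    (h0 : ∀ i a, 0 ≤ u i a) (h1 : ∀ i a, u i a ≤ 1) {μ : ℝ} (t : ℝ)
    (hμ : ∑ i, ∑ a, w i a * u i a ≤ μ) :
    mass (piW w) (fun f => t < ∑ i, u i (f i)) ≤ Real.exp (2 * μ - t) := by
  calc mass (piW w) (fun f => t < ∑ i, u i (f i))
      ≤ ∑ f, piW w f * (Real.exp (-t) * ∏ i, Real.exp (u i (f i))) := by
        rw [mass_eq_sum_mul_ite]
        refine sum_le_sum fun f _ => mul_le_mul_of_nonneg_left ?_ ((isPMF_piW hw).1 f)
        rw [← Real.exp_sum, ← Real.exp_add]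
        split_ifs with h
        · exact Real.one_le_exp (by linarith)
        · positivity
    _ = Real.exp (-t) * ∏ i, ∑ a, w i a * Real.exp (u i a) := by
        rw [← sum_piW_mul_prod w (fun i a => Real.exp (u i a)), mul_sum]
        exact sum_congr rfl fun f _ => by ring
    _ ≤ Real.exp (-t) * ∏ i, Real.exp (2 * ∑ a, w i a * u i a) := by
        gcongr with i
        · exact fun i _ => sum_nonneg fun a _ => mul_nonneg ((hw i).1 a) (Real.exp_pos _).le
        · exact (hw i).sum_mul_exp_le (h0 i) (h1 i)
    _ ≤ Real.exp (2 * μ - t) := by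
        rw [← Real.exp_sum, ← Real.exp_add, ← mul_sum]
        exact Real.exp_le_exp.2 (by linarith)

theorem weak_law {w : A → ℝ} (hw : IsPMF w) (g : A → ℝ) {ε ν : ℝ} (hε : 0 < ε) (hν : 0 < ν) :
    ∃ n₀ : ℕ, ∀ n ≥ n₀, mass (piW fun _ : Fin n => w)
      (fun s => n * ε ≤ |∑ i, g (s i) - n * ∑ a, w a * g a|) ≤ ν := by
  set V := ∑ a, w a * (g a - ∑ b, w b * g b) ^ 2
  obtain ⟨n₀, hn₀⟩ := exists_nat_ge (V / (ε ^ 2 * ν))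
  refine ⟨n₀ + 1, fun n hn => ?_⟩
  have hn0 : (0 : ℝ) < n := by exact_mod_cast (by omega : 0 < n)
  have hvar := sum_piW_mul_sq_sum (ι := Fin n) (fun _ => hw) (fun _ a => g a - ∑ b, w b * g b)
    fun _ => hw.sum_mul_sub_mean g
  have hcheb := mass_le_of_sum_mul_sq_le (isPMF_piW (ι := Fin n) fun _ => hw).1
    (mul_pos hn0 hε) hvar.le
  simp only [sum_sub_distrib, sum_const, card_univ, Fintype.card_fin, nsmul_eq_mul] at hcheb
  refine hcheb.trans ?_
  rw [div_le_iff₀ (by positivity)] at hn₀ ⊢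
  have hle : (n₀ : ℝ) ≤ n := by exact_mod_cast (by omega : n₀ ≤ n)
  have hVn : V ≤ n * (ε ^ 2 * ν) := hn₀.trans (mul_le_mul_of_nonneg_right hle (by positivity))
  nlinarith

end ProductWeights

section Information

variable {X Y : Type*} [Fintype X] [Fintype Y]

theorem entH_eq_sum_negMulLog (p : Y → ℝ) : entH p = ∑ y, Real.negMulLog (p y) := by
  refine sum_congr rfl fun y _ => ?_
  split_ifs with h <;> simp [Real.negMulLog, h]

theorem entH_nonneg {p : Y → ℝ} (hp : IsPMF p) : 0 ≤ entH p := by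
  rw [entH_eq_sum_negMulLog]
  exact sum_nonneg fun y _ => Real.negMulLog_nonneg (hp.1 y) (hp.le_one y)

theorem sub_lt_mul_log_sub_log {a b : ℝ} (ha : 0 ≤ a) (hb : 0 < b) (hab : a ≠ b) :
    a - b < a * (Real.log a - Real.log b) := by
  rcases ha.eq_or_lt with rfl | ha
  · simpa using hb
  have hlog := Real.log_lt_sub_one_of_pos (div_pos hb ha)
    fun h => hab ((div_eq_one_iff_eq ha.ne').1 h).symm
  rw [Real.log_div hb.ne' ha.ne'] at hlog
  have hcancel : a * (b / a) = b := by field_simp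
  nlinarith

theorem sub_le_mul_log_sub_log {a b : ℝ} (ha : 0 ≤ a) (hb : 0 ≤ b) (hab : b = 0 → a = 0) :
    a - b ≤ a * (Real.log a - Real.log b) := by
  rcases eq_or_ne a b with rfl | hne
  · simp
  · exact (sub_lt_mul_log_sub_log ha (hb.lt_of_ne fun h => hne ((hab h.symm).trans h)) hne).le

/-- The relative entropy `D(p‖q)`; only meaningful when `p` vanishes wherever `q` does, since a
term with `q y = 0 < p y` contributes a finite junk value. -/
def relEnt (p q : Y → ℝ) : ℝ := ∑ y, p y * (Real.log (p y) - Real.log (q y))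

theorem relEnt_nonneg {p q : Y → ℝ} (hp : IsPMF p) (hq : IsPMF q) (hpq : ∀ y, q y = 0 → p y = 0) :
    0 ≤ relEnt p q := by
  calc 0 = ∑ y, (p y - q y) := by rw [sum_sub_distrib, hp.2, hq.2, sub_self]
    _ ≤ relEnt p q := sum_le_sum fun y _ => sub_le_mul_log_sub_log (hp.1 y) (hq.1 y) (hpq y)

theorem relEnt_pos {p q : Y → ℝ} (hp : IsPMF p) (hq : IsPMF q) (hpq : ∀ y, q y = 0 → p y = 0)
    (hne : p ≠ q) : 0 < relEnt p q := by
  obtain ⟨y, hy⟩ := Function.ne_iff.1 hne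
  have hqy : 0 < q y := (hq.1 y).lt_of_ne fun h => hy ((hpq y h.symm).trans h)
  calc 0 = ∑ y, (p y - q y) := by rw [sum_sub_distrib, hp.2, hq.2, sub_self]
    _ < relEnt p q :=
      sum_lt_sum (fun y _ => sub_le_mul_log_sub_log (hp.1 y) (hq.1 y) (hpq y))
        ⟨y, mem_univ y, sub_lt_mul_log_sub_log (hp.1 y) hqy hy⟩

theorem mul_eq_zero_of_outDist_eq_zero {P : X → ℝ} {W : X → Y → ℝ} (hP : IsPMF P)
    (hW : IsChannel W) {y : Y} (h : outDist P W y = 0) (x : X) : P x * W x y = 0 :=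
  (sum_eq_zero_iff_of_nonneg fun x _ => mul_nonneg (hP.1 x) (hW.1 x y)).1 h x (mem_univ x)

theorem mutInf_eq_sum_relEnt {P : X → ℝ} {W : X → Y → ℝ} (hP : IsPMF P) (hW : IsChannel W) :
    mutInf P W = ∑ x, P x * relEnt (W x) (outDist P W) := by
  refine sum_congr rfl fun x _ => ?_
  rw [relEnt, mul_sum]
  refine sum_congr rfl fun y _ => ?_
  split_ifs with h
  · rw [← mul_assoc, h, zero_mul]
  · change P x * W x y * Real.log (W x y / outDist P W y) = _
    rw [Real.log_div (right_ne_zero_of_mul h)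
      fun h0 => h (mul_eq_zero_of_outDist_eq_zero hP hW h0 x), mul_assoc]

theorem mutInf_eq_entH_add {P : X → ℝ} {W : X → Y → ℝ} (hP : IsPMF P) (hW : IsChannel W) :
    mutInf P W = entH (outDist P W) + ∑ x, P x * ∑ y, W x y * Real.log (W x y) := by
  rw [mutInf_eq_sum_relEnt hP hW]
  simp only [relEnt, mul_sub, sum_sub_distrib]
  rw [← sum_outDist_mul, entH_eq_sum_negMulLog]
  simp only [Real.negMulLog, neg_mul, sum_neg_distrib]
  ring

theorem relEnt_outDist_nonneg {P : X → ℝ} {W : X → Y → ℝ} (hP : IsPMF P) (hW : IsChannel W)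
    {x : X} (hx : P x ≠ 0) : 0 ≤ relEnt (W x) (outDist P W) :=
  relEnt_nonneg ⟨hW.1 x, hW.2 x⟩ (isPMF_outDist hP hW) fun _ h =>
    (mul_eq_zero.1 (mul_eq_zero_of_outDist_eq_zero hP hW h x)).resolve_left hx

theorem relEnt_outDist_pos {P : X → ℝ} {W : X → Y → ℝ} (hP : IsPMF P) (hW : IsChannel W)
    {x : X} (hx : P x ≠ 0) (hne : W x ≠ outDist P W) : 0 < relEnt (W x) (outDist P W) :=
  relEnt_pos ⟨hW.1 x, hW.2 x⟩ (isPMF_outDist hP hW) (fun _ h =>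
    (mul_eq_zero.1 (mul_eq_zero_of_outDist_eq_zero hP hW h x)).resolve_left hx) hne

theorem mul_relEnt_outDist_nonneg {P : X → ℝ} {W : X → Y → ℝ} (hP : IsPMF P) (hW : IsChannel W)
    (x : X) : 0 ≤ P x * relEnt (W x) (outDist P W) := by
  rcases eq_or_ne (P x) 0 with h | h
  · rw [h, zero_mul]
  · exact mul_nonneg (hP.1 x) (relEnt_outDist_nonneg hP hW h)

theorem mutInf_nonneg {P : X → ℝ} {W : X → Y → ℝ} (hP : IsPMF P) (hW : IsChannel W) :
    0 ≤ mutInf P W := by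
  rw [mutInf_eq_sum_relEnt hP hW]
  exact sum_nonneg fun x _ => mul_relEnt_outDist_nonneg hP hW x

theorem mutInf_eq_zero_of_forall_eq {P : X → ℝ} {W : X → Y → ℝ} (hP : IsPMF P) (hW : IsChannel W)
    (hrows : ∀ x x', W x = W x') : mutInf P W = 0 := by
  rw [mutInf_eq_sum_relEnt hP hW]
  refine sum_eq_zero fun x _ => ?_
  have hout : outDist P W = W x := funext fun y => by
    simp only [outDist, hrows _ x, ← sum_mul, hP.2, one_mul]
  simp [relEnt, hout]

theorem exists_mutInf_pos_iff [Nonempty X] {W : X → Y → ℝ} (hW : IsChannel W) :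
    (∃ P, IsPMF P ∧ 0 < mutInf P W) ↔ ∃ x x', W x ≠ W x' := by
  constructor
  · rintro ⟨P, hP, hpos⟩
    by_contra! hrows
    exact hpos.ne' (mutInf_eq_zero_of_forall_eq hP hW hrows)
  · rintro ⟨x₀, x₁, hne⟩
    have hU : IsPMF fun _ : X => (Fintype.card X : ℝ)⁻¹ := isPMF_const_inv_card
    obtain ⟨x, hx⟩ : ∃ x, W x ≠ outDist (fun _ => (Fintype.card X : ℝ)⁻¹) W := by
      by_contra! h
      exact hne ((h x₀).trans (h x₁).symm)
    refine ⟨_, hU, ?_⟩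
    rw [mutInf_eq_sum_relEnt hU hW]
    exact sum_pos' (fun x _ => mul_relEnt_outDist_nonneg hU hW x) ⟨x, mem_univ x,
      mul_pos (by positivity) (relEnt_outDist_pos hU hW (by positivity) hx)⟩

theorem continuous_outDist {X Y : Type*} [Fintype X] (W : X → Y → ℝ) :
    Continuous fun P : X → ℝ => outDist P W := by
  unfold outDist; fun_prop

theorem continuous_entH : Continuous (entH : (Y → ℝ) → ℝ) := by
  simp only [funext (entH_eq_sum_negMulLog (Y := Y))]
  exact continuous_finsetSum _ fun y _ => Real.continuous_negMulLog.comp (continuous_apply y)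

theorem continuousOn_mutInf {W : X → Y → ℝ} (hW : IsChannel W) :
    ContinuousOn (fun P => mutInf P W) {P | IsPMF P} := by
  refine ContinuousOn.congr (f := fun P => entH (outDist P W)
    + ∑ x, P x * ∑ y, W x y * Real.log (W x y)) ?_ fun P hP => mutInf_eq_entH_add hP hW
  exact ((continuous_entH.comp (continuous_outDist W)).add (by fun_prop)).continuousOn

theorem isCompact_isPMF : IsCompact {P : X → ℝ | IsPMF P} := isCompact_stdSimplex ℝ X

theorem exists_isPMF_of_forall_approx {f g : (X → ℝ) → ℝ} (hf : ContinuousOn f {P | IsPMF P})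
    (hg : ContinuousOn g {P | IsPMF P}) {a b : ℝ}
    (h : ∀ δ > 0, ∃ P, IsPMF P ∧ a ≤ f P + δ ∧ b ≤ g P + δ) :
    ∃ P, IsPMF P ∧ a ≤ f P ∧ b ≤ g P := by
  obtain ⟨P₀, hP₀, -⟩ := h 1 one_pos
  obtain ⟨P, hP, hmin⟩ := isCompact_isPMF.exists_isMinOn ⟨P₀, hP₀⟩
    (f := (fun P => a - f P) ⊔ fun P => b - g P)
    (ContinuousOn.sup (continuousOn_const.sub hf) (continuousOn_const.sub hg))
  have hle : max (a - f P) (b - g P) ≤ 0 := by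
    refine le_of_forall_pos_le_add fun δ hδ => ?_
    obtain ⟨P', hP', ha, hb⟩ := h δ hδ
    refine (hmin hP').trans (max_le ?_ ?_) <;> linarith
  obtain ⟨ha, hb⟩ := max_le_iff.1 hle
  exact ⟨P, hP, by linarith, by linarith⟩

end Information

section Smoothing

variable {X Y : Type*} [Fintype Y] {s : ℝ} {q : Y → ℝ}

/-- The mixture of `q` with a fraction `s` of the uniform law, which bounds `log` of it. -/
def smooth (s : ℝ) (q : Y → ℝ) (y : Y) : ℝ := (1 - s) * q y + s * (Fintype.card Y : ℝ)⁻¹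

theorem isPMF_smooth [Nonempty Y] (hs0 : 0 < s) (hs1 : s < 1) (hq : IsPMF q) :
    IsPMF (smooth s q) := by
  refine ⟨fun y => add_nonneg (mul_nonneg (by linarith) (hq.1 y)) (by positivity), ?_⟩
  simp only [smooth, sum_add_distrib, ← mul_sum, hq.2, isPMF_const_inv_card.2]
  ring

theorem le_smooth (hs1 : s < 1) (hq : IsPMF q) (y : Y) :
    s * (Fintype.card Y : ℝ)⁻¹ ≤ smooth s q y :=
  le_add_of_nonneg_left (mul_nonneg (by linarith) (hq.1 y))

theorem smooth_pos (hs0 : 0 < s) (hs1 : s < 1) (hq : IsPMF q) (y : Y) : 0 < smooth s q y :=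
  have : Nonempty Y := ⟨y⟩
  (by positivity : 0 < s * (Fintype.card Y : ℝ)⁻¹).trans_le (le_smooth hs1 hq y)

theorem abs_log_smooth_le (hs0 : 0 < s) (hs1 : s < 1) (hq : IsPMF q) (y : Y) :
    |Real.log (smooth s q y)| ≤ -Real.log (s * (Fintype.card Y : ℝ)⁻¹) := by
  have : Nonempty Y := ⟨y⟩
  rw [abs_of_nonpos (Real.log_nonpos (smooth_pos hs0 hs1 hq y).le
    ((isPMF_smooth hs0 hs1 hq).le_one y))]
  exact neg_le_neg (Real.log_le_log (by positivity) (le_smooth hs1 hq y))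

theorem sum_mul_neg_log_smooth_le (hs0 : 0 < s) (hs1 : s < 1) (hq : IsPMF q) :
    ∑ y, q y * -Real.log (smooth s q y) ≤ entH q - Real.log (1 - s) := by
  calc ∑ y, q y * -Real.log (smooth s q y)
      ≤ ∑ y, (Real.negMulLog (q y) + q y * -Real.log (1 - s)) := by
        refine sum_le_sum fun y _ => ?_
        rcases (hq.1 y).eq_or_lt with h | h
        · simp [← h]
        · have hle : (1 - s) * q y ≤ smooth s q y := le_add_of_nonneg_right (by positivity)
          have hlog := Real.log_le_log (mul_pos (by linarith) h) hle
          rw [Real.log_mul (by linarith) h.ne'] at hlog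
          rw [Real.negMulLog]
          nlinarith
    _ = entH q - Real.log (1 - s) := by
        rw [sum_add_distrib, ← sum_mul, hq.2, entH_eq_sum_negMulLog]
        ring

theorem sum_mul_relEnt_smooth_le [Fintype X] (hs0 : 0 < s) (hs1 : s < 1) {P : X → ℝ}
    {W : X → Y → ℝ} (hP : IsPMF P) (hW : IsChannel W) :
    ∑ x, P x * relEnt (W x) (smooth s (outDist P W)) ≤ mutInf P W - Real.log (1 - s) := by
  have hout := sum_mul_neg_log_smooth_le hs0 hs1 (isPMF_outDist hP hW)
  rw [mutInf_eq_entH_add hP hW]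
  simp only [relEnt, mul_sub, sum_sub_distrib, ← sum_outDist_mul]
  simp only [mul_neg, sum_neg_distrib] at hout
  linarith

end Smoothing

section Feedback

/-- A feedback encoder `Q i x^i y^i a`: the weight of the channel input `a` at time `i`, given the
past inputs and the past outputs. -/
abbrev FBRule (X Y : Type*) := (i : ℕ) → (Fin i → X) → (Fin i → Y) → X → ℝ

/-- The encoder's factor `∏ᵢ Q i x^i y^i xᵢ` of the joint law of a transmission, that is, the causal
conditioning `Q(𝐱‖𝐲)`. -/
def encW {X Y : Type*} (n : ℕ) (Q : FBRule X Y) (x : Fin n → X) (y : Fin n → Y) : ℝ :=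
  ∏ i : Fin n, Q i.1 (fun j : Fin i.1 => x ⟨j.1, lt_trans j.isLt i.isLt⟩)
    (fun j : Fin i.1 => y ⟨j.1, lt_trans j.isLt i.isLt⟩) (x i)

/-- The joint law of the inputs and the fed-back outputs of the channel `V`. -/
def pathLaw {X Y : Type*} (n : ℕ) (Q : FBRule X Y) (V : X → Y → ℝ)
    (p : (Fin n → X) × (Fin n → Y)) : ℝ :=
  encW n Q p.1 p.2 * Wn V n p.1 p.2

variable {X Y Z : Type*} {n : ℕ} {Q : FBRule X Y} {V : X → Y → ℝ}

theorem snoc_comp_castLE {A : Type*} (u : Fin n → A) (c : A) (i : Fin n) :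
    (fun j : Fin i.1 => Fin.snoc (α := fun _ => A) u c ⟨j.1, j.isLt.trans i.castSucc.isLt⟩)
      = fun j : Fin i.1 => u ⟨j.1, j.isLt.trans i.isLt⟩ := by
  funext j
  simp [Fin.snoc, j.isLt.trans i.isLt]

theorem encW_snoc (n : ℕ) (Q : FBRule X Y) (x : Fin n → X) (y : Fin n → Y) (a : X) (b : Y) :
    encW (n + 1) Q (Fin.snoc (α := fun _ => X) x a) (Fin.snoc (α := fun _ => Y) y b)
      = encW n Q x y * Q n x y a := by
  rw [encW, Fin.prod_univ_castSucc, encW]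
  congr 1
  · refine prod_congr rfl fun i _ => ?_
    rw [← snoc_comp_castLE x a i, ← snoc_comp_castLE y b i, Fin.snoc_castSucc]
    rfl
  · simp [Fin.snoc]

theorem Wn_snoc (V : X → Y → ℝ) (x : Fin n → X) (y : Fin n → Y) (a : X) (b : Y) :
    Wn V (n + 1) (Fin.snoc (α := fun _ => X) x a) (Fin.snoc (α := fun _ => Y) y b)
      = Wn V n x y * V a b := by
  simp [Wn, Fin.prod_univ_castSucc]

theorem sum_fin_succ_eq_sum_snoc {A : Type*} [Fintype A] (f : (Fin (n + 1) → A) → ℝ) :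
    ∑ x, f x = ∑ x : Fin n → A, ∑ a, f (Fin.snoc (α := fun _ => A) x a) := by
  rw [← (Fin.snocEquiv fun _ : Fin (n + 1) => A).sum_comp, Fintype.sum_prod_type, sum_comm]
  rfl

theorem Wn_eq_piW (V : X → Y → ℝ) (x : Fin n → X) : Wn V n x = piW fun i => V (x i) := rfl

theorem isPMF_Wn [Fintype Y] (hV : IsChannel V) (x : Fin n → X) : IsPMF (Wn V n x) :=
  isPMF_piW fun i => ⟨hV.1 (x i), hV.2 (x i)⟩

theorem isChannel_Wn [Fintype Y] (hV : IsChannel V) (n : ℕ) : IsChannel (Wn V n) :=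
  ⟨fun x => (isPMF_Wn hV x).1, fun x => (isPMF_Wn hV x).2⟩

variable [Fintype X]

theorem IsFBEncoder.of_succ (hQ : IsFBEncoder (n + 1) Q) : IsFBEncoder n Q :=
  fun i hi => hQ i (Nat.lt_succ_of_lt hi)

theorem encW_nonneg (hQ : IsFBEncoder n Q) (x : Fin n → X) (y : Fin n → Y) : 0 ≤ encW n Q x y :=
  prod_nonneg fun i _ => (hQ i.1 i.isLt _ _).1 _

theorem sum_encW (hQ : IsFBEncoder n Q) (y : Fin n → Y) : ∑ x, encW n Q x y = 1 := by
  induction n with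
  | zero => simp [encW]
  | succ n ih =>
    rw [sum_fin_succ_eq_sum_snoc, ← Fin.snoc_init_self y]
    simp only [encW_snoc, ← mul_sum, (hQ n (Nat.lt_succ_self n) _ _).2, mul_one]
    exact ih hQ.of_succ _

variable [Fintype Y]

theorem sum_pathLaw_succ_mul (Q : FBRule X Y) (V : X → Y → ℝ)
    (g : (Fin (n + 1) → X) × (Fin (n + 1) → Y) → ℝ) :
    ∑ p, pathLaw (n + 1) Q V p * g p = ∑ p, pathLaw n Q V p * ∑ a, Q n p.1 p.2 a * ∑ b, V a b *
      g (Fin.snoc (α := fun _ => X) p.1 a, Fin.snoc (α := fun _ => Y) p.2 b) := by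
  simp only [Fintype.sum_prod_type, sum_fin_succ_eq_sum_snoc (A := X),
    sum_fin_succ_eq_sum_snoc (A := Y), pathLaw, encW_snoc, Wn_snoc]
  refine sum_congr rfl fun x _ => ?_
  rw [sum_comm]
  refine sum_congr rfl fun y _ => ?_
  simp only [mul_sum]
  exact sum_congr rfl fun a _ => sum_congr rfl fun b _ => by ring

theorem isPMF_pathLaw (hQ : IsFBEncoder n Q) (hV : IsChannel V) : IsPMF (pathLaw n Q V) := by
  refine ⟨fun p => mul_nonneg (encW_nonneg hQ _ _) ((isPMF_Wn hV _).1 _), ?_⟩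
  induction n with
  | zero => simp [pathLaw, encW, Wn]
  | succ n ih =>
    have hsucc := sum_pathLaw_succ_mul (n := n) Q V fun _ => 1
    simp only [mul_one, hV.2, (hQ n (Nat.lt_succ_self n) _ _).2] at hsucc
    rw [hsucc, ih hQ.of_succ]

theorem sum_mul_add_sq_le {p g : Y → ℝ} (hp : IsPMF p) (hmean : ∑ y, p y * g y = 0)
    (hg : ∀ y, g y ^ 2 ≤ 1) (S : ℝ) : ∑ y, p y * (S + g y) ^ 2 ≤ S ^ 2 + 1 := by
  calc ∑ y, p y * (S + g y) ^ 2
      = S ^ 2 * ∑ y, p y + 2 * S * ∑ y, p y * g y + ∑ y, p y * g y ^ 2 := by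
        simp only [mul_sum, ← sum_add_distrib]
        exact sum_congr rfl fun y _ => by ring
    _ ≤ S ^ 2 * ∑ y, p y + 2 * S * ∑ y, p y * g y + ∑ y, p y * 1 := by
        gcongr with y
        · exact hp.1 y
        · exact hg y
    _ = S ^ 2 + 1 := by simp [hp.2, hmean]

/- `∑ᵢ h(xᵢ, yᵢ)` is a martingale, so its increments are orthogonal despite the feedback. -/
theorem sum_pathLaw_mul_sq_le (hQ : IsFBEncoder n Q) (hV : IsChannel V) {h : X → Y → ℝ}
    (h0 : ∀ a, ∑ b, V a b * h a b = 0) (h1 : ∀ a b, h a b ^ 2 ≤ 1) :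
    ∑ p, pathLaw n Q V p * (∑ i, h (p.1 i) (p.2 i)) ^ 2 ≤ n := by
  induction n with
  | zero => simp
  | succ n ih =>
    have hQn := hQ n (Nat.lt_succ_self n)
    have hpath := isPMF_pathLaw hQ.of_succ hV
    rw [sum_pathLaw_succ_mul]
    simp only [Fin.sum_univ_castSucc, Fin.snoc_castSucc, Fin.snoc_last]
    calc _ ≤ ∑ p, pathLaw n Q V p * ∑ a, Q n p.1 p.2 a *
          ((∑ i, h (p.1 i) (p.2 i)) ^ 2 + 1) := by
          gcongr with p _ a
          · exact hpath.1 p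
          · exact (hQn _ _).1 a
          · exact sum_mul_add_sq_le ⟨hV.1 a, hV.2 a⟩ (h0 a) (h1 a) _
      _ = ∑ p, pathLaw n Q V p * (∑ i, h (p.1 i) (p.2 i)) ^ 2 + 1 := by
          simp only [← sum_mul, (hQn _ _).2, one_mul, mul_add, mul_one, sum_add_distrib, hpath.2]
      _ ≤ ((n + 1 : ℕ) : ℝ) := by
          push_cast
          linarith [ih hQ.of_succ]

end Feedback

section BroadcastChannel

variable {X Y Z : Type*} [Fintype Y] [Fintype Z] {W : X → Y → Z → ℝ} {n : ℕ}

theorem isChannel_margY (hW : IsBC W) : IsChannel (margY W) :=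
  ⟨fun x y => sum_nonneg fun z _ => hW.1 x y z, hW.2⟩

theorem isChannel_margZ (hW : IsBC W) : IsChannel (margZ W) :=
  ⟨fun x z => sum_nonneg fun y _ => hW.1 x y z, fun x => by rw [← hW.2 x]; exact sum_comm⟩

theorem fbLaw_eq_pathLaw_mul (hind : ∀ x y z, W x y z = margY W x y * margZ W x z)
    (Q : FBRule X Y) (x : Fin n → X) (y : Fin n → Y) (z : Fin n → Z) :
    fbLaw n W Q x y z = pathLaw n Q (margY W) (x, y) * Wn (margZ W) n x z := by
  simp only [fbLaw, pathLaw, encW, Wn, ← prod_mul_distrib]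
  exact prod_congr rfl fun i _ => by rw [hind]; ring

variable [Fintype X]

theorem sum_fbLaw_eq_mass_pathLaw (hW : IsBC W)
    (hind : ∀ x y z, W x y z = margY W x y * margZ W x z) (Q : FBRule X Y)
    (D : Finset (Fin n → Y)) :
    ∑ x, ∑ y ∈ D, ∑ z, fbLaw n W Q x y z = mass (pathLaw n Q (margY W)) fun p => p.2 ∈ D := by
  simp only [fbLaw_eq_pathLaw_mul hind, ← mul_sum, (isPMF_Wn (isChannel_margZ hW) _).2, mul_one,
    mass_eq_sum_ite, Fintype.sum_prod_type]
  exact sum_congr rfl fun x _ => by rw [← mass_mem, mass_eq_sum_ite]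

theorem sum_fbLaw_eq_sum_mul_mass (hind : ∀ x y z, W x y z = margY W x y * margZ W x z)
    (Q : FBRule X Y) (D : Finset (Fin n → Z)) :
    ∑ x, ∑ y, ∑ z ∈ D, fbLaw n W Q x y z
      = ∑ p, pathLaw n Q (margY W) p * mass (Wn (margZ W) n p.1) (· ∈ D) := by
  simp only [fbLaw_eq_pathLaw_mul hind, ← mul_sum, Fintype.sum_prod_type, mass_mem]

theorem idCodeErr_iff {M : Type*} {V : X → Y → ℝ} {Q : M → (Fin n → X) → ℝ}
    {D : M → Finset (Fin n → Y)} {l1 l2 : ℝ} :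
    IDCodeErr n V Q D l1 l2 ↔ (∀ m, mass (outDist (Q m) (Wn V n)) (· ∉ D m) ≤ l1) ∧
      ∀ m m', m ≠ m' → mass (outDist (Q m) (Wn V n)) (· ∈ D m') ≤ l2 := by
  simp only [← mem_compl, mass_outDist]
  simp only [IDCodeErr, mass_mem]

/- Terminal `Y` observes the channel with feedback; Terminal `Z` observes a memoryless channel whose
input law is that of the fed-back encoder averaged over the messages of Terminal `Y`. -/
theorem isFBIDCode_iff (hW : IsBC W) (hind : ∀ x y z, W x y z = margY W x y * margZ W x z)
    {kY kZ : ℕ} {Q : Fin kY → Fin kZ → FBRule X Y} {DY : Fin kY → Finset (Fin n → Y)}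
    {DZ : Fin kZ → Finset (Fin n → Z)} {l1Y l2Y l1Z l2Z : ℝ} :
    IsFBIDCode n kY kZ W Q DY DZ l1Y l2Y l1Z l2Z ↔
      (∀ my mz, IsFBEncoder n (Q my mz)) ∧
      (∀ my, mass (mixture fun mz => pathLaw n (Q my mz) (margY W))
        (fun p => p.2 ∉ DY my) ≤ l1Y) ∧
      (∀ my my', my ≠ my' → mass (mixture fun mz => pathLaw n (Q my mz) (margY W))
        (fun p => p.2 ∈ DY my') ≤ l2Y) ∧
      IDCodeErr n (margZ W)
        (fun mz => mixture fun my => mapLaw Prod.fst (pathLaw n (Q my mz) (margY W)))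
        DZ l1Z l2Z := by
  simp only [IsFBIDCode, IDCodeErr, sum_fbLaw_eq_mass_pathLaw hW hind,
    sum_fbLaw_eq_sum_mul_mass hind, mass_mixture, Fintype.card_fin, ← mem_compl, sum_mixture_mul,
    sum_mapLaw_mul, mass_mem]

end BroadcastChannel

section SoftCovering

variable {A S : Type*} [Fintype A] [Fintype S] {w : A → ℝ} {N : ℕ}

theorem sum_piW_mul_avg (hw : IsPMF w) (hN : 0 < N) (g : A → ℝ) :
    ∑ f : Fin N → A, piW (fun _ => w) f * ((N : ℝ)⁻¹ * ∑ j, g (f j)) = ∑ a, w a * g a := by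
  simp only [mul_left_comm _ (N : ℝ)⁻¹, ← mul_sum]
  simp only [mul_sum (univ : Finset (Fin N))]
  rw [sum_comm]
  simp only [sum_piW_mul_apply (fun _ : Fin N => hw) _ g, sum_const, card_univ, Fintype.card_fin,
    nsmul_eq_mul]
  field_simp

theorem sum_piW_mul_sq_avg_sub_le (hw : IsPMF w) (hN : 0 < N) (g : A → ℝ) :
    ∑ f : Fin N → A, piW (fun _ => w) f * ((N : ℝ)⁻¹ * ∑ j, g (f j) - ∑ a, w a * g a) ^ 2
      ≤ (N : ℝ)⁻¹ * ∑ a, w a * g a ^ 2 := by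
  set m := ∑ a, w a * g a
  have hvar := sum_piW_mul_sq_sum (ι := Fin N) (fun _ => hw) (fun _ a => g a - m)
    fun _ => hw.sum_mul_sub_mean g
  have hcentre : ∀ f : Fin N → A, piW (fun _ => w) f * ((N : ℝ)⁻¹ * ∑ j, g (f j) - m) ^ 2
      = ((N : ℝ)⁻¹) ^ 2 * (piW (fun _ => w) f * (∑ j, (g (f j) - m)) ^ 2) := fun f => by
    simp only [sum_sub_distrib, sum_const, card_univ, Fintype.card_fin, nsmul_eq_mul]
    field_simp
  simp only [hcentre, ← mul_sum, hvar, sum_const, card_univ, Fintype.card_fin, nsmul_eq_mul]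
  calc ((N : ℝ)⁻¹) ^ 2 * (N * ∑ a, w a * (g a - m) ^ 2)
      = (N : ℝ)⁻¹ * ∑ a, w a * (g a - m) ^ 2 := by field_simp
    _ ≤ (N : ℝ)⁻¹ * ∑ a, w a * g a ^ 2 :=
        mul_le_mul_of_nonneg_left (hw.sum_mul_sub_mean_sq_le g) (by positivity)

theorem abs_le_sq_div_add {s : ℝ} (hs : 0 < s) (d : ℝ) : |d| ≤ d ^ 2 / (2 * s) + s / 2 := by
  rw [div_add_div _ _ (by positivity) two_ne_zero, le_div_iff₀ (by positivity)]
  nlinarith [sq_nonneg (|d| - s), sq_abs d]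

theorem sum_piW_mul_abs_avg_sub_le (hw : IsPMF w) (hN : 0 < N) (g : A → ℝ) {s : ℝ} (hs : 0 < s) :
    ∑ f : Fin N → A, piW (fun _ => w) f * |(N : ℝ)⁻¹ * ∑ j, g (f j) - ∑ a, w a * g a|
      ≤ (N : ℝ)⁻¹ * (∑ a, w a * g a ^ 2) / (2 * s) + s / 2 := by
  have hf := isPMF_piW fun _ : Fin N => hw
  calc _ ≤ ∑ f : Fin N → A, piW (fun _ => w) f *
        (((N : ℝ)⁻¹ * ∑ j, g (f j) - ∑ a, w a * g a) ^ 2 / (2 * s) + s / 2) := by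
        gcongr with f
        · exact hf.1 f
        · exact abs_le_sq_div_add hs _
    _ = (∑ f : Fin N → A, piW (fun _ => w) f *
        ((N : ℝ)⁻¹ * ∑ j, g (f j) - ∑ a, w a * g a) ^ 2) / (2 * s) + s / 2 := by
        simp only [mul_add, sum_add_distrib, ← sum_mul, hf.2, one_mul, sum_div, mul_div_assoc]
    _ ≤ _ := by gcongr; exact sum_piW_mul_sq_avg_sub_le hw hN g

theorem sum_piW_mul_abs_avg_sub_le_two_mul (hw : IsPMF w) (hN : 0 < N) {g : A → ℝ}
    (hg : ∀ a, 0 ≤ g a) :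
    ∑ f : Fin N → A, piW (fun _ => w) f * |(N : ℝ)⁻¹ * ∑ j, g (f j) - ∑ a, w a * g a|
      ≤ 2 * ∑ a, w a * g a := by
  have hf := isPMF_piW fun _ : Fin N => hw
  have hm : 0 ≤ ∑ a, w a * g a := sum_nonneg fun a _ => mul_nonneg (hw.1 a) (hg a)
  calc _ ≤ ∑ f : Fin N → A, piW (fun _ => w) f *
        ((N : ℝ)⁻¹ * ∑ j, g (f j) + ∑ a, w a * g a) := by
        gcongr with f
        · exact hf.1 f
        · have havg : 0 ≤ (N : ℝ)⁻¹ * ∑ j, g (f j) :=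
            mul_nonneg (by positivity) (sum_nonneg fun j _ => hg _)
          exact abs_le.2 ⟨by linarith, by linarith⟩
    _ = 2 * ∑ a, w a * g a := by
        simp only [mul_add, sum_add_distrib, ← sum_mul, hf.2, sum_piW_mul_avg hw hN g]
        ring

/- The part of `g` above the threshold `t` is too large for the variance bound, but its mean is
small. -/
theorem sum_piW_mul_abs_avg_sub_le_of_threshold (hw : IsPMF w) (hN : 0 < N) {g : A → ℝ}
    (hg : ∀ a, 0 ≤ g a) {t s : ℝ} (ht : 0 ≤ t) (hs : 0 < s) :
    ∑ f : Fin N → A, piW (fun _ => w) f * |(N : ℝ)⁻¹ * ∑ j, g (f j) - ∑ a, w a * g a|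
      ≤ (N : ℝ)⁻¹ * (t * ∑ a, w a * g a) / (2 * s) + s / 2
        + 2 * ∑ a, w a * (if t < g a then g a else 0) := by
  set u : A → ℝ := fun a => if t < g a then 0 else g a with hu
  set r : A → ℝ := fun a => if t < g a then g a else 0 with hr
  have hgur : ∀ a, g a = u a + r a := fun a => by simp only [hu, hr]; split_ifs <;> simp
  have hsq : ∀ a, u a ^ 2 ≤ t * g a := fun a => by
    simp only [hu]
    split_ifs with h
    · simpa using mul_nonneg ht (hg a)
    · nlinarith [hg a, not_lt.1 h]
  have hsq_sum : ∑ a, w a * u a ^ 2 ≤ t * ∑ a, w a * g a := by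
    rw [mul_sum]
    exact sum_le_sum fun a _ => by nlinarith [hsq a, hw.1 a]
  calc _ ≤ ∑ f : Fin N → A, piW (fun _ => w) f *
        (|(N : ℝ)⁻¹ * ∑ j, u (f j) - ∑ a, w a * u a|
          + |(N : ℝ)⁻¹ * ∑ j, r (f j) - ∑ a, w a * r a|) := by
        gcongr with f
        · exact (isPMF_piW fun _ => hw).1 f
        · refine le_trans (le_of_eq ?_) (abs_add_le _ _)
          simp only [hgur, mul_add, sum_add_distrib]
          ring_nf
    _ ≤ ((N : ℝ)⁻¹ * (∑ a, w a * u a ^ 2) / (2 * s) + s / 2) + 2 * ∑ a, w a * r a := by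
        simp only [mul_add, sum_add_distrib]
        exact add_le_add (sum_piW_mul_abs_avg_sub_le hw hN u hs)
          (sum_piW_mul_abs_avg_sub_le_two_mul hw hN fun a => by
            simp only [hr]; split_ifs <;> simp [hg a])
    _ ≤ _ := by gcongr

theorem soft_covering (hw : IsPMF w) {V : A → S → ℝ} (hV : IsChannel V) {q : S → ℝ}
    (hq : IsPMF q) (hq0 : ∀ z, 0 < q z) {γ c ν : ℝ} (hγ0 : 0 ≤ γ) (hc : 0 < c)
    (hN : 0 < N) (hγ : γ ≤ N * c ^ 2) (hν : ∑ x, w x * mass (V x) (fun z => γ * q z < V x z) ≤ ν) :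
    ∃ f : Fin N → A, ∑ z, |(N : ℝ)⁻¹ * ∑ j, V (f j) z - outDist w V z| ≤ 2 * ν + c := by
  have hp := isPMF_outDist hw hV
  have hpoint : ∀ z, (N : ℝ)⁻¹ * (γ * q z * outDist w V z) / (2 * (c * q z))
      ≤ c * outDist w V z / 2 := fun z => by
    have hz := hq0 z
    have hpz := hp.1 z
    rw [div_le_iff₀ (by positivity), inv_mul_le_iff₀ (by exact_mod_cast hN)]
    calc γ * q z * outDist w V z ≤ N * c ^ 2 * q z * outDist w V z := by gcongr
      _ = _ := by ring
  refine (isPMF_piW fun _ : Fin N => hw).exists_le ?_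
  calc ∑ f : Fin N → A, piW (fun _ => w) f * ∑ z, |(N : ℝ)⁻¹ * ∑ j, V (f j) z - outDist w V z|
      = ∑ z, ∑ f : Fin N → A, piW (fun _ => w) f *
          |(N : ℝ)⁻¹ * ∑ j, V (f j) z - outDist w V z| := by
        simp only [mul_sum (univ : Finset S)]
        exact sum_comm
    _ ≤ ∑ z, (c * outDist w V z / 2 + c * q z / 2
          + 2 * ∑ x, w x * (if γ * q z < V x z then V x z else 0)) := by
        refine sum_le_sum fun z _ => (sum_piW_mul_abs_avg_sub_le_of_threshold hw hN
          (fun x => hV.1 x z) (mul_nonneg hγ0 (hq0 z).le) (mul_pos hc (hq0 z))).trans ?_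
        exact add_le_add (add_le_add (hpoint z) le_rfl) le_rfl
    _ = 2 * (∑ x, w x * mass (V x) (fun z => γ * q z < V x z)) + c := by
        simp only [sum_add_distrib, ← sum_div, ← mul_sum, hp.2, hq.2, mass_eq_sum_ite]
        rw [sum_comm]
        simp only [← mul_sum]
        ring
    _ ≤ 2 * ν + c := by gcongr

end SoftCovering

section Counting

/- A message is determined by the part of its decoding set inside `B`. -/
theorem card_le_two_pow_of_concentrated {M Ω T : Type*} [Fintype M] [Fintype Ω]
    {w : M → Ω → ℝ} (hw : ∀ m ω, 0 ≤ w m ω) (out : Ω → T) (G : Ω → Prop) (D : M → Finset T)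
    (B : Finset T) {l1 l2 ν : ℝ} (h1 : ∀ m, mass (w m) (fun ω => out ω ∉ D m) ≤ l1)
    (h2 : ∀ m m', m ≠ m' → mass (w m) (fun ω => out ω ∈ D m') ≤ l2)
    (hB : ∀ m, mass (w m) (fun ω => G ω ∧ out ω ∉ B) ≤ ν) :
    #{m | l1 + l2 + ν < mass (w m) G} ≤ 2 ^ #B := by
  rw [← card_powerset]
  refine card_le_card_of_injOn (fun m => D m ∩ B)
    (fun m _ => mem_coe.2 (mem_powerset.2 inter_subset_right)) ?_
  intro m hm m' _ heq
  by_contra hne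
  have hsplit : ∀ ω, G ω → (out ω ∉ D m ∨ out ω ∈ D m') ∨ (G ω ∧ out ω ∉ B) := fun ω hG => by
    have hiff : (out ω ∈ D m ∧ out ω ∈ B) ↔ (out ω ∈ D m' ∧ out ω ∈ B) := by
      simpa using Finset.ext_iff.1 heq (out ω)
    tauto
  have hle := (mass_mono (hw m) hsplit).trans
    ((mass_or_le (hw m) _ _).trans (add_le_add (mass_or_le (hw m) _ _) le_rfl))
  linarith [(mem_filter.1 hm).2, h1 m, h2 m m' hne, hB m]

variable {A S : Type*} [Fintype A] [Fintype S]

/-- The law `w` conditioned on the event `p`; identically zero when `p` has mass zero. -/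
def condLaw (w : A → ℝ) (p : A → Prop) (a : A) : ℝ := (mass w p)⁻¹ * if p a then w a else 0

theorem isPMF_condLaw {w : A → ℝ} (hw : IsPMF w) {p : A → Prop} (hp : 0 < mass w p) :
    IsPMF (condLaw w p) := by
  refine ⟨fun a => mul_nonneg (inv_pos.2 hp).le (by split_ifs <;> simp [hw.1 a]), ?_⟩
  simp only [condLaw, ← mul_sum, ← mass_eq_sum_ite]
  exact inv_mul_cancel₀ hp.ne'

theorem sum_condLaw_mul_le {w g : A → ℝ} (hw : IsPMF w) {p : A → Prop} (hp : 0 < mass w p) {ν : ℝ}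
    (hg : ∀ a, p a → g a ≤ ν) : ∑ a, condLaw w p a * g a ≤ ν := by
  have hcond := isPMF_condLaw hw hp
  calc ∑ a, condLaw w p a * g a ≤ ∑ a, condLaw w p a * ν := by
        refine sum_le_sum fun a _ => ?_
        by_cases ha : p a
        · exact mul_le_mul_of_nonneg_left (hg a ha) (hcond.1 a)
        · simp [condLaw, ha]
    _ = ν := by rw [← sum_mul, hcond.2, one_mul]

theorem mass_outDist_condLaw_le {w : A → ℝ} (hw : IsPMF w) {V : A → S → ℝ} (hV : IsChannel V)
    (p : A → Prop) (e : S → Prop) :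
    mass (outDist (condLaw w p) V) e ≤ (mass w p)⁻¹ * mass (outDist w V) e := by
  simp only [mass_outDist, mul_sum, condLaw, mul_assoc]
  refine sum_le_sum fun a _ => mul_le_mul_of_nonneg_left ?_ (inv_nonneg.2 (mass_nonneg hw.1 p))
  refine mul_le_mul_of_nonneg_right ?_ (mass_nonneg (hV.1 a) e)
  split_ifs <;> simp [hw.1 a]

theorem one_le_of_common_approx {p p' u : S → ℝ} (hp : IsPMF p) (e : S → Prop) {ε : ℝ}
    (hu : ∑ z, |u z - p z| ≤ ε) (hu' : ∑ z, |u z - p' z| ≤ ε) :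
    1 ≤ mass p (fun z => ¬ e z) + mass p' e + 2 * ε := by
  have hdiff : mass p e - mass p' e ≤ 2 * ε := by
    calc mass p e - mass p' e = ∑ z with e z, (p z - p' z) := by
          simp only [mass, sum_sub_distrib]
      _ ≤ ∑ z with e z, (|u z - p z| + |u z - p' z|) := sum_le_sum fun z _ => by
          linarith [neg_abs_le (u z - p z), le_abs_self (u z - p' z)]
      _ ≤ ∑ z, (|u z - p z| + |u z - p' z|) :=
          sum_le_univ_sum_of_nonneg fun z => by positivity
      _ ≤ 2 * ε := by rw [sum_add_distrib]; linarith
  linarith [hp.mass_not e]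

/- A message is determined by a codeword tuple whose average output approximates the output law of
the message, conditioned on the covered inputs `G`. -/
theorem card_le_of_covering {M : Type*} [Fintype M] [Nonempty A] {Q : M → A → ℝ}
    (hQ : ∀ m, IsPMF (Q m)) {V : A → S → ℝ} (hV : IsChannel V) (D : M → Finset S) (G : A → Prop)
    {q : S → ℝ} (hq : IsPMF q) (hq0 : ∀ z, 0 < q z) {γ c ν l1 l2 β : ℝ} (hγ0 : 0 ≤ γ)
    (hc : 0 < c) {N : ℕ} (hN : 0 < N) (hγ : γ ≤ N * c ^ 2)
    (h1 : ∀ m, mass (outDist (Q m) V) (· ∉ D m) ≤ l1)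
    (h2 : ∀ m m', m ≠ m' → mass (outDist (Q m) V) (· ∈ D m') ≤ l2)
    (hG : ∀ x, G x → mass (V x) (fun z => γ * q z < V x z) ≤ ν) (hβ : 0 < β)
    (hsmall : l1 + l2 + 2 * β * (2 * ν + c) < β) :
    #{m | β < mass (Q m) G} ≤ Fintype.card A ^ N := by
  have hcover : ∀ m, β < mass (Q m) G → ∃ f : Fin N → A,
      ∑ z, |(N : ℝ)⁻¹ * ∑ j, V (f j) z - outDist (condLaw (Q m) G) V z| ≤ 2 * ν + c := fun m hm =>
    soft_covering (isPMF_condLaw (hQ m) (hβ.trans hm)) hV hq hq0 hγ0 hc hN hγ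
      (sum_condLaw_mul_le (hQ m) (hβ.trans hm) hG)
  choose! F hF using hcover
  have hcond : ∀ m, β < mass (Q m) G → ∀ e : S → Prop,
      mass (outDist (condLaw (Q m) G) V) e ≤ β⁻¹ * mass (outDist (Q m) V) e := fun m hm e =>
    (mass_outDist_condLaw_le (hQ m) hV G e).trans (mul_le_mul_of_nonneg_right
      (inv_anti₀ hβ hm.le) (mass_nonneg (isPMF_outDist (hQ m) hV).1 e))
  have hcard : Fintype.card A ^ N = #(univ : Finset (Fin N → A)) := by simp
  rw [hcard]
  refine card_le_card_of_injOn F (fun m _ => mem_coe.2 (mem_univ _)) ?_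
  intro m hm m' hm' heq
  replace hm := (mem_filter.1 hm).2
  replace hm' := (mem_filter.1 hm').2
  by_contra hne
  have hclose := one_le_of_common_approx
    (isPMF_outDist (isPMF_condLaw (hQ m) (hβ.trans hm)) hV) (· ∈ D m) (hF m hm)
    (by rw [heq]; exact hF m' hm')
  have hmiss := (hcond m hm (· ∉ D m)).trans (mul_le_mul_of_nonneg_left (h1 m) (by positivity))
  have hwrong := (hcond m' hm' (· ∈ D m)).trans
    (mul_le_mul_of_nonneg_left (h2 m' m (Ne.symm hne)) (by positivity))
  have hone : β * 1 ≤ β * (β⁻¹ * l1 + β⁻¹ * l2 + 2 * (2 * ν + c)) :=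
    mul_le_mul_of_nonneg_left (by linarith) hβ.le
  have hcancel : β * (β⁻¹ * l1 + β⁻¹ * l2 + 2 * (2 * ν + c))
      = l1 + l2 + 2 * β * (2 * ν + c) := by field_simp
  linarith

end Counting

section Types

variable {X Y : Type*} [Fintype X] {n : ℕ}

/-- The type (empirical distribution) of a sequence; identically zero when `n = 0`. -/
def typeOf (x : Fin n → X) (a : X) : ℝ := (n : ℝ)⁻¹ * #{i | x i = a}

/-- The set of types of the sequences of length `n` over `X`. -/
def typeSet (X : Type*) [Fintype X] (n : ℕ) : Finset (X → ℝ) :=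
  univ.image fun x : Fin n → X => typeOf x

theorem natCast_mul_sum_typeOf_mul (hn : 0 < n) (x : Fin n → X) (g : X → ℝ) :
    n * ∑ a, typeOf x a * g a = ∑ i, g (x i) := by
  have hn' : (n : ℝ) ≠ 0 := by exact_mod_cast hn.ne'
  have hsplit : ∀ i, g (x i) = ∑ a, (if x i = a then 1 else 0) * g a := fun i => by simp
  simp only [hsplit]
  rw [sum_comm, mul_sum]
  refine sum_congr rfl fun a _ => ?_
  rw [typeOf, ← sum_mul, sum_boole]
  field_simp

theorem isPMF_typeOf (hn : 0 < n) (x : Fin n → X) : IsPMF (typeOf x) := by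
  have hn' : (n : ℝ) ≠ 0 := by exact_mod_cast hn.ne'
  refine ⟨fun a => by unfold typeOf; positivity, mul_left_cancel₀ hn' ?_⟩
  simpa using natCast_mul_sum_typeOf_mul hn x fun _ => 1

theorem typeOf_mem_typeSet (x : Fin n → X) : typeOf x ∈ typeSet X n :=
  mem_image_of_mem _ (mem_univ x)

theorem isPMF_of_mem_typeSet (hn : 0 < n) {T : X → ℝ} (hT : T ∈ typeSet X n) : IsPMF T := by
  obtain ⟨x, -, rfl⟩ := mem_image.1 hT
  exact isPMF_typeOf hn x

theorem typeSet_nonempty [Nonempty X] (n : ℕ) : (typeSet X n).Nonempty :=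
  univ_nonempty.image _

theorem card_typeSet_le (n : ℕ) : #(typeSet X n) ≤ (n + 1) ^ Fintype.card X := by
  have hsub : typeSet X n ⊆
      univ.image fun (c : X → Fin (n + 1)) a => (n : ℝ)⁻¹ * ((c a).1 : ℝ) := by
    intro T hT
    obtain ⟨x, -, rfl⟩ := mem_image.1 hT
    refine mem_image.2 ⟨fun a => ⟨#{i | x i = a}, Nat.lt_succ_of_le ?_⟩, mem_univ _, rfl⟩
    exact (card_le_univ _).trans (by simp)
  exact (card_le_card hsub).trans (card_image_le.trans (by simp))

variable [Fintype Y]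

/-- The universal output law: the uniform mixture, over the types `T` of length `n`, of the
memoryless extensions of the smoothed output distributions `T V`. -/
def univOut (s : ℝ) (V : X → Y → ℝ) (n : ℕ) (y : Fin n → Y) : ℝ :=
  (#(typeSet X n) : ℝ)⁻¹ * ∑ T ∈ typeSet X n, piW (fun _ => smooth s (outDist T V)) y

variable {s : ℝ} {V : X → Y → ℝ}

theorem piW_smooth_outDist_pos (hs0 : 0 < s) (hs1 : s < 1) (hV : IsChannel V) {P : X → ℝ}
    (hP : IsPMF P) (y : Fin n → Y) : 0 < piW (fun _ => smooth s (outDist P V)) y :=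
  prod_pos fun i _ => smooth_pos hs0 hs1 (isPMF_outDist hP hV) (y i)

variable [Nonempty X]

theorem card_typeSet_pos (n : ℕ) : (0 : ℝ) < #(typeSet X n) := by
  exact_mod_cast card_pos.2 (typeSet_nonempty n)

theorem univOut_pos (hs0 : 0 < s) (hs1 : s < 1) (hV : IsChannel V) (hn : 0 < n)
    (y : Fin n → Y) : 0 < univOut s V n y :=
  mul_pos (inv_pos.2 (card_typeSet_pos n)) (sum_pos (fun _ hT =>
    piW_smooth_outDist_pos hs0 hs1 hV (isPMF_of_mem_typeSet hn hT) y) (typeSet_nonempty n))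

theorem isPMF_univOut [Nonempty Y] (hs0 : 0 < s) (hs1 : s < 1) (hV : IsChannel V) (hn : 0 < n) :
    IsPMF (univOut s V n) := by
  refine ⟨fun y => (univOut_pos hs0 hs1 hV hn y).le, ?_⟩
  have hsum : ∀ T ∈ typeSet X n, ∑ y : Fin n → Y, piW (fun _ => smooth s (outDist T V)) y = 1 :=
    fun T hT => (isPMF_piW fun _ =>
      isPMF_smooth hs0 hs1 (isPMF_outDist (isPMF_of_mem_typeSet hn hT) hV)).2
  simp only [univOut, ← mul_sum]
  rw [sum_comm, sum_congr rfl hsum, sum_const, nsmul_eq_mul, mul_one]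
  exact inv_mul_cancel₀ (card_typeSet_pos n).ne'

theorem sum_log_smooth_sub_le_log_univOut (hs0 : 0 < s) (hs1 : s < 1) (hV : IsChannel V)
    (hn : 0 < n) (x : Fin n → X) (y : Fin n → Y) :
    ∑ i, Real.log (smooth s (outDist (typeOf x) V) (y i)) - Fintype.card X * Real.log (n + 1)
      ≤ Real.log (univOut s V n y) := by
  have hpos : ∀ T ∈ typeSet X n, 0 < piW (fun _ => smooth s (outDist T V)) y := fun T hT =>
    piW_smooth_outDist_pos hs0 hs1 hV (isPMF_of_mem_typeSet hn hT) y
  have hx := typeOf_mem_typeSet x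
  have hn1 : (0 : ℝ) < (n + 1) ^ Fintype.card X := by positivity
  have hle : ((n + 1 : ℝ) ^ Fintype.card X)⁻¹ * piW (fun _ => smooth s (outDist (typeOf x) V)) y
      ≤ univOut s V n y := by
    refine mul_le_mul (inv_anti₀ (card_typeSet_pos n) (by exact_mod_cast card_typeSet_le n))
      (single_le_sum (fun T hT => (hpos T hT).le) hx) (hpos _ hx).le
      (inv_pos.2 (card_typeSet_pos n)).le
  have hlog := Real.log_le_log (mul_pos (inv_pos.2 hn1) (hpos _ hx)) hle
  rw [Real.log_mul (inv_pos.2 hn1).ne' (hpos _ hx).ne', Real.log_inv, Real.log_pow, piW,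
    Real.log_prod fun i _ =>
      (smooth_pos hs0 hs1 (isPMF_outDist (isPMF_typeOf hn x) hV) (y i)).ne'] at hlog
  linarith

end Types

section Concentration

theorem exists_mul_log_succ_le (k : ℝ) {ε : ℝ} (hε : 0 < ε) :
    ∃ n₀ : ℕ, ∀ n ≥ n₀, k * Real.log ((n : ℝ) + 1) ≤ n * ε := by
  have hlog : (fun n : ℕ => k * Real.log ((n : ℝ) + 1)) =o[Filter.atTop] fun n : ℕ => (n : ℝ) + 1 :=
    (Real.isLittleO_log_id_atTop.const_mul_left k).comp_tendsto
      (Filter.tendsto_atTop_add_const_right _ _ tendsto_natCast_atTop_atTop)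
  obtain ⟨n₀, hn₀⟩ := Filter.eventually_atTop.1 (hlog.bound (half_pos hε))
  refine ⟨n₀ + 1, fun n hn => ?_⟩
  have hn1 : (1 : ℝ) ≤ n := by exact_mod_cast (by omega : 1 ≤ n)
  have hbound := (le_abs_self _).trans (hn₀ n (by omega))
  rw [Real.norm_of_nonneg (by positivity)] at hbound
  nlinarith

theorem exists_div_natCast_le (C : ℝ) {ν : ℝ} (hν : 0 < ν) : ∃ n₀ : ℕ, ∀ n ≥ n₀, C / (n : ℝ) ≤ ν :=
  Filter.eventually_atTop.1 ((tendsto_const_div_atTop_nhds_zero_nat C).eventually_le_const hν)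

variable {X Y : Type*} [Fintype Y] {V : X → Y → ℝ} {n : ℕ}

theorem mass_Wn_deviation_le (hV : IsChannel V) {g : X → Y → ℝ} {C : ℝ}
    (hg : ∀ a b, |g a b| ≤ C) {δ : ℝ} (hδ : 0 < δ) (hn : 0 < n) (x : Fin n → X) :
    mass (Wn V n x) (fun y => n * δ ≤ |∑ i, (g (x i) (y i) - ∑ b, V (x i) b * g (x i) b)|)
      ≤ C ^ 2 / δ ^ 2 / n := by
  have hrow : ∀ a, IsPMF (V a) := fun a => ⟨hV.1 a, hV.2 a⟩
  have hvar : ∑ y, Wn V n x y * (∑ i, (g (x i) (y i) - ∑ b, V (x i) b * g (x i) b)) ^ 2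
      ≤ n * C ^ 2 := by
    rw [Wn_eq_piW, sum_piW_mul_sq_sum (fun i => hrow (x i))
      (fun i b => g (x i) b - ∑ b, V (x i) b * g (x i) b) fun i => (hrow _).sum_mul_sub_mean _]
    calc _ ≤ ∑ i : Fin n, ∑ b, V (x i) b * C ^ 2 := sum_le_sum fun i _ =>
          ((hrow _).sum_mul_sub_mean_sq_le _).trans (sum_le_sum fun b _ =>
            mul_le_mul_of_nonneg_left (sq_le_sq' (abs_le.1 (hg _ b)).1 (abs_le.1 (hg _ b)).2)
              (hV.1 _ b))
      _ = n * C ^ 2 := by simp [← sum_mul, hV.2]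
  refine (mass_le_of_sum_mul_sq_le (isPMF_Wn hV x).1 (by positivity) hvar).trans_eq ?_
  field_simp

/-- The number of occurrences of `b` in `y`, minus its conditional mean given the inputs `x`. -/
def letterDev (V : X → Y → ℝ) (x : Fin n → X) (y : Fin n → Y) (b : Y) : ℝ :=
  ∑ i, ((if y i = b then 1 else 0) - V (x i) b)

variable [Fintype X]

theorem mass_pathLaw_letterDev_le (hV : IsChannel V) {Q : FBRule X Y} (hQ : IsFBEncoder n Q)
    (b : Y) {κ : ℝ} (hκ : 0 < κ) (hn : 0 < n) :
    mass (pathLaw n Q V) (fun p => n * κ ≤ |letterDev V p.1 p.2 b|) ≤ 1 / κ ^ 2 / n := by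
  refine (mass_le_of_sum_mul_sq_le (isPMF_pathLaw hQ hV).1 (by positivity)
    (sum_pathLaw_mul_sq_le hQ hV (h := fun a y => (if y = b then 1 else 0) - V a b)
      (fun a => ?_) fun a y => ?_)).trans_eq (by field_simp)
  · simp [mul_sub, ← sum_mul, hV.2]
  · have h0 := hV.1 a b
    have h1 := IsPMF.le_one ⟨hV.1 a, hV.2 a⟩ b
    split_ifs <;> nlinarith

theorem sum_apply_eq_sum_letterDev_mul_add (hn : 0 < n) (V : X → Y → ℝ) (x : Fin n → X)
    (y : Fin n → Y) (l : Y → ℝ) :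
    ∑ i, l (y i) = ∑ b, letterDev V x y b * l b + n * ∑ b, outDist (typeOf x) V b * l b := by
  have hmean : ∀ b, n * outDist (typeOf x) V b = ∑ i, V (x i) b := fun b =>
    natCast_mul_sum_typeOf_mul hn x fun a => V a b
  have hletter : ∀ b, letterDev V x y b * l b + n * (outDist (typeOf x) V b * l b)
      = ∑ i, (if y i = b then 1 else 0) * l b := fun b => by
    rw [← mul_assoc, hmean b, ← add_mul, letterDev, ← sum_add_distrib, ← sum_mul]
    simp only [sub_add_cancel]
  rw [mul_sum, ← sum_add_distrib, sum_congr rfl fun b _ => hletter b, sum_comm]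
  simp

variable [Nonempty X] {s ε : ℝ}

theorem le_sum_information_density (hV : IsChannel V) (hs0 : 0 < s) (hs1 : s < 1)
    (hs : -Real.log (1 - s) ≤ ε / 4) (hn : 0 < n)
    (htypes : Fintype.card X * Real.log ((n : ℝ) + 1) ≤ n * (ε / 4)) (x : Fin n → X)
    {y : Fin n → Y}
    (hy : Real.exp (n * (mutInf (typeOf x) V + ε)) * univOut s V n y < Wn V n x y) :
    n * (ε / 2) ≤ ∑ i, (Real.log (V (x i) (y i)) - Real.log (smooth s (outDist (typeOf x) V) (y i))
      - relEnt (V (x i)) (smooth s (outDist (typeOf x) V))) := by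
  have hmean : ∑ i, relEnt (V (x i)) (smooth s (outDist (typeOf x) V))
      ≤ n * (mutInf (typeOf x) V + ε / 4) := by
    rw [← natCast_mul_sum_typeOf_mul hn x fun a => relEnt (V a) _]
    gcongr
    linarith [sum_mul_relEnt_smooth_le hs0 hs1 (isPMF_typeOf hn x) hV]
  have hu := univOut_pos hs0 hs1 hV hn y
  have hW0 : Wn V n x y ≠ 0 := ((mul_pos (Real.exp_pos _) hu).trans hy).ne'
  have hlog := Real.log_lt_log (mul_pos (Real.exp_pos _) hu) hy
  rw [Real.log_mul (Real.exp_pos _).ne' hu.ne', Real.log_exp, Wn,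
    Real.log_prod fun i hi => (prod_ne_zero_iff.1 hW0 i hi)] at hlog
  have huniv := sum_log_smooth_sub_le_log_univOut hs0 hs1 hV hn x y
  simp only [sum_sub_distrib]
  linarith

theorem exp_le_univOut_of_letterDev_lt (hV : IsChannel V) (hs0 : 0 < s) (hs1 : s < 1)
    (hs : -Real.log (1 - s) ≤ ε / 4) (hn : 0 < n)
    (htypes : Fintype.card X * Real.log ((n : ℝ) + 1) ≤ n * (ε / 4)) {κ : ℝ}
    (hκ : Fintype.card Y * (κ * -Real.log (s * (Fintype.card Y : ℝ)⁻¹)) ≤ ε / 2)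
    {x : Fin n → X} {y : Fin n → Y} (hdev : ∀ b, |letterDev V x y b| < n * κ) :
    Real.exp (-(n * (entH (outDist (typeOf x) V) + ε))) ≤ univOut s V n y := by
  have hq := isPMF_outDist (isPMF_typeOf hn x) hV
  rw [← Real.le_log_iff_exp_le (univOut_pos hs0 hs1 hV hn y)]
  set l : Y → ℝ := fun b => -Real.log (smooth s (outDist (typeOf x) V) b) with hl
  have hfluct : ∑ b, letterDev V x y b * l b ≤ n * (ε / 2) := by
    calc ∑ b, letterDev V x y b * l b
        ≤ ∑ _b : Y, n * κ * -Real.log (s * (Fintype.card Y : ℝ)⁻¹) := by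
          refine sum_le_sum fun b _ => (le_abs_self _).trans ?_
          rw [abs_mul, hl, abs_neg]
          exact mul_le_mul (hdev b).le (abs_log_smooth_le hs0 hs1 hq b) (abs_nonneg _)
            ((abs_nonneg _).trans (hdev b).le)
      _ = n * (Fintype.card Y * (κ * -Real.log (s * (Fintype.card Y : ℝ)⁻¹))) := by
          rw [sum_const, card_univ, nsmul_eq_mul]
          ring
      _ ≤ n * (ε / 2) := by gcongr
  have hmean : n * ∑ b, outDist (typeOf x) V b * l b
      ≤ n * (entH (outDist (typeOf x) V) + ε / 4) := by
    gcongr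
    linarith [sum_mul_neg_log_smooth_le hs0 hs1 hq]
  have hsum := sum_apply_eq_sum_letterDev_mul_add hn V x y l
  rw [hl, sum_neg_distrib] at hsum
  linarith [sum_log_smooth_sub_le_log_univOut hs0 hs1 hV hn x y]

theorem exists_forall_mass_information_density_le (hV : IsChannel V) (hs0 : 0 < s) (hs1 : s < 1)
    (hε : 0 < ε) (hs : -Real.log (1 - s) ≤ ε / 4) {ν : ℝ} (hν : 0 < ν) :
    ∃ n₀ : ℕ, ∀ n ≥ n₀, ∀ x : Fin n → X, mass (Wn V n x) (fun y =>
      Real.exp (n * (mutInf (typeOf x) V + ε)) * univOut s V n y < Wn V n x y) ≤ ν := by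
  set C : ℝ := ∑ a, ∑ b, |Real.log (V a b)| + -Real.log (s * (Fintype.card Y : ℝ)⁻¹)
  obtain ⟨n₁, hn₁⟩ := exists_mul_log_succ_le (Fintype.card X) (by positivity : 0 < ε / 4)
  obtain ⟨n₂, hn₂⟩ := exists_div_natCast_le (C ^ 2 / (ε / 2) ^ 2) hν
  refine ⟨max (max n₁ n₂) 1, fun n hn x => ?_⟩
  have hn0 : 0 < n := by omega
  have hdensity : ∀ a b,
      |Real.log (V a b) - Real.log (smooth s (outDist (typeOf x) V) b)| ≤ C := fun a b => by
    refine (abs_sub _ _).trans (add_le_add ?_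
      (abs_log_smooth_le hs0 hs1 (isPMF_outDist (isPMF_typeOf hn0 x) hV) b))
    exact (single_le_sum (f := fun b => |Real.log (V a b)|) (fun _ _ => abs_nonneg _)
      (mem_univ b)).trans (single_le_sum (f := fun a => ∑ b, |Real.log (V a b)|)
        (fun _ _ => sum_nonneg fun _ _ => abs_nonneg _) (mem_univ a))
  refine (mass_mono (isPMF_Wn hV x).1 fun y hy => ?_).trans
    ((mass_Wn_deviation_le hV hdensity (half_pos hε) hn0 x).trans (hn₂ n (by omega)))
  exact (le_sum_information_density hV hs0 hs1 hs hn0 (hn₁ n (by omega)) x hy).trans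
    (le_abs_self _)

/- The type of `x` is known only at the end of the transmission, so it is the letter counts of the
output, rather than its likelihood under the type, that are controlled by the martingale bound. -/
theorem exists_forall_mass_univOut_lt_le [Nonempty Y] (hV : IsChannel V) (hs0 : 0 < s)
    (hs1 : s < 1) (hε : 0 < ε) (hs : -Real.log (1 - s) ≤ ε / 4) {ν : ℝ} (hν : 0 < ν) :
    ∃ n₀ : ℕ, ∀ n ≥ n₀, ∀ Q : FBRule X Y, IsFBEncoder n Q → mass (pathLaw n Q V) (fun p =>
      univOut s V n p.2 < Real.exp (-(n * (entH (outDist (typeOf p.1) V) + ε)))) ≤ ν := by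
  set L : ℝ := -Real.log (s * (Fintype.card Y : ℝ)⁻¹)
  set κ : ℝ := ε / 2 / ((|L| + 1) * Fintype.card Y) with hκ
  have hκ0 : 0 < κ := by positivity
  have hκL : Fintype.card Y * (κ * L) ≤ ε / 2 := by
    calc Fintype.card Y * (κ * L) ≤ Fintype.card Y * (κ * (|L| + 1)) := by
          gcongr
          linarith [le_abs_self L]
      _ = ε / 2 := by rw [hκ]; field_simp
  obtain ⟨n₁, hn₁⟩ := exists_mul_log_succ_le (Fintype.card X) (by positivity : 0 < ε / 4)
  obtain ⟨n₂, hn₂⟩ := exists_div_natCast_le (Fintype.card Y / κ ^ 2) hν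
  refine ⟨max (max n₁ n₂) 1, fun n hn Q hQ => ?_⟩
  have hn0 : 0 < n := by omega
  have hpath := (isPMF_pathLaw hQ hV).1
  calc _ ≤ mass (pathLaw n Q V) (fun p => ∃ b, n * κ ≤ |letterDev V p.1 p.2 b|) :=
        mass_mono hpath fun p hp => by
          by_contra! hdev
          exact hp.not_ge
            (exp_le_univOut_of_letterDev_lt hV hs0 hs1 hs hn0 (hn₁ n (by omega)) hκL hdev)
    _ ≤ Fintype.card Y * (1 / κ ^ 2 / n) :=
        mass_exists_le_card_mul hpath fun b => mass_pathLaw_letterDev_le hV hQ b hκ0 hn0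
    _ = Fintype.card Y / κ ^ 2 / n := by ring
    _ ≤ ν := hn₂ n (by omega)

end Concentration

section Converse

/-- The rate requirement in the definition of achievability: `k` messages at blocklength `n` have
rate at least `R` if `R > 0`, and there is a single message if `R = 0`. -/
def HasRate (n k : ℕ) (R : ℝ) : Prop :=
  (0 < R → R ≤ (1 / n) * Real.log (Real.log k)) ∧ (R = 0 → k = 1)

theorem HasRate.exp_exp_le {n k : ℕ} {R : ℝ} (h : HasRate n k R) (hn : 0 < n) (hR : 0 < R) :
    Real.exp (Real.exp (n * R)) ≤ k := by
  have hn' : (0 : ℝ) < n := by exact_mod_cast hn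
  have hloglog : n * R ≤ Real.log (Real.log k) := by
    have := h.1 hR
    rwa [one_div, inv_mul_eq_div, le_div_iff₀' hn'] at this
  have hlog : 0 < Real.log k := by
    refine (Real.log_natCast_nonneg k).lt_of_ne fun h0 => ?_
    rw [← h0, Real.log_zero] at hloglog
    exact hloglog.not_gt (mul_pos hn' hR)
  have hk : (0 : ℝ) < k := by
    refine (Nat.cast_nonneg k).lt_of_ne fun h0 => ?_
    simp [← h0] at hlog
  rwa [← Real.le_log_iff_exp_le hk, ← Real.le_log_iff_exp_le hlog]

theorem HasRate.pos {n k : ℕ} {R : ℝ} (h : HasRate n k R) (hn : 0 < n) (hR : 0 ≤ R) : 0 < k := by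
  rcases hR.eq_or_lt with h0 | hR
  · exact (h.2 h0.symm).symm ▸ one_pos
  · exact_mod_cast (Real.exp_pos _).trans_le (h.exp_exp_le hn hR)

theorem exists_linear_mul_exp_le (a b c : ℝ) {R d : ℝ} (hR : 0 < R) (hd : 0 < d) :
    ∃ n₀ : ℕ, ∀ n ≥ n₀, a * n * Real.exp (n * (R - d)) + b * n + c ≤ Real.exp (n * R) := by
  have hlt : ∀ {t : ℝ}, 0 < t → Real.exp (-t) < 1 := fun ht =>
    Real.exp_lt_one_iff.2 (neg_neg_iff_pos.2 ht)
  have hlim := (((tendsto_self_mul_const_pow_of_lt_one (Real.exp_pos _).le (hlt hd)).const_mul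
    a).add ((tendsto_self_mul_const_pow_of_lt_one (Real.exp_pos _).le (hlt hR)).const_mul b)).add
    ((tendsto_pow_atTop_nhds_zero_of_lt_one (Real.exp_pos _).le (hlt hR)).const_mul c)
  simp only [mul_zero, add_zero] at hlim
  obtain ⟨n₀, hn₀⟩ := Filter.eventually_atTop.1 (hlim.eventually_le_const one_pos)
  refine ⟨n₀, fun n hn => ?_⟩
  have hscaled := mul_le_mul_of_nonneg_right (hn₀ n hn) (Real.exp_pos (n * R)).le
  simp only [← Real.exp_nat_mul, add_mul, mul_assoc, ← Real.exp_add, one_mul] at hscaled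
  have hsub : (n : ℝ) * -d + n * R = n * (R - d) := by ring
  have hcancel : (n : ℝ) * -R + n * R = 0 := by ring
  rw [hsub, hcancel, Real.exp_zero, mul_one, mul_one] at hscaled
  linarith

theorem le_one_div_eight_mul {c E r k : ℝ} (hc : c ≤ Real.exp E) (hE : E + 7 ≤ Real.exp r)
    (hk : Real.exp (Real.exp r) ≤ k) : c ≤ 1 / 8 * k := by
  have h8 : (8 : ℝ) ≤ Real.exp 7 := by linarith [Real.add_one_le_exp (7 : ℝ)]
  have hmul : Real.exp E * 8 ≤ k :=
    calc Real.exp E * 8 ≤ Real.exp E * Real.exp 7 := by gcongr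
      _ = Real.exp (E + 7) := (Real.exp_add _ _).symm
      _ ≤ k := (Real.exp_le_exp.2 hE).trans hk
  linarith

theorem exists_smoothing_parameter {ε : ℝ} (hε : 0 < ε) :
    ∃ s : ℝ, 0 < s ∧ s < 1 ∧ -Real.log (1 - s) ≤ ε :=
  ⟨1 - Real.exp (-ε), by simpa using hε, by linarith [Real.exp_pos (-ε)], by simp⟩

theorem card_filter_exp_neg_le {T : Type*} [Fintype T] {q : T → ℝ} (hq : IsPMF q) (h : ℝ) :
    (#{y | Real.exp (-h) ≤ q y} : ℝ) ≤ Real.exp h := by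
  have hmass : (#{y | Real.exp (-h) ≤ q y} : ℝ) * Real.exp (-h) ≤ 1 := by
    rw [← nsmul_eq_mul, ← hq.2]
    refine (card_nsmul_le_sum _ _ _ fun y hy => (mem_filter.1 hy).2).trans ?_
    exact sum_le_sum_of_subset_of_nonneg (subset_univ _) fun y _ _ => hq.1 y
  calc (#{y | Real.exp (-h) ≤ q y} : ℝ)
      = #{y | Real.exp (-h) ≤ q y} * Real.exp (-h) * Real.exp h := by
        rw [mul_assoc, ← Real.exp_add, neg_add_cancel, Real.exp_zero, mul_one]
    _ ≤ Real.exp h := mul_le_of_le_one_left (Real.exp_pos h).le hmass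

variable {X Y : Type*} [Fintype X] [Fintype Y] {V : X → Y → ℝ}
  {s R δ : ℝ} {n k : ℕ}

theorem card_entH_lt_le_of_mixture {l : ℕ} [NeZero l] (hV : IsChannel V)
    {Q : Fin k → Fin l → FBRule X Y} {D : Fin k → Finset (Fin n → Y)}
    (hQ : ∀ m j, IsFBEncoder n (Q m j)) (hconc : ∀ Q : FBRule X Y, IsFBEncoder n Q →
      mass (pathLaw n Q V) (fun p => univOut s V n p.2 <
        Real.exp (-(n * (entH (outDist (typeOf p.1) V) + δ)))) ≤ 1 / 32)
    (h1 : ∀ m, mass (mixture fun j => pathLaw n (Q m j) V) (fun p => p.2 ∉ D m) ≤ 1 / 32)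
    (h2 : ∀ m m', m ≠ m' →
      mass (mixture fun j => pathLaw n (Q m j) V) (fun p => p.2 ∈ D m') ≤ 1 / 32) :
    #{m | 3 / 32 < mass (mixture fun j => pathLaw n (Q m j) V)
        fun p => entH (outDist (typeOf p.1) V) < R - 2 * δ}
      ≤ 2 ^ #{y | Real.exp (-(n * (R - δ))) ≤ univOut s V n y} := by
  have hpath m j := isPMF_pathLaw (hQ m j) hV
  rw [show (3 / 32 : ℝ) = 1 / 32 + 1 / 32 + 1 / 32 by norm_num]
  refine card_le_two_pow_of_concentrated (fun m => (isPMF_mixture (hpath m)).1) Prod.snd _ D _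
    h1 h2 fun m => mass_mixture_le fun j => ?_
  refine (mass_mono (hpath m j).1 fun p hp => ?_).trans (hconc _ (hQ m j))
  obtain ⟨hent, hout⟩ := hp
  rw [mem_filter_univ, not_le] at hout
  refine hout.trans_le ?_
  gcongr
  linarith

variable [Nonempty X] [Nonempty Y]

theorem card_mutInf_lt_le_of_isIDCode (hV : IsChannel V) (hs0 : 0 < s) (hs1 : s < 1)
    (hn : 0 < n) (hconc : ∀ x : Fin n → X, mass (Wn V n x) (fun y =>
      Real.exp (n * (mutInf (typeOf x) V + δ)) * univOut s V n y < Wn V n x y) ≤ 1 / 32)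
    {q : Fin k → (Fin n → X) → ℝ} {D : Fin k → Finset (Fin n → Y)}
    (hcode : IsIDCode n V q D (1 / 32) (1 / 32)) :
    #{m | 1 / 4 < mass (q m) fun x => mutInf (typeOf x) V < R - 2 * δ}
      ≤ Fintype.card (Fin n → X) ^ ⌈1024 * Real.exp (n * (R - δ))⌉₊ := by
  have hcover := Nat.le_ceil (1024 * Real.exp (n * (R - δ)))
  obtain ⟨h1, h2⟩ := idCodeErr_iff.1 hcode.2
  refine card_le_of_covering hcode.1 (isChannel_Wn hV n) D _ (isPMF_univOut hs0 hs1 hV hn)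
    (univOut_pos hs0 hs1 hV hn) (Real.exp_pos (n * (R - δ))).le (c := 1 / 32) (ν := 1 / 32)
    (by norm_num) (Nat.ceil_pos.2 (by positivity)) (by linarith) h1 h2 (fun x hx => ?_)
    (by norm_num) (by norm_num)
  refine le_trans (mass_mono (isPMF_Wn hV x).1 fun y hy => lt_of_le_of_lt ?_ hy) (hconc x)
  have hpos := univOut_pos hs0 hs1 hV hn y
  gcongr
  linarith

/- By soft covering, the messages using codewords of information at most `R - δ` are determined by
the `exp (n (R - δ / 2))` codewords of an approximating list. -/
theorem exists_forall_mass_mutInf_lt_le (hV : IsChannel V) (hR : 0 ≤ R) (hδ : 0 < δ) :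
    ∃ n₀ : ℕ, ∀ n ≥ n₀, ∀ (k : ℕ) (q : Fin k → (Fin n → X) → ℝ) (D : Fin k → Finset (Fin n → Y)),
      IsIDCode n V q D (1 / 32) (1 / 32) → HasRate n k R →
      mass (mixture q) (fun x => mutInf (typeOf x) V < R - δ) ≤ 3 / 8 := by
  rcases hR.eq_or_lt with rfl | hR
  · refine ⟨1, fun n hn k q D _ _ => ?_⟩
    rw [mass_eq_zero _ fun x => not_lt.2 ?_]
    · norm_num
    · linarith [mutInf_nonneg (isPMF_typeOf hn x) hV]
  obtain ⟨s, hs0, hs1, hs⟩ := exists_smoothing_parameter (by positivity : 0 < δ / 2 / 4)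
  obtain ⟨n₁, hconc⟩ := exists_forall_mass_information_density_le hV hs0 hs1 (half_pos hδ) hs
    (by norm_num : (0 : ℝ) < 1 / 32)
  set L := Real.log (Fintype.card X)
  have hL0 : 0 ≤ L := Real.log_natCast_nonneg _
  obtain ⟨n₂, hgrowth⟩ := exists_linear_mul_exp_le (1024 * L) L 7 hR (half_pos hδ)
  refine ⟨max (max n₁ n₂) 1, fun n hn k q D hcode hrate => ?_⟩
  have hn0 : 0 < n := by omega
  have : Nonempty (Fin k) := Fin.pos_iff_nonempty.1 (hrate.pos hn0 hR.le)
  have hcard := card_mutInf_lt_le_of_isIDCode (R := R) hV hs0 hs1 hn0 (hconc n (by omega)) hcode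
  rw [mul_div_cancel₀ δ two_ne_zero] at hcard
  set N := ⌈1024 * Real.exp (n * (R - δ / 2))⌉₊
  refine (mass_mixture_le_add_card hcode.1 (by norm_num) (c := 1 / 8) ?_).trans
    (by norm_num : (1 : ℝ) / 4 + 1 / 8 ≤ 3 / 8)
  rw [Fintype.card_fin]
  refine le_one_div_eight_mul (E := N * (n * L)) ?_ ?_ (hrate.exp_exp_le hn0 hR)
  · have hX : (0 : ℝ) < Fintype.card X := by exact_mod_cast Fintype.card_pos
    rw [Real.exp_nat_mul, Real.exp_nat_mul, Real.exp_log hX]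
    exact_mod_cast hcard.trans_eq (by rw [Fintype.card_fun, Fintype.card_fin])
  · have hN : (N : ℝ) ≤ 1024 * Real.exp (n * (R - δ / 2)) + 1 :=
      (Nat.ceil_lt_add_one (by positivity)).le
    linarith [mul_le_mul_of_nonneg_right hN (mul_nonneg (Nat.cast_nonneg n) hL0),
      hgrowth n (by omega)]

/- With probability close to one the output falls in a set of `exp (n (R - δ / 2))` sequences when
the input uses types of output entropy at most `R - δ`, and distinct messages have distinct traces
on this set. -/
theorem exists_forall_mass_entH_lt_le (hV : IsChannel V) (hR : 0 ≤ R) (hδ : 0 < δ) :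
    ∃ n₀ : ℕ, ∀ n ≥ n₀, ∀ (k l : ℕ) (Q : Fin k → Fin l → FBRule X Y)
      (D : Fin k → Finset (Fin n → Y)), 0 < l → (∀ m j, IsFBEncoder n (Q m j)) →
      (∀ m, mass (mixture fun j => pathLaw n (Q m j) V) (fun p => p.2 ∉ D m) ≤ 1 / 32) →
      (∀ m m', m ≠ m' →
        mass (mixture fun j => pathLaw n (Q m j) V) (fun p => p.2 ∈ D m') ≤ 1 / 32) →
      HasRate n k R →
      mass (mixture fun m => mixture fun j => pathLaw n (Q m j) V)
        (fun p => entH (outDist (typeOf p.1) V) < R - δ) ≤ 1 / 4 := by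
  rcases hR.eq_or_lt with rfl | hR
  · refine ⟨1, fun n hn k l Q D _ _ _ _ _ => ?_⟩
    rw [mass_eq_zero _ fun p => not_lt.2 ?_]
    · norm_num
    · linarith [entH_nonneg (isPMF_outDist (isPMF_typeOf hn p.1) hV)]
  obtain ⟨s, hs0, hs1, hs⟩ := exists_smoothing_parameter (by positivity : 0 < δ / 2 / 4)
  obtain ⟨n₁, hconc⟩ := exists_forall_mass_univOut_lt_le hV hs0 hs1 (half_pos hδ) hs
    (by norm_num : (0 : ℝ) < 1 / 32)
  obtain ⟨n₂, hgrowth⟩ := exists_linear_mul_exp_le 1 0 7 hR (half_pos hδ)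
  refine ⟨max (max n₁ n₂) 1, fun n hn k l Q D hl hQ h1 h2 hrate => ?_⟩
  have hn0 : 0 < n := by omega
  have hn1 : (1 : ℝ) ≤ n := by exact_mod_cast hn0
  have : Nonempty (Fin k) := Fin.pos_iff_nonempty.1 (hrate.pos hn0 hR.le)
  have : NeZero l := ⟨hl.ne'⟩
  have hcard := card_entH_lt_le_of_mixture (R := R) hV hQ (hconc n (by omega)) h1 h2
  rw [mul_div_cancel₀ δ two_ne_zero] at hcard
  set B : Finset (Fin n → Y) := {y | Real.exp (-(n * (R - δ / 2))) ≤ univOut s V n y}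
  have hB : (#B : ℝ) ≤ Real.exp (n * (R - δ / 2)) :=
    card_filter_exp_neg_le (isPMF_univOut hs0 hs1 hV hn0) _
  refine (mass_mixture_le_add_card (fun m => isPMF_mixture fun j => isPMF_pathLaw (hQ m j) hV)
    (by norm_num) (c := 1 / 8) ?_).trans (by norm_num : (3 : ℝ) / 32 + 1 / 8 ≤ 1 / 4)
  rw [Fintype.card_fin]
  refine le_one_div_eight_mul (E := #B) ?_ ?_ (hrate.exp_exp_le hn0 hR)
  · calc _ ≤ (2 : ℝ) ^ #B := by exact_mod_cast hcard
      _ ≤ Real.exp 1 ^ #B := by gcongr; linarith [Real.add_one_le_exp (1 : ℝ)]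
      _ = Real.exp #B := Real.exp_one_pow _
  · nlinarith [Real.exp_pos (n * (R - δ / 2)), hgrowth n (by omega)]

end Converse

section OuterBound

variable {X Y Z : Type*} [Fintype X] [Fintype Y] [Fintype Z] {W : X → Y → Z → ℝ}

/-- The claimed identification capacity region: the rate pairs `(R_𝒴, R_𝒵)` with
`R_𝒴 ≤ H(P W_𝒴) · 𝟙{max I(·, W_𝒴) > 0}` and `R_𝒵 ≤ I(P, W_𝒵)` for some input law `P`. -/
def capacityRegion (W : X → Y → Z → ℝ) : Set (ℝ × ℝ) :=
  {p | 0 ≤ p.1 ∧ 0 ≤ p.2 ∧ ∃ P : X → ℝ, IsPMF P ∧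
    p.1 ≤ (if ∃ P' : X → ℝ, IsPMF P' ∧ 0 < mutInf P' (margY W) then
      entH (outDist P (margY W)) else 0) ∧
    p.2 ≤ mutInf P (margZ W)}

theorem mass_pathLaw_snd_of_forall_eq {V : X → Y → ℝ} (hconst : ∀ a a', V a = V a') {n : ℕ}
    {Q : FBRule X Y} (hQ : IsFBEncoder n Q) (x₀ : Fin n → X) (p : (Fin n → Y) → Prop) :
    mass (pathLaw n Q V) (fun a => p a.2) = mass (Wn V n x₀) p := by
  have hWn : ∀ x, Wn V n x = Wn V n x₀ := fun x => by
    rw [Wn_eq_piW, Wn_eq_piW, funext fun i => hconst (x i) (x₀ i)]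
  have hmarg : ∀ y, ∑ x, pathLaw n Q V (x, y) = Wn V n x₀ y := fun y => by
    simp only [pathLaw, hWn]
    rw [← sum_mul, sum_encW hQ, one_mul]
  simp only [mass_eq_sum_ite, Fintype.sum_prod_type_right]
  refine sum_congr rfl fun y _ => ?_
  by_cases hy : p y <;> simp [hy, hmarg]

variable [Nonempty X]

theorem FBAchievable.fst_eq_zero (hW : IsBC W)
    (hind : ∀ x y z, W x y z = margY W x y * margZ W x z) {Rp : ℝ × ℝ} (h : FBAchievable W Rp)
    (hconst : ∀ a a', margY W a = margY W a') : Rp.1 = 0 := by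
  obtain ⟨hR1, hR2, hach⟩ := h
  by_contra hne
  have hpos : 0 < Rp.1 := hR1.lt_of_ne' hne
  obtain ⟨n₀, hcodes⟩ := hach (1 / 4) (1 / 4) 1 1 (by norm_num) (by norm_num) one_pos one_pos
  set n := max n₀ 1
  have hn0 : 0 < n := by omega
  obtain ⟨kY, kZ, Q, DY, DZ, hcode, hrateY, hrateZ⟩ := hcodes n (by omega)
  obtain ⟨hQ, hmiss, hfalse, -⟩ := (isFBIDCode_iff hW hind).1 hcode
  have : NeZero kZ := ⟨(HasRate.pos hrateZ hn0 hR2).ne'⟩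
  have hkY : 1 < kY := by
    have hexp := HasRate.exp_exp_le hrateY hn0 hpos
    exact_mod_cast (Real.one_lt_exp_iff.2 (Real.exp_pos _)).trans_le hexp
  set x₀ : Fin n → X := fun _ => Classical.arbitrary X
  have hlaw : ∀ my (p : (Fin n → Y) → Prop),
      mass (mixture fun mz => pathLaw n (Q my mz) (margY W)) (fun a => p a.2)
        = mass (Wn (margY W) n x₀) p := fun my p => by
    simp only [mass_mixture, mass_pathLaw_snd_of_forall_eq hconst (hQ my _) x₀, sum_const,
      card_univ, nsmul_eq_mul]
    exact inv_mul_cancel_left₀ (by simp [NeZero.ne]) _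
  have hmiss₀ := hmiss ⟨0, by omega⟩
  have hfalse₁ := hfalse ⟨1, hkY⟩ ⟨0, by omega⟩ (by simp)
  rw [hlaw _ (· ∉ DY _), (isPMF_Wn (isChannel_margY hW) x₀).mass_not] at hmiss₀
  rw [hlaw _ (· ∈ DY _)] at hfalse₁
  linarith

variable [Nonempty Y] [Nonempty Z]

/- Both bad events have probability bounded away from one, so some transmitted sequence avoids them
jointly; its type is the required law. -/
theorem FBAchievable.exists_isPMF (hW : IsBC W)
    (hind : ∀ x y z, W x y z = margY W x y * margZ W x z) {Rp : ℝ × ℝ} (h : FBAchievable W Rp)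
    {δ : ℝ} (hδ : 0 < δ) :
    ∃ P, IsPMF P ∧ Rp.1 ≤ entH (outDist P (margY W)) + δ ∧ Rp.2 ≤ mutInf P (margZ W) + δ := by
  obtain ⟨hR1, hR2, hach⟩ := h
  have hVY := isChannel_margY hW
  obtain ⟨n₀, hcodes⟩ := hach (1 / 32) (1 / 32) (1 / 32) (1 / 32) (by norm_num) (by norm_num)
    (by norm_num) (by norm_num)
  obtain ⟨n₁, hconvY⟩ := exists_forall_mass_entH_lt_le hVY hR1 hδ
  obtain ⟨n₂, hconvZ⟩ := exists_forall_mass_mutInf_lt_le (isChannel_margZ hW) hR2 hδ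
  set n := max (max n₀ (max n₁ n₂)) 1
  have hn0 : 0 < n := by omega
  obtain ⟨kY, kZ, Q, DY, DZ, hcode, hrateY, hrateZ⟩ := hcodes n (by omega)
  obtain ⟨hQ, hmissY, hfalseY, herrZ⟩ := (isFBIDCode_iff hW hind).1 hcode
  have hkZ : 0 < kZ := HasRate.pos hrateZ hn0 hR2
  have : NeZero kY := ⟨(HasRate.pos hrateY hn0 hR1).ne'⟩
  have : NeZero kZ := ⟨hkZ.ne'⟩
  have hpath my mz := isPMF_pathLaw (hQ my mz) hVY
  set J := mixture fun my => mixture fun mz => pathLaw n (Q my mz) (margY W)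
  have hJ : IsPMF J := isPMF_mixture fun my => isPMF_mixture (hpath my)
  have hY : mass J (fun p => entH (outDist (typeOf p.1) (margY W)) < Rp.1 - δ) ≤ 1 / 4 :=
    hconvY n (by omega) kY kZ Q DY hkZ hQ hmissY hfalseY hrateY
  have hZ : mass J (fun p => mutInf (typeOf p.1) (margZ W) < Rp.2 - δ) ≤ 3 / 8 := by
    rw [mass_mixture_comm]
    simpa only [mass_mixture, mass_mapLaw] using hconvZ n (by omega) kZ _ DZ
      ⟨fun mz => isPMF_mixture fun my => isPMF_mapLaw _ (hpath my mz), herrZ⟩ hrateZ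
  obtain ⟨p, hp⟩ := hJ.exists_of_mass_not_lt_one (p := fun p =>
    ¬ (entH (outDist (typeOf p.1) (margY W)) < Rp.1 - δ ∨
      mutInf (typeOf p.1) (margZ W) < Rp.2 - δ)) <| by
    simp only [not_not]
    linarith [mass_or_le hJ.1 (fun p => entH (outDist (typeOf p.1) (margY W)) < Rp.1 - δ)
      (fun p => mutInf (typeOf p.1) (margZ W) < Rp.2 - δ)]
  rw [not_or, not_lt, not_lt] at hp
  exact ⟨typeOf p.1, isPMF_typeOf hn0 p.1, by linarith [hp.1], by linarith [hp.2]⟩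

theorem closure_fbAchievable_subset (hW : IsBC W)
    (hind : ∀ x y z, W x y z = margY W x y * margZ W x z) :
    closure {p : ℝ × ℝ | FBAchievable W p} ⊆ capacityRegion W := by
  intro p hp
  have hnonneg : 0 ≤ p := closure_minimal (t := Set.Ici 0)
    (fun q hq => Prod.le_def.2 ⟨hq.1, hq.2.1⟩) isClosed_Ici hp
  have happrox : ∀ δ > 0, ∃ q, FBAchievable W q ∧ ∃ P, IsPMF P ∧ p.1 ≤ q.1 + δ ∧
      p.1 ≤ entH (outDist P (margY W)) + δ ∧ p.2 ≤ mutInf P (margZ W) + δ := by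
    intro δ hδ
    obtain ⟨q, hq, hdist⟩ := Metric.mem_closure_iff.1 hp (δ / 2) (half_pos hδ)
    obtain ⟨P, hP, hPY, hPZ⟩ := hq.exists_isPMF hW hind (half_pos hδ)
    rw [Prod.dist_eq, max_lt_iff, Real.dist_eq, Real.dist_eq] at hdist
    have h1 := (le_abs_self _).trans_lt hdist.1
    have h2 := (le_abs_self _).trans_lt hdist.2
    exact ⟨q, hq, P, hP, by linarith, by linarith, by linarith⟩
  refine ⟨hnonneg.1, hnonneg.2, ?_⟩
  have hcontZ := continuousOn_mutInf (isChannel_margZ hW)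
  split_ifs with hinf
  · refine exists_isPMF_of_forall_approx
      (continuous_entH.comp (continuous_outDist _)).continuousOn hcontZ fun δ hδ => ?_
    obtain ⟨q, -, P, hP, -, hPY, hPZ⟩ := happrox δ hδ
    exact ⟨P, hP, hPY, hPZ⟩
  · refine exists_isPMF_of_forall_approx continuousOn_const hcontZ fun δ hδ => ?_
    obtain ⟨q, hq, P, hP, hpq, -, hPZ⟩ := happrox δ hδ
    rw [exists_mutInf_pos_iff (isChannel_margY hW)] at hinf
    push Not at hinf
    exact ⟨P, hP, by rwa [hq.fst_eq_zero hW hind hinf] at hpq, hPZ⟩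

end OuterBound

section RandomCoding

variable {A S T M : Type*} [Fintype A] [Fintype S] [Fintype T] [Fintype M]

/-- The law `p` has point masses at most `1 / K` outside an event of probability `ν`: its
`ν`-smooth min-entropy is at least `log K`. -/
def NearlyFlat (p : S → ℝ) (K ν : ℝ) : Prop := mass p (fun y => K⁻¹ < p y) ≤ ν

theorem NearlyFlat.mono {p : S → ℝ} (hp : IsPMF p) {K K' ν : ℝ} (h : NearlyFlat p K ν)
    (hK' : 0 < K') (hKK' : K' ≤ K) : NearlyFlat p K' ν :=
  (mass_mono hp.1 fun _ hy => (inv_anti₀ hK' hKK').trans_lt hy).trans h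

theorem mass_exists_ne_le {w : A → ℝ} (hw : ∀ a, 0 ≤ w a) {p : M → M → A → Prop} {c : ℝ}
    (hc : 0 ≤ c) (h : ∀ m m', m ≠ m' → mass w (p m m') ≤ c) :
    mass w (fun a => ∃ i : M × M, i.1 ≠ i.2 ∧ p i.1 i.2 a) ≤ (Fintype.card M : ℝ) ^ 2 * c := by
  have hpair : ∀ i : M × M, mass w (fun a => i.1 ≠ i.2 ∧ p i.1 i.2 a) ≤ c := fun i => by
    by_cases hi : i.1 = i.2
    · exact (mass_eq_zero w fun a ha => ha.1 hi).trans_le hc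
    · exact (mass_mono hw fun a ha => ha.2).trans (h _ _ hi)
  simpa [sq] using mass_exists_le_card_mul hw hpair

section Independence

variable [DecidableEq M]

theorem mass_piW_apply {w : M → A → ℝ} (hw : ∀ i, IsPMF (w i)) (j : M) (q : A → Prop) :
    mass (piW w) (fun f => q (f j)) = mass (w j) q := by
  rw [mass_eq_sum_mul_ite, mass_eq_sum_mul_ite]
  exact sum_piW_mul_apply hw j fun a => if q a then 1 else 0

theorem mass_piW_apply₂_le {w : M → A → ℝ} (hw : ∀ i, IsPMF (w i)) {j k : M} (hjk : j ≠ k)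
    {q : A → A → Prop} {c : ℝ} (h : ∀ a, mass (w k) (q a) ≤ c) :
    mass (piW w) (fun f => q (f j) (f k)) ≤ c := by
  rw [mass_eq_sum_mul_ite, sum_piW_mul_apply₂ hw hjk fun a b => if q a b then 1 else 0]
  simp only [← mass_eq_sum_mul_ite]
  calc _ ≤ ∑ a, w j a * c := sum_le_sum fun a _ => mul_le_mul_of_nonneg_left (h a) ((hw j).1 a)
    _ = c := by rw [← sum_mul, (hw j).2, one_mul]

end Independence

theorem mass_piW_collision_le {p : S → ℝ} (hp : IsPMF p) {C : Type*} [Fintype C] [Nonempty C]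
    {K lam : ℝ} (hK : 0 < K) (hlam : 4 ≤ lam * Fintype.card C) (a : S → C) :
    mass (piW fun (_ : S) (_ : C) => (Fintype.card C : ℝ)⁻¹)
      (fun b => lam < mass p (fun y => p y ≤ K⁻¹ ∧ a y = b y)) ≤ Real.exp (-(K * lam / 2)) := by
  have hC : (0 : ℝ) < Fintype.card C := by exact_mod_cast Fintype.card_pos
  set u : S → C → ℝ := fun y b => K * if p y ≤ K⁻¹ ∧ a y = b then p y else 0 with hu
  have hu0 : ∀ y b, 0 ≤ u y b := fun y b => by
    have := hp.1 y
    simp only [hu]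
    split_ifs <;> positivity
  have hu1 : ∀ y b, u y b ≤ 1 := fun y b => by
    simp only [hu]
    split_ifs with h
    · simpa [hK.ne'] using mul_le_mul_of_nonneg_left h.1 hK.le
    · simp
  have hmean : ∑ y, ∑ b, (Fintype.card C : ℝ)⁻¹ * u y b ≤ K * lam / 4 := by
    calc _ ≤ ∑ y, (Fintype.card C : ℝ)⁻¹ * (K * p y) := by
          refine sum_le_sum fun y _ => ?_
          rw [← mul_sum, ← mul_sum]
          have := hp.1 y
          gcongr
          by_cases hy : p y ≤ K⁻¹ <;> simp [hy, this]
      _ = (Fintype.card C : ℝ)⁻¹ * K := by rw [← mul_sum, ← mul_sum, hp.2, mul_one]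
      _ ≤ K * lam / 4 := by
          rw [inv_mul_le_iff₀ hC]
          nlinarith
  have hmass : ∀ b : S → C, mass p (fun y => p y ≤ K⁻¹ ∧ a y = b y) = K⁻¹ * ∑ y, u y (b y) := by
    intro b
    rw [← mul_sum, inv_mul_cancel_left₀ hK.ne', mass, sum_filter]
    refine sum_congr rfl fun y _ => ?_
    congr
  have hch := mass_piW_chernoff_le (fun _ : S => isPMF_const_inv_card) hu0 hu1 (K * lam) hmean
  simp only [hmass, lt_inv_mul_iff₀ hK]
  rwa [show 2 * (K * lam / 4) - K * lam = -(K * lam / 2) by ring] at hch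

theorem exists_hash {p : S → ℝ} (hp : IsPMF p) {C : Type*} [Fintype C] [Nonempty C]
    {K lam ν : ℝ} (hflat : NearlyFlat p K ν) (hK : 0 < K) (hlam : 4 ≤ lam * Fintype.card C)
    (hM : (Fintype.card M : ℝ) ^ 2 * Real.exp (-(K * lam / 2)) < 1) :
    ∃ F : M → S → C, ∀ m m', m ≠ m' → mass p (fun y => F m y = F m' y) ≤ lam + ν := by
  have hw : IsPMF (piW fun (_ : S) (_ : C) => (Fintype.card C : ℝ)⁻¹) :=
    isPMF_piW fun _ => isPMF_const_inv_card
  have hW := isPMF_piW fun _ : M => hw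
  obtain ⟨F, hF⟩ : ∃ F : M → S → C, ¬ ∃ i : M × M, i.1 ≠ i.2 ∧
      lam < mass p (fun y => p y ≤ K⁻¹ ∧ F i.1 y = F i.2 y) := by
    refine hW.exists_of_mass_not_lt_one ?_
    simp only [not_not]
    exact (mass_exists_ne_le hW.1 (Real.exp_nonneg _) fun m m' hne =>
      mass_piW_apply₂_le (fun _ => hw) hne (mass_piW_collision_le hp hK hlam)).trans_lt hM
  push Not at hF
  refine ⟨F, fun m m' hne => ?_⟩
  calc mass p (fun y => F m y = F m' y)
      ≤ mass p (fun y => (p y ≤ K⁻¹ ∧ F m y = F m' y) ∨ K⁻¹ < p y) :=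
        mass_mono hp.1 fun y hy => (le_or_gt (p y) K⁻¹).imp_left fun h => ⟨h, hy⟩
    _ ≤ lam + ν := (mass_or_le hp.1 _ _).trans (add_le_add (hF (m, m') hne) hflat)

theorem mass_piW_average_le [DecidableEq M] [Nonempty M] {w u : A → ℝ} (hw : IsPMF w)
    (h0 : ∀ a, 0 ≤ u a) (h1 : ∀ a, u a ≤ 1) {b : ℝ} (hmean : ∑ a, w a * u a ≤ b / 4) :
    mass (piW fun _ : M => w) (fun f => b < (Fintype.card M : ℝ)⁻¹ * ∑ m, u (f m))
      ≤ Real.exp (-(Fintype.card M * b / 2)) := by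
  have hM : (0 : ℝ) < Fintype.card M := by exact_mod_cast Fintype.card_pos
  have h := mass_piW_chernoff_le (fun _ : M => hw) (fun _ => h0) (fun _ => h1)
    (Fintype.card M * b) (μ := Fintype.card M * (b / 4)) (by simpa using by gcongr)
  simp only [lt_inv_mul_iff₀ hM]
  rwa [show 2 * (Fintype.card M * (b / 4)) - Fintype.card M * b = -(Fintype.card M * b / 2) by
    ring] at h

variable {N : ℕ} {P : A → ℝ}

theorem sum_typeOf_mul (hN : 0 < N) (c : Fin N → A) (g : A → ℝ) :
    ∑ a, typeOf c a * g a = (N : ℝ)⁻¹ * ∑ j, g (c j) := by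
  rw [← natCast_mul_sum_typeOf_mul hN, inv_mul_cancel_left₀ (by positivity)]

theorem mass_codeword_average_le (hN : 0 < N) (hP : IsPMF P) {u : A → ℝ} (h0 : ∀ a, 0 ≤ u a)
    (h1 : ∀ a, u a ≤ 1) {b : ℝ} (hmean : ∑ a, P a * u a ≤ b / 4) :
    mass (piW fun _ : Fin N => P) (fun c => b < ∑ a, typeOf c a * u a)
      ≤ Real.exp (-(N * b / 2)) := by
  have : NeZero N := ⟨hN.ne'⟩
  simpa only [sum_typeOf_mul hN, Fintype.card_fin] using
    mass_piW_average_le (M := Fin N) hP h0 h1 hmean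

theorem mass_codebook_average_le [Nonempty M] (hN : 0 < N) (hP : IsPMF P) {u : A → ℝ}
    (h0 : ∀ a, 0 ≤ u a) (h1 : ∀ a, u a ≤ 1) {b : ℝ} (hmean : ∑ a, P a * u a ≤ b / 4) :
    mass (piW fun _ : M => piW fun _ : Fin N => P)
      (fun F => b < (Fintype.card M : ℝ)⁻¹ * ∑ m, ∑ a, typeOf (F m) a * u a)
      ≤ Real.exp (-(Fintype.card M * b / 2)) := by
  refine mass_piW_average_le (isPMF_piW fun _ : Fin N => hP)
    (u := fun c => ∑ a, typeOf c a * u a)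
    (fun c => sum_nonneg fun a _ => mul_nonneg ((isPMF_typeOf hN c).1 a) (h0 a)) (fun c => ?_) ?_
  · rw [← (isPMF_typeOf hN c).2]
    exact sum_le_sum fun a _ => mul_le_of_le_one_right ((isPMF_typeOf hN c).1 a) (h1 a)
  · simpa only [sum_typeOf_mul hN, sum_piW_mul_avg hP hN] using hmean

section OneMessage

variable {V : A → S → ℝ} {good : A → S → Prop} {lam : ℝ}

theorem mass_codeword_miss_le (hN : 0 < N) (hP : IsPMF P) (hV : IsChannel V)
    (hgood : ∑ x, P x * mass (V x) (fun z => ¬ good x z) ≤ lam / 4) :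
    mass (piW fun _ : Fin N => P)
      (fun c => lam < mass (outDist (typeOf c) V) (fun z => ¬ ∃ j, good (c j) z))
      ≤ Real.exp (-(N * lam / 2)) := by
  refine (mass_mono (isPMF_piW fun _ => hP).1 fun c hc => ?_).trans
    (mass_codeword_average_le hN hP (fun x => mass_nonneg (hV.1 x) _)
      (fun x => IsPMF.mass_le_one ⟨hV.1 x, hV.2 x⟩ _) hgood)
  refine hc.trans_le ?_
  rw [mass_outDist, sum_typeOf_mul hN, sum_typeOf_mul hN]
  gcongr with j
  exact mass_mono (hV.1 _) fun z hz hj => hz ⟨j, hj⟩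

theorem mass_codeword_false_le (hN : 0 < N) (hP : IsPMF P) (hV : IsChannel V) {θ : ℝ}
    (hgood : ∀ x, mass (outDist P V) (good x) ≤ θ) (hθ : N * θ ≤ lam / 4) (b : Fin N → A) :
    mass (piW fun _ : Fin N => P)
      (fun c => lam < mass (outDist (typeOf c) V) (fun z => ∃ j, good (b j) z))
      ≤ Real.exp (-(N * lam / 2)) := by
  simp only [mass_outDist]
  refine mass_codeword_average_le hN hP (fun x => mass_nonneg (hV.1 x) _)
    (fun x => IsPMF.mass_le_one ⟨hV.1 x, hV.2 x⟩ _) ?_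
  rw [← mass_outDist]
  calc mass (outDist P V) (fun z => ∃ j, good (b j) z)
      ≤ Fintype.card (Fin N) * θ :=
        mass_exists_le_card_mul (isPMF_outDist hP hV).1 fun j => hgood (b j)
    _ = N * θ := by rw [Fintype.card_fin]
    _ ≤ lam / 4 := hθ

end OneMessage

theorem mass_not_nearlyFlat_le [Nonempty M] (hN : 0 < N) (hP : IsPMF P) {U : A → T → ℝ}
    (hU : IsChannel U) {K ν : ℝ} (hflat : NearlyFlat (outDist P U) (4 * K) (ν / 4)) :
    mass (piW fun _ : M => piW fun _ : Fin N => P)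
      (fun F => ¬ NearlyFlat (mixture fun m => outDist (typeOf (F m)) U) K ν)
      ≤ Fintype.card T * Real.exp (-(Fintype.card M * K⁻¹ / 2))
        + Real.exp (-(Fintype.card M * ν / 2)) := by
  have hW := isPMF_piW fun _ : M => isPMF_piW fun _ : Fin N => hP
  set p : (M → Fin N → A) → T → ℝ := fun F => mixture fun m => outDist (typeOf (F m)) U with hp
  set B : T → Prop := fun y => outDist P U y ≤ K⁻¹ / 4
  have hpoint : ∀ y, mass (piW fun _ : M => piW fun _ : Fin N => P)
      (fun F => B y ∧ K⁻¹ < p F y) ≤ Real.exp (-(Fintype.card M * K⁻¹ / 2)) := fun y => by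
    by_cases hy : B y
    · have h := mass_codebook_average_le (M := M) hN hP (u := fun x => U x y)
        (fun x => hU.1 x y) (fun x => IsPMF.le_one ⟨hU.1 x, hU.2 x⟩ y) hy
      refine (mass_mono hW.1 fun F hF => ?_).trans h
      simpa only [hp, mixture, outDist, ← mul_sum] using hF.2
    · exact (mass_eq_zero _ fun F hF => hy hF.1).trans_le (Real.exp_nonneg _)
  have htail : mass (piW fun _ : M => piW fun _ : Fin N => P)
      (fun F => ν < mass (p F) (fun y => ¬ B y)) ≤ Real.exp (-(Fintype.card M * ν / 2)) := by
    simp only [hp, mass_mixture, mass_outDist]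
    refine mass_codebook_average_le hN hP (fun x => mass_nonneg (hU.1 x) _)
      (fun x => IsPMF.mass_le_one ⟨hU.1 x, hU.2 x⟩ _) ?_
    rw [← mass_outDist]
    refine le_trans (mass_mono (isPMF_outDist hP hU).1 fun y hy => ?_) hflat
    rw [mul_inv, inv_mul_eq_div]
    exact not_le.1 hy
  have hsub : ∀ F, ¬ NearlyFlat (p F) K ν →
      (∃ y, B y ∧ K⁻¹ < p F y) ∨ ν < mass (p F) fun y => ¬ B y := fun F hF => by
    by_contra hgood
    push Not at hgood
    have hpF : IsPMF (p F) := isPMF_mixture fun m => isPMF_outDist (isPMF_typeOf hN _) hU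
    exact hF ((mass_mono hpF.1 fun y hy hBy => (hgood.1 y hBy).not_gt hy).trans hgood.2)
  have hexists : mass (piW fun _ : M => piW fun _ : Fin N => P) (fun F => ∃ y, B y ∧ K⁻¹ < p F y)
      ≤ Fintype.card T * Real.exp (-(Fintype.card M * K⁻¹ / 2)) :=
    mass_exists_le_card_mul hW.1 hpoint
  exact (mass_mono hW.1 hsub).trans ((mass_or_le hW.1 _ _).trans (add_le_add hexists htail))

theorem mass_density_gt_le {q v : S → ℝ} (hv : IsPMF v) {γ : ℝ} (hγ : 0 < γ) :
    mass q (fun z => γ * q z < v z) ≤ γ⁻¹ :=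
  calc mass q (fun z => γ * q z < v z) ≤ ∑ z with γ * q z < v z, γ⁻¹ * v z :=
        sum_le_sum fun z hz => by
          rw [← div_eq_inv_mul, le_div_iff₀' hγ]
          exact (mem_filter.1 hz).2.le
    _ = γ⁻¹ * mass v (fun z => γ * q z < v z) := (mul_sum _ _ _).symm
    _ ≤ γ⁻¹ := mul_le_of_le_one_right (inv_pos.2 hγ).le (hv.mass_le_one _)

/- Each message is sent as a uniform mixture of `N` random codewords. Averaging over the messages
as well makes the resulting law at the output of the second channel concentrate around the output
law of `P`. -/
theorem exists_flat_random_code [Nonempty M] (hP : IsPMF P) {V : A → S → ℝ} (hV : IsChannel V)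
    {U : A → T → ℝ} (hU : IsChannel U) {lam ν γ K : ℝ} (hN : 0 < N) (hγ : 0 < γ)
    (hNγ : N * γ⁻¹ ≤ lam / 4)
    (hdens : ∑ x, P x * mass (V x) (fun z => ¬ γ * outDist P V z < V x z) ≤ lam / 4)
    (hflat : NearlyFlat (outDist P U) (4 * K) (ν / 4))
    (hbound : 2 * (Fintype.card M : ℝ) ^ 2 * Real.exp (-(N * lam / 2))
      + Fintype.card T * Real.exp (-(Fintype.card M * K⁻¹ / 2))
      + Real.exp (-(Fintype.card M * ν / 2)) < 1) :
    ∃ (Q : M → A → ℝ) (D : M → Finset S), (∀ m, IsPMF (Q m)) ∧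
      (∀ m, mass (outDist (Q m) V) (· ∉ D m) ≤ lam) ∧
      (∀ m m', m ≠ m' → mass (outDist (Q m) V) (· ∈ D m') ≤ lam) ∧
      NearlyFlat (mixture fun m => outDist (Q m) U) K ν := by
  set e := Real.exp (-(N * lam / 2))
  have hw := isPMF_piW fun _ : Fin N => hP
  have hW := isPMF_piW fun _ : M => hw
  set good : A → S → Prop := fun x z => γ * outDist P V z < V x z
  set D : (Fin N → A) → S → Prop := fun c z => ∃ j, good (c j) z
  set miss : (M → Fin N → A) → Prop := fun F =>
    ∃ m, lam < mass (outDist (typeOf (F m)) V) (fun z => ¬ D (F m) z)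
  set confuse : (M → Fin N → A) → Prop := fun F => ∃ i : M × M, i.1 ≠ i.2 ∧
    lam < mass (outDist (typeOf (F i.2)) V) (D (F i.1))
  have hmiss : mass (piW fun _ : M => piW fun _ : Fin N => P) miss ≤ Fintype.card M * e :=
    mass_exists_le_card_mul hW.1 fun m =>
      (mass_piW_apply (fun _ => hw) m _).trans_le (mass_codeword_miss_le hN hP hV hdens)
  have hconfuse : mass (piW fun _ : M => piW fun _ : Fin N => P) confuse
      ≤ (Fintype.card M : ℝ) ^ 2 * e :=
    mass_exists_ne_le hW.1 (Real.exp_nonneg _) fun m m' hne =>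
      mass_piW_apply₂_le (fun _ => hw) hne (mass_codeword_false_le hN hP hV
        (fun x => mass_density_gt_le ⟨hV.1 x, hV.2 x⟩ hγ) hNγ)
  obtain ⟨F, hF⟩ : ∃ F, ¬ (miss F ∨ confuse F ∨
      ¬ NearlyFlat (mixture fun m => outDist (typeOf (F m)) U) K ν) := by
    refine hW.exists_of_mass_not_lt_one ?_
    simp only [not_not]
    refine ((mass_or_le hW.1 _ _).trans (add_le_add hmiss ((mass_or_le hW.1 _ _).trans
      (add_le_add hconfuse (mass_not_nearlyFlat_le hN hP hU hflat))))).trans_lt ?_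
    have hM1 : (1 : ℝ) ≤ Fintype.card M := by exact_mod_cast Fintype.card_pos
    nlinarith [mul_nonneg (mul_nonneg (zero_le_one.trans hM1) (sub_nonneg.2 hM1))
      (Real.exp_nonneg (-(N * lam / 2)))]
  simp only [miss, confuse] at hF
  push Not at hF
  refine ⟨fun m => typeOf (F m), fun m => {z | D (F m) z}, fun m => isPMF_typeOf hN _,
    fun m => by simpa using hF.1 m, fun m m' hne => by simpa using hF.2.1 (m', m) hne.symm,
    hF.2.2⟩

end RandomCoding

section Typical

variable {A X Y Z : Type*} [Fintype A] [Fintype X] [Fintype Y] [Fintype Z]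

/-- The joint law of the input and the output of the channel `V` when the input has law `P`. -/
def jointLaw (P : X → ℝ) (V : X → Z → ℝ) (a : X × Z) : ℝ := P a.1 * V a.1 a.2

theorem isPMF_jointLaw {P : X → ℝ} (hP : IsPMF P) {V : X → Z → ℝ} (hV : IsChannel V) :
    IsPMF (jointLaw P V) := by
  refine ⟨fun a => mul_nonneg (hP.1 _) (hV.1 _ _), ?_⟩
  simp only [jointLaw, Fintype.sum_prod_type, ← mul_sum, hV.2, mul_one, hP.2]

theorem mass_piW_jointLaw (P : X → ℝ) (V : X → Z → ℝ) {n : ℕ} (p : (Fin n → X × Z) → Prop) :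
    mass (piW fun _ => jointLaw P V) p
      = ∑ x, piW (fun _ => P) x * mass (Wn V n x) fun z => p fun i => (x i, z i) := by
  simp only [mass_eq_sum_ite, mul_sum]
  rw [← (Equiv.arrowProdEquivProdArrow (Fin n) (fun _ => X) fun _ => Z).symm.sum_comp,
    Fintype.sum_prod_type]
  refine sum_congr rfl fun x _ => sum_congr rfl fun z _ => ?_
  rw [mul_ite, mul_zero]
  exact if_congr Iff.rfl prod_mul_distrib rfl

theorem outDist_piW {B : Type*} (P : X → ℝ) (V : X → B → ℝ) (n : ℕ) :
    outDist (piW fun _ : Fin n => P) (Wn V n) = piW fun _ => outDist P V :=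
  funext fun z => sum_piW_mul_prod (fun _ : Fin n => P) fun i x => V x (z i)

theorem log_piW {ι A : Type*} [Fintype ι] {w : ι → A → ℝ} {s : ι → A} (hs : piW w s ≠ 0) :
    Real.log (piW w s) = ∑ i, Real.log (w i (s i)) :=
  Real.log_prod fun i hi => prod_ne_zero_iff.1 hs i hi

theorem exists_nearlyFlat_piW {p : Y → ℝ} (hp : IsPMF p) {h ν : ℝ} (hh : h < entH p)
    (hν : 0 < ν) :
    ∃ n₀ : ℕ, ∀ n ≥ n₀, NearlyFlat (piW fun _ : Fin n => p) (Real.exp (n * h)) ν := by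
  obtain ⟨n₀, hn₀⟩ := weak_law hp (fun y => -Real.log (p y)) (sub_pos.2 hh) hν
  have hmean : ∑ a, p a * -Real.log (p a) = entH p := by
    simp only [entH_eq_sum_negMulLog, Real.negMulLog, mul_neg, neg_mul]
  refine ⟨n₀, fun n hn => (mass_mono_of_ne_zero (isPMF_piW fun _ => hp).1 fun y hy hlt => ?_).trans
    (hn₀ n hn)⟩
  rw [← Real.exp_neg, ← Real.lt_log_iff_exp_lt ((isPMF_piW fun _ => hp).1 y |>.lt_of_ne' hy),
    log_piW hy] at hlt
  rw [hmean, sum_neg_distrib]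
  refine le_trans ?_ (neg_le_abs _)
  linarith

theorem exists_sum_mass_not_density_lt_le {P : X → ℝ} (hP : IsPMF P) {V : X → Z → ℝ}
    (hV : IsChannel V) {r ν : ℝ} (hr : r < mutInf P V) (hν : 0 < ν) :
    ∃ n₀ : ℕ, ∀ n ≥ n₀, ∑ x : Fin n → X, piW (fun _ => P) x * mass (Wn V n x) (fun z =>
      ¬ Real.exp (n * r) * piW (fun _ => outDist P V) z < Wn V n x z) ≤ ν := by
  have hJ := isPMF_jointLaw hP hV
  have hmean : ∑ a : X × Z, jointLaw P V a * (Real.log (V a.1 a.2) - Real.log (outDist P V a.2))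
      = mutInf P V := by
    simp only [mutInf_eq_sum_relEnt hP hV, relEnt, Fintype.sum_prod_type, jointLaw, mul_sum,
      mul_assoc]
  obtain ⟨n₀, hn₀⟩ := weak_law hJ (fun a => Real.log (V a.1 a.2) - Real.log (outDist P V a.2))
    (sub_pos.2 hr) hν
  refine ⟨n₀, fun n hn => ?_⟩
  rw [← mass_piW_jointLaw P V fun s => ¬ Real.exp (n * r) *
    piW (fun _ => outDist P V) (fun i => (s i).2) < Wn V n (fun i => (s i).1) fun i => (s i).2]
  refine (mass_mono_of_ne_zero (isPMF_piW fun _ => hJ).1 fun s hs hle => ?_).trans (hn₀ n hn)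
  have hne : ∀ i, P (s i).1 * V (s i).1 (s i).2 ≠ 0 := fun i =>
    prod_ne_zero_iff.1 hs i (mem_univ i)
  have hV0 : piW (fun i => V (s i).1) (fun i => (s i).2) ≠ 0 :=
    prod_ne_zero_iff.2 fun i _ => right_ne_zero_of_mul (hne i)
  have hout0 : piW (fun _ => outDist P V) (fun i => (s i).2) ≠ 0 :=
    prod_ne_zero_iff.2 fun i _ h0 => hne i (mul_eq_zero_of_outDist_eq_zero hP hV h0 _)
  have hlog := Real.log_le_log ((isPMF_Wn hV _).1 _ |>.lt_of_ne' hV0) (not_lt.1 hle)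
  rw [Real.log_mul (Real.exp_ne_zero _) hout0, Real.log_exp, log_piW hout0, Wn_eq_piW,
    log_piW hV0] at hlog
  rw [hmean, sum_sub_distrib]
  refine le_trans ?_ (neg_le_abs _)
  linarith

end Typical

section CodebookSize

theorem card_fin_arrow_eq_exp (A : Type*) [Fintype A] [Nonempty A] (n : ℕ) :
    (Fintype.card (Fin n → A) : ℝ) = Real.exp (n * Real.log (Fintype.card A)) := by
  rw [Fintype.card_fun, Fintype.card_fin, Nat.cast_pow, mul_comm, Real.exp_mul,
    Real.exp_log (by exact_mod_cast Fintype.card_pos), Real.rpow_natCast]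

theorem exp_neg_le_inv {C t : ℝ} (hC : 0 < C) (h : Real.log C ≤ t) : Real.exp (-t) ≤ C⁻¹ := by
  rw [Real.exp_neg]
  exact inv_anti₀ hC ((Real.log_le_iff_le_exp hC).1 h)

theorem natCeil_exp_le_two_mul {t : ℝ} (ht : 0 ≤ t) : (⌈Real.exp t⌉₊ : ℝ) ≤ 2 * Real.exp t := by
  linarith [Nat.ceil_lt_add_one (Real.exp_pos t).le, Real.one_le_exp ht]

theorem exists_le_exp_mul (C : ℝ) {r : ℝ} (hr : 0 < r) :
    ∃ n₀ : ℕ, ∀ n ≥ n₀, C ≤ Real.exp (n * r) := by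
  simpa using exists_linear_mul_exp_le 0 0 C hr one_pos

theorem exists_natCeil_exp_mul_inv_le {r s lam : ℝ} (hr : 0 ≤ r) (hrs : r < s) (hlam : 0 < lam) :
    ∃ n₀ : ℕ, ∀ n ≥ n₀, ⌈Real.exp (n * r)⌉₊ * (Real.exp (n * s))⁻¹ ≤ lam := by
  obtain ⟨n₀, hn₀⟩ := exists_le_exp_mul (2 / lam) (sub_pos.2 hrs)
  refine ⟨n₀, fun n hn => ?_⟩
  have h := (div_le_iff₀ hlam).1 (hn₀ n hn)
  rw [mul_inv_le_iff₀ (Real.exp_pos _)]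
  calc (⌈Real.exp (n * r)⌉₊ : ℝ) ≤ 2 * Real.exp (n * r) := natCeil_exp_le_two_mul (by positivity)
    _ ≤ Real.exp (n * (s - r)) * lam * Real.exp (n * r) := by gcongr
    _ = lam * (Real.exp (n * (s - r)) * Real.exp (n * r)) := by ring
    _ = lam * Real.exp (n * s) := by rw [← Real.exp_add]; ring_nf

theorem exists_sq_natCeil_mul_exp_neg_le {r s lam : ℝ} (hs : 0 < s) (hrs : r < s)
    (hlam : 0 < lam) :
    ∃ n₀ : ℕ, ∀ n ≥ n₀, ∀ N, Real.exp (n * s) ≤ N →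
      2 * (⌈Real.exp (Real.exp (n * r))⌉₊ : ℝ) ^ 2 * Real.exp (-(N * lam / 2)) ≤ 1 / 4 := by
  obtain ⟨n₀, hn₀⟩ := exists_linear_mul_exp_le (4 / lam) 0 (2 * Real.log 32 / lam) hs
    (sub_pos.2 hrs)
  refine ⟨max n₀ 1, fun n hn N hN => ?_⟩
  have hn1 : (1 : ℝ) ≤ n := by exact_mod_cast (le_max_right _ _).trans hn
  have hexp : Real.log 32 ≤ N * lam / 2 - 2 * Real.exp (n * r) := by
    have h : 4 / lam * Real.exp (n * r) + 2 * Real.log 32 / lam ≤ N :=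
      calc _ ≤ 4 / lam * n * Real.exp (n * (s - (s - r))) + 0 * n + 2 * Real.log 32 / lam := by
            rw [sub_sub_cancel, zero_mul, add_zero]
            gcongr
            exact le_mul_of_one_le_right (by positivity) hn1
        _ ≤ N := (hn₀ n ((le_max_left _ _).trans hn)).trans hN
    rw [div_mul_eq_mul_div, ← add_div, div_le_iff₀ hlam] at h
    linarith
  calc 2 * (⌈Real.exp (Real.exp (n * r))⌉₊ : ℝ) ^ 2 * Real.exp (-(N * lam / 2))
      ≤ 2 * (2 * Real.exp (Real.exp (n * r))) ^ 2 * Real.exp (-(N * lam / 2)) := by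
        gcongr
        exact natCeil_exp_le_two_mul (Real.exp_pos _).le
    _ = 8 * (Real.exp (2 * Real.exp (n * r)) * Real.exp (-(N * lam / 2))) := by
        rw [two_mul (Real.exp (n * r)), Real.exp_add]
        ring
    _ = 8 * Real.exp (-(N * lam / 2 - 2 * Real.exp (n * r))) := by
        rw [← Real.exp_add]
        ring_nf
    _ ≤ 8 * 32⁻¹ := by gcongr; exact exp_neg_le_inv (by norm_num) hexp
    _ = 1 / 4 := by norm_num

theorem exists_exp_mul_exp_neg_natCeil_le (h c : ℝ) {r : ℝ} (hr : 0 < r) :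
    ∃ n₀ : ℕ, ∀ n ≥ n₀, Real.exp (n * c) *
      Real.exp (-(⌈Real.exp (Real.exp (n * r))⌉₊ * (Real.exp (n * h))⁻¹ / 2)) ≤ 1 / 8 := by
  obtain ⟨n₀, hn₀⟩ := exists_linear_mul_exp_le 0 (h + 2 * c) (2 * Real.log 8) hr one_pos
  refine ⟨n₀, fun n hn => ?_⟩
  set k : ℝ := (⌈Real.exp (Real.exp (n * r))⌉₊ : ℝ)
  have hk : Real.exp (Real.exp (n * r) - n * h) ≤ k * (Real.exp (n * h))⁻¹ := by
    rw [Real.exp_sub, div_eq_mul_inv]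
    gcongr
    exact Nat.le_ceil _
  have hlog : Real.log 8 ≤ k * (Real.exp (n * h))⁻¹ / 2 - n * c := by
    linarith [hn₀ n hn, Real.add_one_le_exp (Real.exp (n * r) - n * h)]
  rw [← Real.exp_add, ← sub_eq_add_neg, ← neg_sub, one_div]
  exact exp_neg_le_inv (by norm_num) hlog

theorem exists_exp_neg_natCeil_mul_le {r ν : ℝ} (hr : 0 < r) (hν : 0 < ν) :
    ∃ n₀ : ℕ, ∀ n ≥ n₀, Real.exp (-(⌈Real.exp (Real.exp (n * r))⌉₊ * ν / 2)) ≤ 1 / 8 := by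
  obtain ⟨n₀, hn₀⟩ := exists_le_exp_mul (2 * Real.log 8 / ν) hr
  refine ⟨n₀, fun n hn => ?_⟩
  have hk : 2 * Real.log 8 / ν ≤ ⌈Real.exp (Real.exp (n * r))⌉₊ := by
    linarith [hn₀ n hn, Real.add_one_le_exp (Real.exp (n * r)),
      Nat.le_ceil (Real.exp (Real.exp (n * r)))]
  rw [div_le_iff₀ hν] at hk
  rw [one_div]
  exact exp_neg_le_inv (by norm_num) (by linarith)

end CodebookSize

section FlatCodes

variable {X Y Z : Type*} [Fintype X] [Fintype Y] [Fintype Z]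

/-- There is an ID code with `k` messages for `V` whose codewords, averaged over the messages,
induce at the output of `U` a law with `ν`-smooth min-entropy at least `log K`. -/
def HasFlatIDCode (n : ℕ) (U : X → Y → ℝ) (V : X → Z → ℝ) (k : ℕ) (K lam ν : ℝ) : Prop :=
  ∃ (q : Fin k → (Fin n → X) → ℝ) (D : Fin k → Finset (Fin n → Z)),
    IsIDCode n V q D lam lam ∧ NearlyFlat (mixture fun m => outDist (q m) (Wn U n)) K ν

variable {P : X → ℝ} {U : X → Y → ℝ} {V : X → Z → ℝ} {h lam ν : ℝ}

theorem exists_hasFlatIDCode_one (hP : IsPMF P) (hU : IsChannel U) (V : X → Z → ℝ)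
    (hh : h < entH (outDist P U)) (hlam : 0 ≤ lam) (hν : 0 < ν) :
    ∃ n₀ : ℕ, ∀ n ≥ n₀, HasFlatIDCode n U V 1 (Real.exp (n * h)) lam ν := by
  obtain ⟨n₀, hn₀⟩ := exists_nearlyFlat_piW (isPMF_outDist hP hU) hh hν
  refine ⟨n₀, fun n hn => ⟨fun _ => piW fun _ => P, fun _ => univ,
    ⟨fun _ => isPMF_piW fun _ => hP, fun _ => by simpa using hlam,
      fun m m' hne => absurd (Subsingleton.elim m m') hne⟩, ?_⟩⟩
  have hmix : (mixture fun _ : Fin 1 => outDist (piW fun _ => P) (Wn U n))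
      = piW fun _ => outDist P U := by
    rw [outDist_piW]
    funext y
    simp [mixture, outDist]
  rw [hmix]
  exact hn₀ n hn

theorem exists_hasFlatIDCode (hP : IsPMF P) (hU : IsChannel U) (hV : IsChannel V) {r : ℝ}
    (hh : h < entH (outDist P U)) (hr₀ : 0 < r) (hr : r < mutInf P V) (hlam : 0 < lam)
    (hν : 0 < ν) :
    ∃ n₀ : ℕ, ∀ n ≥ n₀,
      HasFlatIDCode n U V ⌈Real.exp (Real.exp (n * r))⌉₊ (Real.exp (n * h)) lam ν := by
  obtain ⟨s, hrs, hs⟩ := exists_between hr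
  obtain ⟨t, hst, ht⟩ := exists_between hs
  obtain ⟨h', hh', hH⟩ := exists_between hh
  have hs₀ : 0 < s := hr₀.trans hrs
  obtain ⟨n₁, hn₁⟩ := exists_natCeil_exp_mul_inv_le hs₀.le hst (div_pos hlam four_pos)
  obtain ⟨n₂, hn₂⟩ := exists_sum_mass_not_density_lt_le hP hV ht (div_pos hlam four_pos)
  obtain ⟨n₃, hn₃⟩ := exists_nearlyFlat_piW (isPMF_outDist hP hU) hH (div_pos hν four_pos)
  obtain ⟨n₄, hn₄⟩ := exists_le_exp_mul 4 (sub_pos.2 hh')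
  obtain ⟨n₅, hn₅⟩ := exists_sq_natCeil_mul_exp_neg_le hs₀ hrs hlam
  obtain ⟨n₆, hn₆⟩ := exists_exp_mul_exp_neg_natCeil_le h (Real.log (Fintype.card Y)) hr₀
  obtain ⟨n₇, hn₇⟩ := exists_exp_neg_natCeil_mul_le hr₀ hν
  refine ⟨n₁ ⊔ n₂ ⊔ n₃ ⊔ n₄ ⊔ n₅ ⊔ n₆ ⊔ n₇, fun n hn => ?_⟩
  simp only [ge_iff_le, sup_le_iff] at hn
  obtain ⟨⟨⟨⟨⟨⟨hn1, hn2⟩, hn3⟩, hn4⟩, hn5⟩, hn6⟩, hn7⟩ := hn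
  have hk : 0 < ⌈Real.exp (Real.exp (n * r))⌉₊ := Nat.ceil_pos.2 (Real.exp_pos _)
  have : NeZero ⌈Real.exp (Real.exp (n * r))⌉₊ := ⟨hk.ne'⟩
  have : Nonempty Y := not_isEmpty_iff.1 fun _ => by simpa using (isPMF_outDist hP hU).2
  have hflat : NearlyFlat (outDist (piW fun _ => P) (Wn U n)) (4 * Real.exp (n * h)) (ν / 4) := by
    rw [outDist_piW]
    refine (hn₃ n hn3).mono (isPMF_piW fun _ => isPMF_outDist hP hU) (by positivity) ?_
    calc 4 * Real.exp (n * h) ≤ Real.exp (n * (h' - h)) * Real.exp (n * h) := by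
          gcongr
          exact hn₄ n hn4
      _ = Real.exp (n * h') := by rw [← Real.exp_add]; ring_nf
  obtain ⟨q, D, hq, hmiss, hfalse, hmix⟩ := exists_flat_random_code
    (M := Fin ⌈Real.exp (Real.exp (n * r))⌉₊) (N := ⌈Real.exp (n * s)⌉₊)
    (isPMF_piW fun _ => hP) (isChannel_Wn hV n) (isChannel_Wn hU n)
    (Nat.ceil_pos.2 (Real.exp_pos _)) (Real.exp_pos _) (hn₁ n hn1)
    (by simpa only [outDist_piW] using hn₂ n hn2) hflat (by
      rw [card_fin_arrow_eq_exp, Fintype.card_fin]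
      linarith [hn₅ n hn5 _ (Nat.le_ceil _), hn₆ n hn6, hn₇ n hn7])
  exact ⟨q, D, ⟨hq, idCodeErr_iff.2 ⟨hmiss, hfalse⟩⟩, hmix⟩

end FlatCodes

section FeedbackEncoders

variable {X Y Z : Type*} {n t : ℕ}

theorem encW_congr {Q Q' : FBRule X Y} (h : ∀ i < n, Q i = Q' i) (x : Fin n → X) (y : Fin n → Y) :
    encW n Q x y = encW n Q' x y :=
  prod_congr rfl fun i _ => by rw [h i.1 i.isLt]

theorem exists_isChannel_sum_mul_eq {A B : Type*} [Fintype B] [Nonempty B] {J : A → B → ℝ}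
    (hJ : ∀ a b, 0 ≤ J a b) :
    ∃ K : A → B → ℝ, IsChannel K ∧ ∀ a b, (∑ b', J a b') * K a b = J a b := by
  have hrow : ∀ a, ∃ w : B → ℝ, IsPMF w ∧ ∀ b, (∑ b', J a b') * w b = J a b := fun a => by
    by_cases h0 : ∑ b, J a b = 0
    · refine ⟨_, isPMF_const_inv_card, fun b => ?_⟩
      rw [h0, zero_mul, (sum_eq_zero_iff_of_nonneg fun b _ => hJ a b).1 h0 b (mem_univ b)]
    · refine ⟨fun b => J a b / ∑ b', J a b', ⟨fun b => ?_, ?_⟩, fun b => mul_div_cancel₀ _ h0⟩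
      · exact div_nonneg (hJ a b) (sum_nonneg fun b _ => hJ a b)
      · rw [← sum_div, div_self h0]
  choose K hK hJK using hrow
  exact ⟨K, ⟨fun a => (hK a).1, fun a => (hK a).2⟩, hJK⟩

theorem exists_encW_eq [Fintype X] [Nonempty X] (Y : Type*) {q : (Fin n → X) → ℝ} (hq : IsPMF q) :
    ∃ Q : FBRule X Y, IsFBEncoder n Q ∧ ∀ x y, encW n Q x y = q x := by
  induction n with
  | zero =>
    have hsum := hq.2
    rw [Fintype.sum_unique] at hsum
    refine ⟨fun _ _ _ _ => 0, fun i hi => absurd hi i.not_lt_zero, fun x y => ?_⟩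
    rw [Subsingleton.elim x default, hsum]
    simp [encW]
  | succ n ih =>
    obtain ⟨K, hK, hqK⟩ := exists_isChannel_sum_mul_eq
      (J := fun x a => q (Fin.snoc (α := fun _ => X) x a)) fun _ _ => hq.1 _
    obtain ⟨Q, hQ, henc⟩ := ih (q := fun x => ∑ a, q (Fin.snoc (α := fun _ => X) x a))
      ⟨fun x => sum_nonneg fun a _ => hq.1 _, by rw [← hq.2, sum_fin_succ_eq_sum_snoc]⟩
    refine ⟨Function.update Q n fun x _ => K x, fun i hi x y => ?_, fun x y => ?_⟩
    · rcases Nat.lt_succ_iff_lt_or_eq.1 hi with hlt | rfl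
      · rw [Function.update_of_ne hlt.ne]
        exact hQ i hlt x y
      · rw [Function.update_self]
        exact ⟨hK.1 x, hK.2 x⟩
    · rw [← Fin.snoc_init_self x, ← Fin.snoc_init_self y, encW_snoc, Function.update_self,
        encW_congr fun i hi => Function.update_of_ne hi.ne _ _, henc]
      exact hqK _ _

/-- The encoder that follows the first `n` steps of `Q` by the `t` symbols `c y` determined by the
fed-back outputs `y` of those steps; from time `n + t` on its value is junk. -/
def appendRule (n : ℕ) {t : ℕ} (Q : FBRule X Y) (c : (Fin n → Y) → Fin t → X) : FBRule X Y :=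
  fun i xs ys a =>
    if i < n then Q i xs ys a
    else if h : n ≤ i ∧ i - n < t then
      if a = c (fun j => ys (Fin.castLE h.1 j)) ⟨i - n, h.2⟩ then 1 else 0
    else 0

theorem appendRule_of_lt (Q : FBRule X Y) (c : (Fin n → Y) → Fin t → X) {i : ℕ} (hi : i < n) :
    appendRule n Q c i = Q i := by
  funext xs ys a
  exact if_pos hi

theorem appendRule_natAdd (Q : FBRule X Y) (c : (Fin n → Y) → Fin t → X) (i : Fin t)
    (xs : Fin (n + i) → X) (ys : Fin (n + i) → Y) (a : X) :
    appendRule n Q c (n + i) xs ys a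
      = if a = c (fun j => ys (Fin.castAdd i j)) i then 1 else 0 := by
  have hi : n ≤ n + i.1 ∧ n + i.1 - n < t := by omega
  have hsub : (⟨n + i.1 - n, hi.2⟩ : Fin t) = i := Fin.ext (by simp)
  rw [appendRule, if_neg (by omega), dif_pos hi, hsub]
  rfl

theorem isFBEncoder_appendRule [Fintype X] {Q : FBRule X Y} (hQ : IsFBEncoder n Q)
    (c : (Fin n → Y) → Fin t → X) : IsFBEncoder (n + t) (appendRule n Q c) := fun i hi xs ys => by
  rcases lt_or_ge i n with h | h
  · rw [appendRule_of_lt Q c h]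
    exact hQ i h xs ys
  · obtain ⟨j, rfl⟩ := Nat.exists_eq_add_of_le h
    have hj : ∀ a, appendRule n Q c (n + j) xs ys a = _ :=
      appendRule_natAdd Q c ⟨j, by omega⟩ xs ys
    refine ⟨fun a => ?_, ?_⟩
    · rw [hj]
      positivity
    · simp [hj]

theorem append_comp_lt {A : Type*} (u : Fin n → A) (v : Fin t → A) {i : ℕ} (hi : i ≤ n) :
    (fun j : Fin i => Fin.append u v ⟨j.1, by omega⟩) = fun j : Fin i => u ⟨j.1, by omega⟩ := by
  funext j
  exact Fin.append_left u v ⟨j.1, by omega⟩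

theorem encW_appendRule (Q : FBRule X Y) (c : (Fin n → Y) → Fin t → X) (x₁ : Fin n → X)
    (x₂ : Fin t → X) (y₁ : Fin n → Y) (y₂ : Fin t → Y) :
    encW (n + t) (appendRule n Q c) (Fin.append x₁ x₂) (Fin.append y₁ y₂)
      = encW n Q x₁ y₁ * if x₂ = c y₁ then 1 else 0 := by
  rw [encW, Fin.prod_univ_add]
  congr 1
  · rw [← encW_congr fun i hi => appendRule_of_lt Q c hi]
    refine prod_congr rfl fun i _ => ?_
    rw [← append_comp_lt x₁ x₂ i.isLt.le, ← append_comp_lt y₁ y₂ i.isLt.le, Fin.append_left]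
    rfl
  · have htail : ∀ i : Fin t, appendRule n Q c (n + i)
        (fun j => Fin.append x₁ x₂ ⟨j.1, by omega⟩) (fun j => Fin.append y₁ y₂ ⟨j.1, by omega⟩)
        (x₂ i) = if x₂ i = c y₁ i then 1 else 0 := fun i => by
      have hy : (fun j : Fin n => Fin.append y₁ y₂ ⟨(Fin.castAdd i j).1, by omega⟩) = y₁ :=
        append_comp_lt y₁ y₂ le_rfl
      rw [appendRule_natAdd, hy]
    simp only [Fin.append_right, Fin.val_natAdd, htail, prod_ite_zero, prod_const_one, mem_univ,
      true_imp_iff, funext_iff]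

theorem Wn_append (V : X → Y → ℝ) (x₁ : Fin n → X) (x₂ : Fin t → X) (y₁ : Fin n → Y)
    (y₂ : Fin t → Y) :
    Wn V (n + t) (Fin.append x₁ x₂) (Fin.append y₁ y₂) = Wn V n x₁ y₁ * Wn V t x₂ y₂ := by
  simp [Wn, Fin.prod_univ_add]

theorem sum_fin_add_eq_sum_append [Fintype X] (f : (Fin (n + t) → X) → ℝ) :
    ∑ x, f x = ∑ x₁ : Fin n → X, ∑ x₂ : Fin t → X, f (Fin.append x₁ x₂) := by
  rw [← (Fin.appendEquiv n t).sum_comp, Fintype.sum_prod_type]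
  rfl

theorem sum_pathLaw_appendRule_mul [Fintype X] [Fintype Y] (Q : FBRule X Y)
    (c : (Fin n → Y) → Fin t → X) (V : X → Y → ℝ) (g : (Fin (n + t) → X) × (Fin (n + t) → Y) → ℝ) :
    ∑ p, pathLaw (n + t) (appendRule n Q c) V p * g p = ∑ p, pathLaw n Q V p *
      ∑ y, Wn V t (c p.2) y * g (Fin.append p.1 (c p.2), Fin.append p.2 y) := by
  simp only [Fintype.sum_prod_type, sum_fin_add_eq_sum_append (X := X),
    sum_fin_add_eq_sum_append (X := Y), pathLaw, encW_appendRule, Wn_append]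
  refine sum_congr rfl fun x₁ _ => ?_
  rw [sum_comm]
  refine sum_congr rfl fun y₁ _ => ?_
  rw [sum_eq_single (c y₁) (fun x₂ _ hne => by simp [hne]) (by simp), mul_sum]
  exact sum_congr rfl fun y₂ _ => by rw [if_pos rfl]; ring

/- The fed-back outputs of an encoder for the input law `q` are shared by the encoder and by the
receiver, so the tail `c` may depend on them. -/
theorem exists_isFBEncoder_append [Fintype X] [Nonempty X] [Fintype Y] {V : X → Y → ℝ}
    (hV : IsChannel V) {q : (Fin n → X) → ℝ} (hq : IsPMF q) (c : (Fin n → Y) → Fin t → X) :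
    ∃ Q : FBRule X Y, IsFBEncoder (n + t) Q ∧
      (∀ E : (Fin n → Y) → (Fin t → Y) → Prop, mass (pathLaw (n + t) Q V) (fun p =>
          E (fun i => p.2 (Fin.castAdd t i)) fun i => p.2 (Fin.natAdd n i))
        = ∑ y, outDist q (Wn V n) y * mass (Wn V t (c y)) (E y)) ∧
      mapLaw (fun p i => p.1 (Fin.castAdd t i)) (pathLaw (n + t) Q V) = q := by
  obtain ⟨Q, hQ, henc⟩ := exists_encW_eq Y hq
  refine ⟨appendRule n Q c, isFBEncoder_appendRule hQ c, fun E => ?_, funext fun x => ?_⟩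
  · rw [mass_eq_sum_mul_ite, sum_pathLaw_appendRule_mul, sum_outDist_mul]
    simp only [Fin.append_left, Fin.append_right, ← mass_eq_sum_mul_ite, Fintype.sum_prod_type,
      pathLaw, henc, mul_sum, mul_assoc]
  · rw [mapLaw, mass_eq_sum_mul_ite, sum_pathLaw_appendRule_mul]
    simp only [Fin.append_left, ← sum_mul, (isPMF_Wn hV _).2, one_mul, Fintype.sum_prod_type,
      pathLaw, henc]
    simp [← mul_sum, (isPMF_Wn hV x).2]

end FeedbackEncoders

section DeterministicCode

variable {X Y C : Type*} [Fintype Y]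

/-- An identification code of blocklength `t` with deterministic codewords `c` and with both error
probabilities at most `lam`. -/
def IsDetIDCode (t : ℕ) (V : X → Y → ℝ) (c : C → Fin t → X) (E : C → Finset (Fin t → Y))
    (lam : ℝ) : Prop :=
  (∀ l, mass (Wn V t (c l)) (· ∉ E l) ≤ lam) ∧
    ∀ l l', l ≠ l' → mass (Wn V t (c l)) (· ∈ E l') ≤ lam

/-- The number of occurrences of `y₀` in the `l`-th of `L` blocks of length `r`. -/
def blockCount {L r : ℕ} (l : Fin L) (y₀ : Y) (y : Fin (L * r) → Y) : ℝ :=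
  ∑ i, if i.divNat = l ∧ y i = y₀ then 1 else 0

theorem sum_divNat_ite {L r : ℕ} (l : Fin L) (a : ℝ) :
    ∑ i : Fin (L * r), (if i.divNat = l then a else 0) = r * a := by
  change ∑ i, (if (finProdFinEquiv.symm i).1 = l then a else 0) = _
  rw [finProdFinEquiv.symm.sum_comp (fun p : Fin L × Fin r => if p.1 = l then a else 0),
    Fintype.sum_prod_type, sum_comm]
  simp

theorem mass_blockCount_deviation_le {V : X → Y → ℝ} (hV : IsChannel V) {L r : ℕ} {l : Fin L}
    {a : X} (y₀ : Y) {x : Fin (L * r) → X} (hx : ∀ i, i.divNat = l → x i = a) {c : ℝ}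
    (hc : 0 < c) :
    mass (Wn V (L * r) x) (fun y => c ≤ |blockCount l y₀ y - r * V a y₀|) ≤ r / c ^ 2 := by
  have hrow : ∀ i, IsPMF (V (x i)) := fun i => ⟨hV.1 _, hV.2 _⟩
  set h : Fin (L * r) → Y → ℝ := fun i b =>
    if i.divNat = l then (if b = y₀ then 1 else 0) - V a y₀ else 0 with hh
  have hmean : ∀ i, ∑ b, V (x i) b * h i b = 0 := fun i => by
    by_cases hi : i.divNat = l
    · simp [hh, hi, hx i hi, mul_sub, sum_sub_distrib, ← sum_mul, hV.2]
    · simp [hh, hi]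
  have hsq : ∀ i b, h i b ^ 2 ≤ if i.divNat = l then 1 else 0 := fun i b => by
    have hle := IsPMF.le_one ⟨hV.1 a, hV.2 a⟩ y₀
    have hnonneg := hV.1 a y₀
    simp only [hh]
    split_ifs <;> nlinarith
  have hvar : ∑ i, ∑ b, V (x i) b * h i b ^ 2 ≤ r := by
    calc ∑ i, ∑ b, V (x i) b * h i b ^ 2
        ≤ ∑ i, ∑ b, V (x i) b * (if i.divNat = l then 1 else 0) := by
          gcongr with i _ b
          · exact hV.1 _ _
          · exact hsq i b
      _ = r := by simp only [← sum_mul, hV.2, one_mul, sum_divNat_ite, mul_one]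
  have hsum : ∀ y : Fin (L * r) → Y, ∑ i, h i (y i) = blockCount l y₀ y - r * V a y₀ := fun y => by
    rw [← sum_divNat_ite l, blockCount, ← sum_sub_distrib]
    exact sum_congr rfl fun i _ => by by_cases hi : i.divNat = l <;> simp [hh, hi]
  refine mass_le_of_sum_mul_sq_le (isPMF_Wn hV x).1 hc ?_
  simp only [← hsum]
  rwa [Wn_eq_piW, sum_piW_mul_sq_sum hrow h hmean]

/- Message `l` is sent as `x₁` in the `l`-th block and `x₀` elsewhere; the receiver counts `y₀` in
the block of the message of interest. -/
theorem exists_isDetIDCode {V : X → Y → ℝ} (hV : IsChannel V) {x₀ x₁ : X} (hne : V x₀ ≠ V x₁)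
    (L : ℕ) {lam : ℝ} (hlam : 0 < lam) :
    ∃ (t : ℕ) (c : Fin L → Fin t → X) (E : Fin L → Finset (Fin t → Y)),
      IsDetIDCode t V c E lam := by
  obtain ⟨y₀, hy₀⟩ := Function.ne_iff.1 hne
  set δ := |V x₁ y₀ - V x₀ y₀| with hδ
  have : 0 < δ := abs_pos.2 (sub_ne_zero.2 hy₀.symm)
  obtain ⟨r, hr⟩ := exists_nat_gt (4 / (δ ^ 2 * lam))
  have hr0 : (0 : ℝ) < r := lt_of_le_of_lt (by positivity) hr
  have hc : 0 < r * δ / 2 := by positivity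
  have hle : r / (r * δ / 2) ^ 2 ≤ lam := by
    rw [div_lt_iff₀ (by positivity)] at hr
    rw [div_le_iff₀ (by positivity)]
    nlinarith
  set c : Fin L → Fin (L * r) → X := fun l i => if i.divNat = l then x₁ else x₀
  refine ⟨L * r, c, fun l => {y | |blockCount l y₀ y - r * V x₁ y₀| < r * δ / 2},
    fun l => ?_, fun l l' hll => ?_⟩
  · simp only [mem_filter_univ, not_lt]
    exact (mass_blockCount_deviation_le hV y₀ (fun i hi => if_pos hi) hc).trans hle
  · have hx : ∀ i, i.divNat = l' → c l i = x₀ := fun i hi => if_neg fun h => hll (h.symm.trans hi)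
    refine (mass_mono (isPMF_Wn hV _).1 fun y hy => ?_).trans
      ((mass_blockCount_deviation_le hV y₀ hx hc).trans hle)
    rw [mem_filter_univ] at hy
    have htri := abs_sub_le (r * V x₁ y₀) (blockCount l' y₀ y) (r * V x₀ y₀)
    rw [← mul_sub, abs_mul, abs_of_pos hr0, ← hδ, abs_sub_comm (r * V x₁ y₀)] at htri
    linarith

end DeterministicCode

section Assembly

variable {X Y Z C : Type*} [Fintype Z] {n t : ℕ}

theorem mass_Wn_castAdd {V : X → Z → ℝ} (hV : IsChannel V) (x : Fin (n + t) → X)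
    (p : (Fin n → Z) → Prop) :
    mass (Wn V (n + t) x) (fun z => p fun i => z (Fin.castAdd t i))
      = mass (Wn V n fun i => x (Fin.castAdd t i)) p := by
  simp only [mass_eq_sum_mul_ite, sum_fin_add_eq_sum_append, Fin.append_left]
  refine sum_congr rfl fun z _ => ?_
  conv_lhs => rw [← Fin.append_castAdd_natAdd (f := x)]
  simp only [Wn_append, ← sum_mul, ← mul_sum, (isPMF_Wn hV _).2, mul_one]

variable [Fintype X]

theorem sum_mul_mass_le_of_collision_le {S B : Type*} [Fintype S] [Fintype B] {p : S → ℝ}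
    (hp : IsPMF p) {T : C → B → ℝ} (hT : ∀ l, IsPMF (T l)) {E : C → Finset B} {lam μ : ℝ}
    (hlam : 0 ≤ lam) (hE : ∀ l l', l ≠ l' → mass (T l) (· ∈ E l') ≤ lam) {f g : S → C}
    (hfg : mass p (fun s => f s = g s) ≤ μ) :
    ∑ s, p s * mass (T (f s)) (· ∈ E (g s)) ≤ lam + μ := by
  calc ∑ s, p s * mass (T (f s)) (· ∈ E (g s))
      ≤ ∑ s, p s * (lam + if f s = g s then 1 else 0) := by
        gcongr with s
        · exact hp.1 s
        · split_ifs with heq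
          · linarith [(hT (f s)).mass_le_one (· ∈ E (g s))]
          · linarith [hE _ _ heq]
    _ = lam + mass p (fun s => f s = g s) := by
        rw [mass_eq_sum_mul_ite]
        simp only [mul_add, sum_add_distrib, ← sum_mul, hp.2, one_mul]
    _ ≤ lam + μ := by gcongr

theorem mass_outDist_castAdd {V : X → Z → ℝ} (hV : IsChannel V) (Q : (Fin (n + t) → X) → ℝ)
    (p : (Fin n → Z) → Prop) :
    mass (outDist Q (Wn V (n + t))) (fun z => p fun i => z (Fin.castAdd t i))
      = mass (outDist (mapLaw (fun x i => x (Fin.castAdd t i)) Q) (Wn V n)) p := by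
  simp only [mass_outDist, sum_mapLaw_mul, mass_Wn_castAdd hV]

theorem IDCodeErr.castAdd {M : Type*} {V : X → Z → ℝ} (hV : IsChannel V)
    {Q : M → (Fin (n + t) → X) → ℝ} {D : M → Finset (Fin n → Z)} {l1 l2 : ℝ}
    (h : IDCodeErr n V (fun m => mapLaw (fun x i => x (Fin.castAdd t i)) (Q m)) D l1 l2) :
    IDCodeErr (n + t) V Q (fun m => {z | (fun i => z (Fin.castAdd t i)) ∈ D m}) l1 l2 := by
  rw [idCodeErr_iff] at h ⊢
  simp only [mem_filter_univ]
  exact ⟨fun m => (mass_outDist_castAdd hV (Q m) (· ∉ D m)).trans_le (h.1 m), fun m m' hne =>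
    (mass_outDist_castAdd hV (Q m) (· ∈ D m')).trans_le (h.2 m m' hne)⟩

theorem mixture_const {A M : Type*} [Fintype M] [Nonempty M] (w : A → ℝ) :
    mixture (fun _ : M => w) = w := by
  funext a
  simp [mixture, outDist]

theorem mapLaw_mixture {A B M : Type*} [Fintype A] [Fintype M] (f : A → B) (J : M → A → ℝ) :
    mapLaw f (mixture J) = mixture fun m => mapLaw f (J m) := by
  funext b
  rw [mapLaw, mass_mixture]
  simp only [mixture, outDist, mapLaw, mul_sum]

theorem mapLaw_mapLaw {A B D : Type*} [Fintype A] [Fintype B] (g : B → D) (f : A → B) (w : A → ℝ) :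
    mapLaw g (mapLaw f w) = mapLaw (fun a => g (f a)) w :=
  funext fun d => mass_mapLaw f w (g · = d)

variable [Fintype Y]

/- The fed-back outputs `y` are hashed to `F my y`, which is then sent to Terminal `Y` over the last
`t` channel uses: the outputs serve as common randomness. -/
theorem exists_isFBIDCode [Nonempty X] {W : X → Y → Z → ℝ} (hW : IsBC W)
    (hind : ∀ x y z, W x y z = margY W x y * margZ W x z) {kY kZ : ℕ} [NeZero kY] [NeZero kZ]
    {l1 l2 lam μ : ℝ} (hlam : 0 ≤ lam) {q : Fin kZ → (Fin n → X) → ℝ}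
    {D : Fin kZ → Finset (Fin n → Z)} (hcode : IsIDCode n (margZ W) q D l1 l2)
    {c : C → Fin t → X} {E : C → Finset (Fin t → Y)} (hE : IsDetIDCode t (margY W) c E lam)
    {F : Fin kY → (Fin n → Y) → C}
    (hF : ∀ m m', m ≠ m' → mass (mixture fun mz => outDist (q mz) (Wn (margY W) n))
      (fun y => F m y = F m' y) ≤ μ) :
    ∃ Q DY DZ, IsFBIDCode (n + t) kY kZ W Q DY DZ lam (lam + μ) l1 l2 := by
  have hU := isChannel_margY hW
  set p := mixture fun mz => outDist (q mz) (Wn (margY W) n) with hpdef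
  have hp : IsPMF p := isPMF_mixture fun mz => isPMF_outDist (hcode.1 mz) (isChannel_Wn hU n)
  choose Q hQ hQY hQX using fun my mz =>
    exists_isFBEncoder_append hU (hcode.1 mz) fun y => c (F my y)
  have hmassY : ∀ my (A : (Fin n → Y) → (Fin t → Y) → Prop),
      mass (mixture fun mz => pathLaw (n + t) (Q my mz) (margY W)) (fun a =>
          A (fun i => a.2 (Fin.castAdd t i)) fun i => a.2 (Fin.natAdd n i))
        = ∑ y, p y * mass (Wn (margY W) t (c (F my y))) (A y) := fun my A => by
    simp only [mass_mixture, hQY, hpdef, sum_mixture_mul]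
  refine ⟨Q, fun my => {y | (fun i => y (Fin.natAdd n i)) ∈ E (F my fun i => y (Fin.castAdd t i))},
    fun mz => {z | (fun i => z (Fin.castAdd t i)) ∈ D mz}, (isFBIDCode_iff hW hind).2
      ⟨hQ, fun my => ?_, fun my my' hne => ?_, ?_⟩⟩
  · simp only [mem_filter_univ]
    rw [hmassY my fun y y' => y' ∉ E (F my y)]
    calc _ ≤ ∑ y, p y * lam := by
          gcongr with y
          · exact hp.1 y
          · exact hE.1 _
      _ = lam := by rw [← sum_mul, hp.2, one_mul]
  · simp only [mem_filter_univ]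
    rw [hmassY my fun y y' => y' ∈ E (F my' y)]
    exact sum_mul_mass_le_of_collision_le hp (fun l => isPMF_Wn hU (c l)) hlam hE.2
      (hF my my' hne)
  · refine IDCodeErr.castAdd (isChannel_margZ hW) ?_
    simp only [mapLaw_mixture, mapLaw_mapLaw, hQX, mixture_const]
    exact hcode.2

end Assembly

section Direct

variable {X Y Z : Type*} [Fintype Y]

theorem exists_hasRate_natCeil {R r : ℝ} (hR : 0 < R) (hr : R < r) (t : ℕ) :
    ∃ n₀ : ℕ, ∀ n ≥ n₀, HasRate (n + t) ⌈Real.exp (Real.exp (n * r))⌉₊ R := by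
  have hd : 0 < r - R := sub_pos.2 hr
  obtain ⟨n₀, hn₀⟩ := exists_nat_ge (t * R / (r - R))
  refine ⟨n₀ + 1, fun n hn => ⟨fun _ => ?_, fun h => absurd h hR.ne'⟩⟩
  have hn' : (n₀ : ℝ) ≤ n := by exact_mod_cast (by omega : n₀ ≤ n)
  have hrate : t * R ≤ n * (r - R) := (div_le_iff₀ hd).1 (hn₀.trans hn')
  have hpos : (0 : ℝ) < ((n + t : ℕ) : ℝ) := by exact_mod_cast (by omega : 0 < n + t)
  have hloglog : n * r ≤ Real.log (Real.log ⌈Real.exp (Real.exp (n * r))⌉₊) := by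
    have hlog : Real.exp (n * r) ≤ Real.log ⌈Real.exp (Real.exp (n * r))⌉₊ :=
      (Real.le_log_iff_exp_le ((Real.exp_pos _).trans_le (Nat.le_ceil _))).2 (Nat.le_ceil _)
    exact (Real.le_log_iff_exp_le ((Real.exp_pos _).trans_le hlog)).2 hlog
  rw [one_div, inv_mul_eq_div, le_div_iff₀ hpos]
  push_cast
  linarith

theorem hasRate_one_zero (n : ℕ) : HasRate n 1 0 := ⟨fun h => absurd h (lt_irrefl _), fun _ => rfl⟩

/- With a constant number `L ≥ 4 / lam` of hash values, doubly exponentially many hash functions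
have pairwise collision probability at most `2 * lam` on sources of min-entropy `n * h`; conveying
the hash value takes a constant number `t` of channel uses. -/
theorem exists_commonRandomness_code {U : X → Y → ℝ} (hU : IsChannel U) [Nonempty X]
    {R H lam : ℝ} (hR₀ : 0 ≤ R) (hR : R = 0 ∨ (∃ x x', U x ≠ U x') ∧ R < H) (hlam : 0 < lam) :
    ∃ h < H, ∃ (t L : ℕ) (c : Fin L → Fin t → X) (E : Fin L → Finset (Fin t → Y)),
      IsDetIDCode t U c E lam ∧ ∃ n₀ : ℕ, ∀ n ≥ n₀, ∃ k : ℕ, 0 < k ∧ HasRate (n + t) k R ∧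
        ∀ p : (Fin n → Y) → ℝ, IsPMF p → NearlyFlat p (Real.exp (n * h)) lam →
          ∃ F : Fin k → (Fin n → Y) → Fin L,
            ∀ m m', m ≠ m' → mass p (fun y => F m y = F m' y) ≤ lam + lam := by
  rcases hR₀.eq_or_lt with rfl | hRpos
  · refine ⟨H - 1, by linarith, 0, 1, fun _ => Fin.elim0, fun _ => univ, ⟨fun l => ?_,
      fun l l' hne => absurd (Subsingleton.elim l l') hne⟩, 0, fun n _ => ⟨1, one_pos,
      hasRate_one_zero _, fun _ _ _ => ⟨fun _ _ => 0, fun m m' hne =>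
      absurd (Subsingleton.elim m m') hne⟩⟩⟩
    rw [mass_eq_zero _ fun y hy => hy (mem_univ y)]
    exact hlam.le
  · obtain ⟨⟨x₀, x₁, hne⟩, hRH⟩ := hR.resolve_left hRpos.ne'
    obtain ⟨r, hRr, hrH⟩ := exists_between hRH
    obtain ⟨h, hrh, hhH⟩ := exists_between hrH
    obtain ⟨L, hL⟩ := exists_nat_ge (4 / lam)
    have : NeZero L := ⟨by rintro rfl; exact absurd hL (not_le.2 (by simpa using hlam))⟩
    rw [div_le_iff₀' hlam] at hL
    obtain ⟨t, c, E, hE⟩ := exists_isDetIDCode hU hne L hlam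
    obtain ⟨n₁, hn₁⟩ := exists_hasRate_natCeil hRpos hRr t
    obtain ⟨n₂, hn₂⟩ := exists_sq_natCeil_mul_exp_neg_le (hRpos.trans (hRr.trans hrh)) hrh hlam
    refine ⟨h, hhH, t, L, c, E, hE, n₁ ⊔ n₂, fun n hn => ?_⟩
    simp only [ge_iff_le, sup_le_iff] at hn
    have hk := hn₂ n hn.2 _ le_rfl
    exact ⟨_, Nat.ceil_pos.2 (Real.exp_pos _), hn₁ n hn.1, fun p hp hflat =>
      exists_hash hp hflat (Real.exp_pos _) (by simpa using hL)
        (by simp only [Fintype.card_fin]; linarith)⟩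

variable [Fintype X] [Fintype Z]

theorem exists_hasFlatIDCode_hasRate {P : X → ℝ} (hP : IsPMF P) {U : X → Y → ℝ}
    (hU : IsChannel U) {V : X → Z → ℝ} (hV : IsChannel V) {h R lam ν : ℝ}
    (hh : h < entH (outDist P U)) (hR₀ : 0 ≤ R) (hR : R = 0 ∨ R < mutInf P V) (hlam : 0 < lam)
    (hν : 0 < ν) (t : ℕ) :
    ∃ n₀ : ℕ, ∀ n ≥ n₀, ∃ k : ℕ, 0 < k ∧ HasRate (n + t) k R ∧
      HasFlatIDCode n U V k (Real.exp (n * h)) lam ν := by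
  rcases hR₀.eq_or_lt with rfl | hRpos
  · obtain ⟨n₀, hn₀⟩ := exists_hasFlatIDCode_one hP hU V hh hlam.le hν
    exact ⟨n₀, fun n hn => ⟨1, one_pos, hasRate_one_zero _, hn₀ n hn⟩⟩
  · obtain ⟨r, hRr, hr⟩ := exists_between (hR.resolve_left hRpos.ne')
    obtain ⟨n₁, hn₁⟩ := exists_hasRate_natCeil hRpos hRr t
    obtain ⟨n₂, hn₂⟩ := exists_hasFlatIDCode hP hU hV hh (hRpos.trans hRr) hr hlam hν
    refine ⟨n₁ ⊔ n₂, fun n hn => ?_⟩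
    simp only [ge_iff_le, sup_le_iff] at hn
    exact ⟨_, Nat.ceil_pos.2 (Real.exp_pos _), hn₁ n hn.1, hn₂ n hn.2⟩

theorem IsFBIDCode.mono {n kY kZ : ℕ} {W : X → Y → Z → ℝ} {Q : Fin kY → Fin kZ → FBRule X Y}
    {DY : Fin kY → Finset (Fin n → Y)} {DZ : Fin kZ → Finset (Fin n → Z)}
    {a₁ a₂ a₃ a₄ b₁ b₂ b₃ b₄ : ℝ} (h : IsFBIDCode n kY kZ W Q DY DZ a₁ a₂ a₃ a₄)
    (h₁ : a₁ ≤ b₁) (h₂ : a₂ ≤ b₂) (h₃ : a₃ ≤ b₃) (h₄ : a₄ ≤ b₄) :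
    IsFBIDCode n kY kZ W Q DY DZ b₁ b₂ b₃ b₄ :=
  ⟨h.1, fun m => (h.2.1 m).trans h₁, fun m m' hne => (h.2.2.1 m m' hne).trans h₂,
    fun m => (h.2.2.2.1 m).trans h₃, fun m m' hne => (h.2.2.2.2 m m' hne).trans h₄⟩

variable [Nonempty X] {W : X → Y → Z → ℝ}

theorem fbAchievable_of_lt (hW : IsBC W) (hind : ∀ x y z, W x y z = margY W x y * margZ W x z)
    {P : X → ℝ} (hP : IsPMF P) {p : ℝ × ℝ} (h₁ : 0 ≤ p.1) (h₂ : 0 ≤ p.2)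
    (hY : p.1 = 0 ∨ (∃ x x', margY W x ≠ margY W x') ∧ p.1 < entH (outDist P (margY W)))
    (hZ : p.2 = 0 ∨ p.2 < mutInf P (margZ W)) : FBAchievable W p := by
  refine ⟨h₁, h₂, fun l1Y l2Y l1Z l2Z h1Y h2Y h1Z h2Z => ?_⟩
  obtain ⟨lam, hlam, h1, h2, h3, h4⟩ : ∃ lam : ℝ, 0 < lam ∧ lam ≤ l1Y ∧ lam ≤ l2Y / 3 ∧
      lam ≤ l1Z ∧ lam ≤ l2Z :=
    ⟨l1Y ⊓ (l2Y / 3) ⊓ (l1Z ⊓ l2Z), by simp [*], by simp, by simp, by simp, by simp⟩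
  have hU := isChannel_margY hW
  obtain ⟨h, hh, t, L, c, E, hE, n₁, hn₁⟩ := exists_commonRandomness_code hU h₁ hY hlam
  obtain ⟨n₂, hn₂⟩ :=
    exists_hasFlatIDCode_hasRate hP hU (isChannel_margZ hW) hh h₂ hZ hlam hlam t
  refine ⟨n₁ ⊔ n₂ + t, fun n hn => ?_⟩
  obtain ⟨n, rfl⟩ := Nat.exists_eq_add_of_le' (le_of_add_le_right hn)
  obtain ⟨hn₁', hn₂'⟩ := sup_le_iff.1 (Nat.le_of_add_le_add_right hn)
  obtain ⟨kY, hkY, hrY, hhash⟩ := hn₁ n hn₁'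
  obtain ⟨kZ, hkZ, hrZ, q, D, hcode, hflat⟩ := hn₂ n hn₂'
  have : NeZero kY := ⟨hkY.ne'⟩
  have : NeZero kZ := ⟨hkZ.ne'⟩
  obtain ⟨F, hF⟩ := hhash _
    (isPMF_mixture fun m => isPMF_outDist (hcode.1 m) (isChannel_Wn hU n)) hflat
  obtain ⟨Q, DY, DZ, hfb⟩ := exists_isFBIDCode hW hind hlam.le hcode hE hF
  exact ⟨kY, kZ, Q, DY, DZ, hfb.mono h1 (by linarith) h3 h4, hrY, hrZ⟩

theorem max_zero_sub_eq_or_lt {a b ε : ℝ} (hab : a ≤ b) (hε : 0 < ε) :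
    max 0 (a - ε) = 0 ∨ max 0 (a - ε) < b := by
  rcases le_total (a - ε) 0 with h | h
  · exact Or.inl (max_eq_left h)
  · exact Or.inr (by rw [max_eq_right h]; linarith)

theorem subset_closure_fbAchievable (hW : IsBC W)
    (hind : ∀ x y z, W x y z = margY W x y * margZ W x z) :
    capacityRegion W ⊆ closure {p : ℝ × ℝ | FBAchievable W p} := by
  rintro ⟨a, b⟩ ⟨ha, hb, P, hP, hY, hZ⟩
  dsimp only at ha hb hY hZ
  have hlim : Filter.Tendsto (fun ε : ℝ => (max 0 (a - ε), max 0 (b - ε)))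
      (nhdsWithin 0 (Set.Ioi 0)) (nhds (a, b)) := by
    have hcont : Continuous fun ε : ℝ => (max 0 (a - ε), max 0 (b - ε)) := by fun_prop
    simpa [ha, hb] using (hcont.tendsto 0).mono_left nhdsWithin_le_nhds
  refine mem_closure_of_tendsto hlim (Filter.eventually_of_mem self_mem_nhdsWithin fun ε hε =>
    fbAchievable_of_lt hW hind hP (le_max_left _ _) (le_max_left _ _) ?_
      (max_zero_sub_eq_or_lt hZ hε))
  split_ifs at hY with hpos
  · exact (max_zero_sub_eq_or_lt hY hε).imp_right
      fun hlt => ⟨(exists_mutInf_pos_iff (isChannel_margY hW)).1 hpos, hlt⟩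
  · exact Or.inl (max_eq_left (by linarith [Set.mem_Ioi.1 hε]))

end Direct

/-- **Corollary 2.** If the BC's outputs are conditionally
independent given the input, the ID capacity region with one-sided feedback
from Terminal Y is the set of rate pairs `(R_Y, R_Z)` satisfying, for some
input PMF `P`, `R_Y ≤ H(PW_Y)·𝟙{max_{P'} I(P',W_Y) > 0}` and
`R_Z ≤ I(P, W_Z)`. -/
theorem bc_fb_id_capacity_cond_indep
    {X Y Z : Type} [Fintype X] [Fintype Y] [Fintype Z]
    [Nonempty X] [Nonempty Y] [Nonempty Z]
    (W : X → Y → Z → ℝ) (hW : IsBC W)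
    (hind : ∀ x y z, W x y z = margY W x y * margZ W x z) :
    closure {p : ℝ × ℝ | FBAchievable W p}
      = {p : ℝ × ℝ | 0 ≤ p.1 ∧ 0 ≤ p.2 ∧
          ∃ P : X → ℝ, IsPMF P ∧
            p.1 ≤ (if ∃ P' : X → ℝ, IsPMF P' ∧ 0 < mutInf P' (margY W) then
                      entH (outDist P (margY W)) else 0) ∧
            p.2 ≤ mutInf P (margZ W)} :=
  (closure_fbAchievable_subset hW hind).antisymm (subset_closure_fbAchievable hW hind)
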